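/- arXiv:2007.05195 — 4 statements merged into one kernel-verified Lean document; each statement's English description precedes it below -/
import Mathlib

section
/- Let S = (V₁,V₂) be an edge-cut of a 2-edge-connected finite multigraph G with 2 ≤ |S| ≤ 3, let Hᵢ = G[Vᵢ] be the subgraph induced by Vᵢ, and for i = 1,2 let Gᵢ be the multigraph obtained from G by contracting all edges of H_{3−i}. Then (q−1)(q−2)⋯(q−|S|+1) · F(G,q) = F(G₁,q)·F(G₂,q) as polynomials in q. -/
/-- A finite multigraph on vertex type `V` with edge type `E`: each edge `e` has two
(possibly equal) endpoints `fst e` and `snd e`. -/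
structure Multigraph (V E : Type) where
  fst : E → V
  snd : E → V

namespace Multigraph

variable {V E : Type}

/-- `a` and `b` are joined by some edge belonging to the edge set `F`. -/
def edgeRelOn (G : Multigraph V E) (F : Set E) (a b : V) : Prop :=
  ∃ e ∈ F, (G.fst e = a ∧ G.snd e = b) ∨ (G.fst e = b ∧ G.snd e = a)

/-- Reachability in the spanning subgraph `(V, F)`. -/
def Reach (G : Multigraph V E) (F : Set E) : V → V → Prop :=
  Relation.EqvGen (G.edgeRelOn F)

/-- The setoid on `V` whose classes are the connected components of the
spanning subgraph `(V, F)`. -/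
def reachSetoid (G : Multigraph V E) (F : Set E) : Setoid V :=
  Relation.EqvGen.setoid (G.edgeRelOn F)

/-- The number of connected components of the spanning subgraph `(V, F)`. -/
noncomputable def ncomp (G : Multigraph V E) (F : Set E) : ℕ :=
  Nat.card (Quotient (G.reachSetoid F))

/-- The number of connected components of `G`. -/
noncomputable def numComponents (G : Multigraph V E) : ℕ :=
  G.ncomp Set.univ

/-- `G` is connected. -/
def Connected (G : Multigraph V E) : Prop :=
  G.numComponents = 1

/-- An edge is a bridge if deleting it increases the number of connected components. -/
def IsBridge (G : Multigraph V E) (e : E) : Prop :=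
  G.numComponents < G.ncomp {e' | e' ≠ e}

/-- `G` has no bridge. -/
def Bridgeless (G : Multigraph V E) : Prop :=
  ∀ e, ¬ G.IsBridge e

/-- `G` has no loops. -/
def Loopless (G : Multigraph V E) : Prop :=
  ∀ e, G.fst e ≠ G.snd e

/-- Deleting a set `S` of vertices (and all edges meeting `S`). -/
def deleteVerts (G : Multigraph V E) (S : Set V) :
    Multigraph {v // v ∉ S} {e // G.fst e ∉ S ∧ G.snd e ∉ S} where
  fst := fun e => ⟨G.fst e.1, e.2.1⟩
  snd := fun e => ⟨G.snd e.1, e.2.2⟩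

/-- A cut-vertex: a vertex whose deletion increases the number of components. -/
def IsCutVertex (G : Multigraph V E) (x : V) : Prop :=
  G.numComponents < (G.deleteVerts {x}).numComponents

/-- A graph is non-separable if it has at most one vertex and at most one edge, or it is
connected, loopless and has no cut-vertex. -/
def NonSeparable (G : Multigraph V E) : Prop :=
  (Nat.card V ≤ 1 ∧ Nat.card E ≤ 1) ∨
    (G.Connected ∧ G.Loopless ∧ ∀ x, ¬ G.IsCutVertex x)

/-- The degree of a vertex, counted with edge multiplicity; a loop contributes `2`. -/
noncomputable def degree (G : Multigraph V E) (v : V) : ℕ :=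
  Nat.card {e | G.fst e = v} + Nat.card {e | G.snd e = v}

/-- The flow polynomial `F(G,q) = ∑_{E'⊆E} (−1)^{|E|−|E'|} q^{|E'|+c(E')−|V|}`,
where `c(E')` is the number of connected components of the spanning subgraph `(V,E')`. -/
noncomputable def flowPoly (G : Multigraph V E) [Finite V] [Finite E] : Polynomial ℝ :=
  letI : Fintype E := Fintype.ofFinite E
  ∑ E' : Finset E, (-1 : Polynomial ℝ) ^ (Nat.card E - E'.card) *
    Polynomial.X ^ (E'.card + G.ncomp ↑E' - Nat.card V)

/-- A subgraph of a multigraph: a set of vertices and a set of edges with both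
endpoints among those vertices. -/
structure Subgraph (G : Multigraph V E) where
  verts : Set V
  edges : Set E
  fst_mem : ∀ ⦃e⦄, e ∈ edges → G.fst e ∈ verts
  snd_mem : ∀ ⦃e⦄, e ∈ edges → G.snd e ∈ verts

/-- A subgraph, viewed as a multigraph in its own right. -/
def Subgraph.toMultigraph {G : Multigraph V E} (H : G.Subgraph) :
    Multigraph H.verts H.edges where
  fst := fun e => ⟨G.fst e.1, H.fst_mem e.2⟩
  snd := fun e => ⟨G.snd e.1, H.snd_mem e.2⟩

/-- `H` is a connected component of `G`: its vertex set is the set of vertices reachable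
from some vertex, and its edges are all the edges of `G` joining its vertices. -/
def IsComponent {G : Multigraph V E} (H : G.Subgraph) : Prop :=
  (∃ v ∈ H.verts, ∀ u, u ∈ H.verts ↔ G.Reach Set.univ v u) ∧
    ∀ e, e ∈ H.edges ↔ (G.fst e ∈ H.verts ∧ G.snd e ∈ H.verts)

/-- `H` is a block of `G`: a maximal non-separable subgraph. -/
def IsBlock {G : Multigraph V E} (H : G.Subgraph) : Prop :=
  H.toMultigraph.NonSeparable ∧
    ∀ H' : G.Subgraph, H'.toMultigraph.NonSeparable →
      H.verts ⊆ H'.verts → H.edges ⊆ H'.edges → H' = H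

/-- A trivial block: a single vertex and no edges. -/
def Subgraph.IsTrivial {G : Multigraph V E} (H : G.Subgraph) : Prop :=
  (∃ v, H.verts = {v}) ∧ H.edges = ∅

/-- An orientation of a multigraph: each edge is given a tail and a head,
consistent with its two endpoints. -/
structure Orientation (G : Multigraph V E) where
  tail : E → V
  head : E → V
  consistent : ∀ e, (tail e = G.fst e ∧ head e = G.snd e) ∨
    (tail e = G.snd e ∧ head e = G.fst e)

open Classical in
/-- A `Γ`-flow on an orientation `D`: at every vertex, the sum of the values on
the arcs with that tail equals the sum of the values on the arcs with that head. -/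
noncomputable def Orientation.IsFlow {G : Multigraph V E} [Fintype E]
    (D : G.Orientation) {Γ : Type} [AddCommGroup Γ] (φ : E → Γ) : Prop :=
  ∀ v : V, ∑ e ∈ Finset.univ.filter (fun e => D.tail e = v), φ e =
    ∑ e ∈ Finset.univ.filter (fun e => D.head e = v), φ e

/-- Deleting an edge. -/
def deleteEdge (G : Multigraph V E) (e₀ : E) : Multigraph V {e // e ≠ e₀} where
  fst := fun e => G.fst e.1
  snd := fun e => G.snd e.1

/-- Adding a new edge joining `x` and `y`. -/
def addEdge (G : Multigraph V E) (x y : V) : Multigraph V (E ⊕ Unit) where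
  fst := Sum.elim G.fst fun _ => x
  snd := Sum.elim G.snd fun _ => y

/-- Contracting a set `F` of edges: vertices joined through `F` are identified,
and the edges of `F` are removed. -/
def contract (G : Multigraph V E) (F : Set E) :
    Multigraph (Quotient (G.reachSetoid F)) {e // e ∉ F} where
  fst := fun e => Quotient.mk _ (G.fst e.1)
  snd := fun e => Quotient.mk _ (G.snd e.1)

/-- The number of proper colourings of the vertices of `G` with `n` colours. -/
noncomputable def properColorings (G : Multigraph V E) (n : ℕ) : ℕ :=
  Nat.card {f : V → Fin n // ∀ e, f (G.fst e) ≠ f (G.snd e)}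

/-- An isomorphism of multigraphs. -/
structure Iso {V' E' : Type} (G : Multigraph V E) (G' : Multigraph V' E') where
  vmap : V ≃ V'
  emap : E ≃ E'
  ends : ∀ e, (G'.fst (emap e) = vmap (G.fst e) ∧ G'.snd (emap e) = vmap (G.snd e)) ∨
    (G'.fst (emap e) = vmap (G.snd e) ∧ G'.snd (emap e) = vmap (G.fst e))

open Classical in
/-- Subdividing the edge `e₀`: it is replaced by a path of length two through a new vertex. -/
noncomputable def subdivide (G : Multigraph V E) (e₀ : E) :
    Multigraph (V ⊕ Unit) (E ⊕ Unit) where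
  fst := Sum.elim (fun e => Sum.inl (G.fst e)) fun _ => Sum.inr ()
  snd := Sum.elim (fun e => if e = e₀ then Sum.inr () else Sum.inl (G.snd e))
    fun _ => Sum.inl (G.snd e₀)

/-- `G` is a subdivision of `H`. -/
inductive IsSubdivisionOf :
    {V E V' E' : Type} → Multigraph V E → Multigraph V' E' → Prop
  | of_iso {V E V' E'} {G : Multigraph V E} {H : Multigraph V' E'} :
      Iso G H → IsSubdivisionOf G H
  | step {V E V' E'} {G : Multigraph V E} {H : Multigraph V' E'} (e : E) :
      IsSubdivisionOf G H → IsSubdivisionOf (G.subdivide e) H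
  | iso_left {V₁ E₁ V₂ E₂ V' E'} {G₁ : Multigraph V₁ E₁} {G₂ : Multigraph V₂ E₂}
      {H : Multigraph V' E'} :
      Iso G₁ G₂ → IsSubdivisionOf G₂ H → IsSubdivisionOf G₁ H

/-- A multigraph is 3-connected if it has at least 4 vertices and remains connected
after deleting any set of fewer than 3 vertices. -/
def ThreeConnected (G : Multigraph V E) : Prop :=
  4 ≤ Nat.card V ∧ ∀ S : Set V, S.ncard < 3 → (G.deleteVerts S).Connected

/-- `G` is (isomorphic to) the multigraph `Z_k` with two vertices joined by `k`
parallel edges. -/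
def IsZk (G : Multigraph V E) (k : ℕ) : Prop :=
  Nat.card V = 2 ∧ Nat.card E = k ∧ G.Loopless

/-- `G` is essentially 3-connected: a subdivision of a 3-connected graph,
or `Z_k` for some `k ≥ 3`. -/
def EssentiallyThreeConnected (G : Multigraph V E) : Prop :=
  (∃ (V' E' : Type) (H : Multigraph V' E'), H.ThreeConnected ∧ G.IsSubdivisionOf H) ∨
    ∃ k, 3 ≤ k ∧ G.IsZk k

end Multigraph

/-!
By Tutte, the value of the flow polynomial at `|Γ|` is the number of nowhere-zero `Γ`-flows, for
every finite abelian group `Γ`. Take `Γ = 𝔽₂ⁿ`. A flow of `G` is the same as a pair of flows of the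
two contractions that agree on the cut `S`, and the values of a flow on `S` sum to zero. Since
`|S| ≤ 3`, a zero-sum family of nonzero vectors indexed by `S` has no linear relations except the
constant ones, so `GL(n, 2)` permutes these families transitively and every one of them extends to
equally many nowhere-zero flows of a given graph. Summing over the families gives the identity at
`q = 2ⁿ`, because there are `∏ (2ⁿ - i)` of them, and infinitely many values of `q` suffice.
-/

section LinearAlgebra

variable {K M ι κ : Type*}

theorem exists_linearEquiv_apply_eq [DivisionRing K] [AddCommGroup M] [Module K M] [Fintype ι]
    {x y : ι → M} (h : ∀ c : ι → K, ∑ i, c i • x i = 0 ↔ ∑ i, c i • y i = 0) :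
    ∃ σ : M ≃ₗ[K] M, ∀ i, σ (x i) = y i := by
  classical
  let f := Fintype.linearCombination K x
  let g := Fintype.linearCombination K y
  have hker : LinearMap.ker f = LinearMap.ker g := Submodule.ext h
  let e := f.quotKerEquivRange.symm ≪≫ₗ Submodule.quotEquivOfEq _ _ hker ≪≫ₗ g.quotKerEquivRange
  have apply_combination (c : ι → K) : (e ⟨f c, LinearMap.mem_range_self f c⟩ : M) = g c := by
    simp [e, LinearMap.quotKerEquivRange_symm_apply_image]
  obtain ⟨σ, hσ⟩ := Submodule.exists_linearEquiv_restrict_eq e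
  refine ⟨σ, fun i => ?_⟩
  simpa [f, g, Fintype.linearCombination_apply_single] using
    (hσ _).symm.trans (apply_combination (Pi.single i 1))

/-- The families whose linear relations are exactly those with constant coefficients. If `ι` is
nonempty this says that `∑ i, x i = 0` and that `x` is a circuit of the linear matroid; the empty
family is included, so that the empty edge cut needs no separate treatment. -/
def IsZeroSumCircuit (K : Type*) [Ring K] [AddCommGroup M] [Module K M] [Fintype ι]
    (x : ι → M) : Prop :=
  ∀ c : ι → K, ∑ i, c i • x i = 0 ↔ ∀ i j, c i = c j

section Ring

variable [Ring K] [AddCommGroup M] [Module K M]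

theorem isZeroSumCircuit_of_isEmpty [Fintype ι] [IsEmpty ι] (x : ι → M) : IsZeroSumCircuit K x :=
  fun c => by simp

theorem isZeroSumCircuit_comp_equiv [Fintype ι] [Fintype κ] (e : κ ≃ ι) (x : ι → M) :
    IsZeroSumCircuit K (x ∘ e) ↔ IsZeroSumCircuit K x := by
  refine ((e.symm.arrowCongr (Equiv.refl K)).forall_congr fun {c} => ?_).symm
  rw [← Equiv.sum_comp e, e.surjective.forall₂]
  rfl

theorem isZeroSumCircuit_succ_iff {m : ℕ} (x : Fin (m + 1) → M) :
    IsZeroSumCircuit K x ↔ ∑ i, x i = 0 ∧ LinearIndependent K (Fin.tail x) := by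
  have relation_sub (c : Fin (m + 1) → K) (hx : ∑ i, x i = 0) :
      ∑ i, c i • x i = ∑ i : Fin m, (c i.succ - c 0) • Fin.tail x i := by
    have hc : ∑ i, c i • x i = ∑ i, (c i - c 0) • x i := by
      simp only [sub_smul, Finset.sum_sub_distrib, ← Finset.smul_sum, hx, smul_zero, sub_zero]
    rw [hc, Fin.sum_univ_succ, sub_self, zero_smul, zero_add]
    rfl
  rw [Fintype.linearIndependent_iff]
  constructor
  · intro h
    have hx : ∑ i, x i = 0 := by simpa using (h 1).2 fun _ _ => rfl
    refine ⟨hx, fun d hd i => ?_⟩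
    simpa using (h (Fin.cons 0 d)).1 (by simpa [relation_sub _ hx] using hd) i.succ 0
  · rintro ⟨hx, hli⟩ c
    rw [relation_sub c hx]
    constructor
    · intro hc
      have hc0 : ∀ i, c i = c 0 := Fin.cases rfl fun i => sub_eq_zero.1 (hli _ hc i)
      exact fun i j => (hc0 i).trans (hc0 j).symm
    · exact fun hc => Finset.sum_eq_zero fun i _ => by rw [hc i.succ 0, sub_self, zero_smul]

theorem card_isZeroSumCircuit_fin_succ (m : ℕ) :
    Nat.card {x : Fin (m + 1) → M // IsZeroSumCircuit K x} =
      Nat.card {y : Fin m → M // LinearIndependent K y} :=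
  Nat.card_congr
    { toFun := fun x => ⟨Fin.tail x.1, ((isZeroSumCircuit_succ_iff x.1).1 x.2).2⟩
      invFun := fun y => ⟨Fin.cons (-∑ i, y.1 i) y.1, (isZeroSumCircuit_succ_iff _).2
        ⟨by simp [Fin.sum_univ_succ], by simpa using y.2⟩⟩
      left_inv := fun x => by
        have hx := ((isZeroSumCircuit_succ_iff x.1).1 x.2).1
        rw [Fin.sum_univ_succ] at hx
        ext i
        refine Fin.cases ?_ (fun i => ?_) i
        · exact (eq_neg_of_add_eq_zero_left hx).symm
        · rfl
      right_inv := fun y => rfl }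

end Ring

section ZModTwo

variable [AddCommGroup M] [Module (ZMod 2) M] [Fintype ι]

theorem isZeroSumCircuit_of_card_le_three (hι : Fintype.card ι ≤ 3) {x : ι → M}
    (hx : ∀ i, x i ≠ 0) (hsum : ∑ i, x i = 0) : IsZeroSumCircuit (ZMod 2) x := by
  classical
  refine fun c => ⟨fun hc => ?_, fun hc => ?_⟩
  -- `x` sums to zero over both level sets of a nonconstant `c`, so each level set has at least two
  -- elements.
  · by_contra! hne
    obtain ⟨i, j, hij⟩ := hne
    have indicator_level : ∀ a b : ZMod 2, (if b = a then 1 else 0) = b + (a + 1) := by decide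
    have level_sum_eq_zero (a : ZMod 2) : ∑ i with c i = a, x i = 0 := by
      calc ∑ i with c i = a, x i = ∑ i, (if c i = a then 1 else 0 : ZMod 2) • x i := by
            simp only [Finset.sum_filter, ite_smul, one_smul, zero_smul]
        _ = ∑ i, c i • x i + (a + 1) • ∑ i, x i := by
            simp only [indicator_level, add_smul (_ : ZMod 2), Finset.sum_add_distrib,
              Finset.smul_sum]
        _ = 0 := by rw [hc, hsum, smul_zero, add_zero]
    have two_le_card_level (i : ι) : 2 ≤ (Finset.univ.filter fun j => c j = c i).card := by
      by_contra! h
      have hi : (Finset.univ.filter fun j => c j = c i) = {i} := by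
        refine (Finset.eq_of_subset_of_card_le ?_ (by simpa using Nat.le_of_lt_succ h)).symm
        simp
      exact hx i (by simpa [hi] using level_sum_eq_zero (c i))
    have hdisj : Disjoint (Finset.univ.filter fun k => c k = c i)
        (Finset.univ.filter fun k => c k = c j) :=
      Finset.disjoint_filter.2 fun k _ hki hkj => hij (hki.symm.trans hkj)
    have hcard := Finset.card_le_univ (Finset.disjUnion _ _ hdisj)
    rw [Finset.card_disjUnion] at hcard
    linarith [two_le_card_level i, two_le_card_level j]
  · obtain hι | ⟨⟨i⟩⟩ := isEmpty_or_nonempty ι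
    · simp
    · simp only [fun j => hc j i, ← Finset.smul_sum, hsum, smul_zero]

theorem card_isZeroSumCircuit_of_card_le_three (hι : Fintype.card ι ≤ 3) [Finite M]
    (hM : 2 ≤ Module.finrank (ZMod 2) M) :
    (Nat.card {x : ι → M // IsZeroSumCircuit (ZMod 2) x} : ℝ) =
      ∏ i ∈ Finset.Icc 1 (Fintype.card ι - 1), ((Nat.card M : ℝ) - i) := by
  have hreindex : Nat.card {x : ι → M // IsZeroSumCircuit (ZMod 2) x} =
      Nat.card {x : Fin (Fintype.card ι) → M // IsZeroSumCircuit (ZMod 2) x} :=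
    Nat.card_congr <| ((Fintype.equivFin ι).arrowCongr (Equiv.refl M)).subtypeEquiv fun x =>
      (isZeroSumCircuit_comp_equiv (Fintype.equivFin ι).symm x).symm
  rw [hreindex]
  generalize Fintype.card ι = k at hι
  cases k with
  | zero =>
    simp [isZeroSumCircuit_of_isEmpty]
  | succ m =>
    rw [card_isZeroSumCircuit_fin_succ, card_linearIndependent (by lia),
      Module.natCard_eq_pow_finrank (K := ZMod 2), Nat.card_zmod, ZMod.card]
    have hpow : 2 ^ 2 ≤ 2 ^ Module.finrank (ZMod 2) M := Nat.pow_le_pow_right two_pos hM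
    obtain rfl | rfl | rfl : m = 0 ∨ m = 1 ∨ m = 2 := by lia
    · simp
    · simp [Nat.cast_sub (show 1 ≤ 2 ^ Module.finrank (ZMod 2) M by lia)]
    · rw [Fin.prod_univ_two, Fin.val_zero, Fin.val_one, pow_zero, pow_one, Nat.cast_mul,
        Nat.cast_sub (by lia), Nat.cast_sub (by lia)]
      simp [Finset.prod_Icc_succ_top]

end ZModTwo

end LinearAlgebra

section Counting

variable {α ι : Type*}

theorem card_forall_not_eq_sum_powerset [Finite α] [Fintype ι] (p : ι → α → Prop) :
    (Nat.card {a // ∀ i, ¬ p i a} : ℤ) =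
      ∑ t : Finset ι, (-1) ^ t.card * (Nat.card {a // ∀ i ∈ t, p i a} : ℤ) := by
  classical
  have := Fintype.ofFinite α
  have h := Finset.inclusion_exclusion_card_inf_compl Finset.univ
    fun i => Finset.univ.filter (p i)
  have hcompl : (Finset.univ.inf fun i => (Finset.univ.filter (p i))ᶜ) =
      Finset.univ.filter fun a => ∀ i, ¬ p i a := by ext a; simp [Finset.mem_inf]
  have hinf (t : Finset ι) : (t.inf fun i => Finset.univ.filter (p i)) =
      Finset.univ.filter fun a => ∀ i ∈ t, p i a := by ext a; simp [Finset.mem_inf]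
  simpa only [hcompl, hinf, Finset.powerset_univ, Fintype.card_subtype,
    Nat.card_eq_fintype_card] using h

theorem card_mul_sum_mul_eq_sum_mul_sum [Fintype α] (s : Finset α) {f g : α → ℕ}
    (hf₀ : ∀ x ∉ s, f x = 0) (hg₀ : ∀ x ∉ s, g x = 0)
    (hf : ∀ x ∈ s, ∀ y ∈ s, f x = f y) (hg : ∀ x ∈ s, ∀ y ∈ s, g x = g y) :
    s.card * ∑ x, f x * g x = (∑ x, f x) * ∑ x, g x := by
  have sum_eq_sum_subset {h : α → ℕ} (hh : ∀ x ∉ s, h x = 0) : ∑ x, h x = ∑ x ∈ s, h x :=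
    (Finset.sum_subset s.subset_univ fun x _ hx => hh x hx).symm
  rw [sum_eq_sum_subset hf₀, sum_eq_sum_subset hg₀,
    sum_eq_sum_subset fun x hx => by rw [hf₀ x hx, zero_mul]]
  obtain rfl | ⟨z, hz⟩ := s.eq_empty_or_nonempty
  · simp
  · rw [Finset.sum_eq_card_nsmul fun x hx => hf x hx z hz,
      Finset.sum_eq_card_nsmul fun x hx => hg x hx z hz,
      Finset.sum_eq_card_nsmul fun x hx => congrArg₂ (· * ·) (hf x hx z hz) (hg x hx z hz)]
    simp only [smul_eq_mul]
    ring

theorem sum_subtype_of_forall_not_eq_zero [AddCommMonoid α] [Fintype ι] {p : ι → Prop}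
    [Fintype {i // p i}] {f : ι → α} (hf : ∀ i, ¬ p i → f i = 0) :
    ∑ i : {i // p i}, f i = ∑ i, f i :=
  Fintype.sum_of_injective Subtype.val Subtype.val_injective _ _
    (fun i hi => hf i fun hp => hi ⟨⟨i, hp⟩, rfl⟩) fun _ => rfl

theorem existsUnique_eq_on_compl {F₁ F₂ : Set ι} (hF : Disjoint F₁ F₂) {ψ₁ : {i // i ∉ F₁} → α}
    {ψ₂ : {i // i ∉ F₂} → α} (h : ∀ i (h₁ : i ∉ F₁) (h₂ : i ∉ F₂), ψ₁ ⟨i, h₁⟩ = ψ₂ ⟨i, h₂⟩) :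
    ∃! φ : ι → α, (∀ i : {i // i ∉ F₁}, φ i = ψ₁ i) ∧ ∀ i : {i // i ∉ F₂}, φ i = ψ₂ i := by
  classical
  have hmem (i : ι) (hi : i ∈ F₁) : i ∉ F₂ := hF.notMem_of_mem_left hi
  refine ⟨fun i => if hi : i ∈ F₁ then ψ₂ ⟨i, hmem i hi⟩ else ψ₁ ⟨i, hi⟩, ⟨?_, ?_⟩, ?_⟩
  · exact fun i => dif_neg i.2
  · intro i
    by_cases hi : i.1 ∈ F₁
    · exact dif_pos hi
    · exact (dif_neg hi).trans (h i hi i.2)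
  · rintro φ ⟨h₁, h₂⟩
    funext i
    by_cases hi : i ∈ F₁
    · rw [dif_pos hi]
      exact h₂ ⟨i, hmem i hi⟩
    · rw [dif_neg hi]
      exact h₁ ⟨i, hi⟩

end Counting

section FiberSum

variable {α β γ A : Type*} [Fintype α] [AddCommGroup A]

open Classical in
/-- The pushforward of labellings along `t`, summing the labels over each fibre. -/
noncomputable def fiberSum (t : α → β) : (α → A) →+ (β → A) where
  toFun f b := ∑ a with t a = b, f a
  map_zero' := by ext; simp
  map_add' f g := by ext; simp [Finset.sum_add_distrib]

theorem fiberSum_single [DecidableEq α] [DecidableEq β] (t : α → β) (a : α) (x : A) :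
    fiberSum t (Pi.single a x) = Pi.single (t a) x := by
  ext b
  simp [fiberSum, Pi.single_apply, eq_comm]

theorem fiberSum_id : fiberSum (id : α → α) = AddMonoidHom.id (α → A) := by
  classical
  exact AddMonoidHom.functions_ext' _ _ _ fun a => AddMonoidHom.ext fun x => fiberSum_single _ a x

theorem fiberSum_comp [Fintype β] (u : β → γ) (t : α → β) :
    fiberSum (u ∘ t) = (fiberSum u).comp (fiberSum (A := A) t) := by
  classical
  refine AddMonoidHom.functions_ext' _ _ _ fun a => AddMonoidHom.ext fun x => ?_
  simp [fiberSum_single]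

theorem fiberSum_surjective [Finite β] {t : α → β} (ht : Function.Surjective t) :
    Function.Surjective (fiberSum (A := A) t) := by
  have := Fintype.ofFinite β
  intro h
  obtain ⟨s, hs⟩ := ht.hasRightInverse
  refine ⟨fiberSum s h, ?_⟩
  rw [← AddMonoidHom.comp_apply, ← fiberSum_comp, hs.id, fiberSum_id, AddMonoidHom.id_apply]

theorem sum_smul_fiberSum [Fintype β] (t : α → β) (g : β → ℤ) (f : α → A) :
    ∑ b, g b • fiberSum t f b = ∑ a, g (t a) • f a := by
  classical
  rw [← Finset.sum_fiberwise Finset.univ t]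
  refine Finset.sum_congr rfl fun b _ => Finset.smul_sum.trans ?_
  refine Finset.sum_congr (by congr!) fun a ha => ?_
  rw [(Finset.mem_filter.1 ha).2]

end FiberSum

namespace Multigraph

variable {V E Γ : Type} {G : Multigraph V E}

theorem reach_fst_snd {F : Set E} {e : E} (he : e ∈ F) : G.Reach F (G.fst e) (G.snd e) :=
  Relation.EqvGen.rel _ _ ⟨e, he, Or.inl ⟨rfl, rfl⟩⟩

theorem eq_of_reach {α : Type*} {F : Set E} {g : V → α}
    (hg : ∀ e ∈ F, g (G.fst e) = g (G.snd e)) {a b : V} (h : G.Reach F a b) : g a = g b := by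
  refine Setoid.eqvGen_le (s := Setoid.ker g) ?_ h
  rintro _ _ ⟨e, he, ⟨rfl, rfl⟩ | ⟨rfl, rfl⟩⟩
  · exact hg e he
  · exact (hg e he).symm

/-- The orientation of every edge from its first to its second endpoint. -/
def fstToSnd (G : Multigraph V E) : G.Orientation where
  tail := G.fst
  head := G.snd
  consistent := fun _ => Or.inl ⟨rfl, rfl⟩

/-- The spanning subgraph with edge set `F`. -/
def spanningSubgraph (G : Multigraph V E) (F : Set E) : Multigraph V F where
  fst := fun e => G.fst e
  snd := fun e => G.snd e

theorem numComponents_spanningSubgraph (F : Set E) :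
    (G.spanningSubgraph F).numComponents = G.ncomp F := by
  have hrel : (G.spanningSubgraph F).edgeRelOn Set.univ = G.edgeRelOn F := by
    ext a b
    constructor
    · rintro ⟨e, -, h⟩
      exact ⟨e, e.2, h⟩
    · rintro ⟨e, he, h⟩
      exact ⟨⟨e, he⟩, Set.mem_univ _, h⟩
  rw [numComponents, ncomp, ncomp, reachSetoid, reachSetoid, hrel]

namespace Orientation

variable (D : G.Orientation)

theorem apply_tail_eq_apply_head_iff {α : Type*} (g : V → α) (e : E) :
    g (D.tail e) = g (D.head e) ↔ g (G.fst e) = g (G.snd e) := by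
  obtain ⟨htail, hhead⟩ | ⟨htail, hhead⟩ := D.consistent e
  · rw [htail, hhead]
  · rw [htail, hhead, eq_comm]

/-- The orientation induced on a spanning subgraph. -/
def spanningSubgraph (F : Set E) : (G.spanningSubgraph F).Orientation where
  tail := fun e => D.tail e
  head := fun e => D.head e
  consistent := fun e => D.consistent e

/-- The orientation induced on a contraction. -/
def contract (F : Set E) : (G.contract F).Orientation where
  tail := fun e => Quotient.mk _ (D.tail e)
  head := fun e => Quotient.mk _ (D.head e)
  consistent := fun e => (D.consistent e).imp
    (fun h => ⟨congrArg _ h.1, congrArg _ h.2⟩) fun h => ⟨congrArg _ h.1, congrArg _ h.2⟩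

section Boundary

variable [Fintype E] [AddCommGroup Γ]

/-- The boundary map from edge labellings to vertex labellings, whose value at a vertex is the net
outflow; its kernel consists of the flows. -/
noncomputable def boundary : (E → Γ) →+ (V → Γ) :=
  fiberSum D.tail - fiberSum D.head

theorem isFlow_iff_boundary_eq_zero (φ : E → Γ) : D.IsFlow φ ↔ D.boundary φ = 0 :=
  (sub_eq_zero.trans funext_iff).symm

theorem boundary_single [DecidableEq V] [DecidableEq E] (e : E) (x : Γ) :
    D.boundary (Pi.single e x) = Pi.single (D.tail e) x - Pi.single (D.head e) x := by
  simp only [boundary, AddMonoidHom.sub_apply, fiberSum_single]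

theorem sum_smul_boundary [Fintype V] (g : V → ℤ) (φ : E → Γ) :
    ∑ v, g v • D.boundary φ v = ∑ e, (g (D.tail e) - g (D.head e)) • φ e := by
  simp only [boundary, AddMonoidHom.sub_apply, Pi.sub_apply, smul_sub, sub_smul,
    Finset.sum_sub_distrib, sum_smul_fiberSum]

theorem isFlow_iff_forall_sum_smul_eq_zero [Finite V] (φ : E → Γ) :
    D.IsFlow φ ↔ ∀ g : V → ℤ, ∑ e, (g (D.tail e) - g (D.head e)) • φ e = 0 := by
  classical
  have := Fintype.ofFinite V
  rw [isFlow_iff_boundary_eq_zero]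
  simp only [← sum_smul_boundary]
  constructor
  · intro h g
    simp [h]
  · intro h
    ext v
    simpa [Pi.single_apply] using h (Pi.single v 1)

theorem mk_single_eq_mk_single_of_reach [DecidableEq V] {a b : V} (h : G.Reach Set.univ a b)
    (x : Γ) : ((Pi.single a x : V → Γ) : (V → Γ) ⧸ (D.boundary (Γ := Γ)).range) =
      (Pi.single b x : V → Γ) := by
  classical
  let g (v : V) : (V → Γ) ⧸ (D.boundary (Γ := Γ)).range := (Pi.single v x : V → Γ)
  refine eq_of_reach (g := g) (fun e _ => (D.apply_tail_eq_apply_head_iff g e).1 ?_) h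
  exact QuotientAddGroup.eq_iff_sub_mem.2 ⟨Pi.single e x, D.boundary_single e x⟩

theorem range_boundary [Fintype V] : (D.boundary (Γ := Γ)).range =
    (fiberSum (A := Γ) (Quotient.mk (G.reachSetoid Set.univ))).ker := by
  classical
  have := Fintype.ofFinite (Quotient (G.reachSetoid Set.univ))
  apply le_antisymm
  · have hcomp :
        (fiberSum (Quotient.mk (G.reachSetoid Set.univ))).comp (D.boundary (Γ := Γ)) = 0 := by
      refine AddMonoidHom.functions_ext' _ _ _ fun e => AddMonoidHom.ext fun x => ?_
      have hclass : Quotient.mk (G.reachSetoid Set.univ) (D.tail e) = Quotient.mk _ (D.head e) :=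
        (D.apply_tail_eq_apply_head_iff _ e).2 (Quotient.sound (reach_fst_snd (Set.mem_univ e)))
      simp [boundary_single, fiberSum_single, hclass]
    rintro _ ⟨φ, rfl⟩
    exact DFunLike.congr_fun hcomp φ
  · have hcomp : QuotientAddGroup.mk' (D.boundary (Γ := Γ)).range =
        (QuotientAddGroup.mk' (D.boundary (Γ := Γ)).range).comp
          (fiberSum (Quotient.out ∘ Quotient.mk (G.reachSetoid Set.univ))) := by
      refine AddMonoidHom.functions_ext' _ _ _ fun v => AddMonoidHom.ext fun x => ?_
      have hv := D.mk_single_eq_mk_single_of_reach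
        (Setoid.symm' (G.reachSetoid Set.univ) (Quotient.mk_out v)) x
      simpa [fiberSum_single] using hv
    intro f hf
    rw [← QuotientAddGroup.eq_zero_iff, ← QuotientAddGroup.mk'_apply, hcomp, fiberSum_comp]
    simp only [AddMonoidHom.comp_apply, (AddMonoidHom.mem_ker).1 hf, map_zero]

theorem card_isFlow_mul [Finite V] :
    Nat.card {φ : E → Γ // D.IsFlow φ} * Nat.card Γ ^ Nat.card V =
      Nat.card Γ ^ (Nat.card E + G.numComponents) := by
  have := Fintype.ofFinite V
  have := Fintype.ofFinite (Quotient (G.reachSetoid Set.univ))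
  have hflow : Nat.card {φ : E → Γ // D.IsFlow φ} = Nat.card (D.boundary (Γ := Γ)).ker :=
    Nat.card_congr (Equiv.subtypeEquivRight D.isFlow_iff_boundary_eq_zero)
  have hcomponents : Nat.card (fiberSum (A := Γ) (Quotient.mk (G.reachSetoid Set.univ))).range =
      Nat.card Γ ^ G.numComponents := by
    rw [AddMonoidHom.range_eq_top.2 (fiberSum_surjective Quotient.mk_surjective),
      AddSubgroup.card_top, Nat.card_fun]
    rfl
  have hboundary := (D.boundary (Γ := Γ)).ker.card_mul_index
  rw [AddSubgroup.index_ker, range_boundary, Nat.card_fun] at hboundary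
  have hvertices := (fiberSum (A := Γ) (Quotient.mk (G.reachSetoid Set.univ))).ker.card_mul_index
  rw [AddSubgroup.index_ker, hcomponents, Nat.card_fun] at hvertices
  rw [hflow, pow_add, ← hvertices, ← hboundary, mul_assoc]

end Boundary

end Orientation

-- Hence no subtraction in the exponents of `flowPoly` is truncated.
theorem card_le_card_add_numComponents (G : Multigraph V E) [Finite V] [Finite E] :
    Nat.card V ≤ Nat.card E + G.numComponents := by
  have := Fintype.ofFinite E
  have hdvd := Dvd.intro_left _ (G.fstToSnd.card_isFlow_mul (Γ := ZMod 2))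
  rw [Nat.card_zmod] at hdvd
  exact Nat.pow_dvd_pow_iff_le_right'.1 hdvd

theorem Orientation.card_isFlow (D : G.Orientation) [Finite V] [Fintype E] [AddCommGroup Γ]
    [Finite Γ] : Nat.card {φ : E → Γ // D.IsFlow φ} =
      Nat.card Γ ^ (Nat.card E + G.numComponents - Nat.card V) := by
  refine Nat.eq_of_mul_eq_mul_right (pow_pos (Nat.card_pos (α := Γ)) (Nat.card V)) ?_
  rw [D.card_isFlow_mul, ← pow_add, Nat.sub_add_cancel G.card_le_card_add_numComponents]

namespace Orientation

variable (D : G.Orientation) [AddCommGroup Γ]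

section Tutte

variable [Finite V] [Fintype E]

theorem isFlow_spanningSubgraph_iff {F : Set E} [Fintype F] {φ : E → Γ} (hφ : ∀ e ∉ F, φ e = 0) :
    (D.spanningSubgraph F).IsFlow (fun e => φ e) ↔ D.IsFlow φ := by
  rw [isFlow_iff_forall_sum_smul_eq_zero, isFlow_iff_forall_sum_smul_eq_zero]
  refine forall_congr' fun g => ?_
  rw [← sum_subtype_of_forall_not_eq_zero (p := (· ∈ F)) fun e he => by rw [hφ e he, smul_zero]]
  rfl

theorem card_isFlow_and_forall_notMem_eq_zero [Finite Γ] (F : Set E) :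
    Nat.card {φ : E → Γ // D.IsFlow φ ∧ ∀ e ∉ F, φ e = 0} =
      Nat.card Γ ^ (F.ncard + G.ncomp F - Nat.card V) := by
  have := Fintype.ofFinite F
  rw [← numComponents_spanningSubgraph, ← Nat.card_coe_set_eq,
    ← (D.spanningSubgraph F).card_isFlow]
  have extend_apply (ψ : F → Γ) (e : F) : Function.extend Subtype.val ψ 0 e.1 = ψ e :=
    Subtype.val_injective.extend_apply ψ 0 e
  have extend_eq_zero (ψ : F → Γ) (e : E) (he : e ∉ F) : Function.extend Subtype.val ψ 0 e = 0 :=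
    Function.extend_apply' _ _ e fun ⟨e', he'⟩ => he (he' ▸ e'.2)
  refine Nat.card_eq_of_bijective
    (fun φ => ⟨fun e => φ.1 e, (D.isFlow_spanningSubgraph_iff φ.2.2).2 φ.2.1⟩) ⟨?_, ?_⟩
  · intro φ φ' h
    ext e
    by_cases he : e ∈ F
    · exact congrFun (congrArg Subtype.val h) ⟨e, he⟩
    · rw [φ.2.2 e he, φ'.2.2 e he]
  · intro ψ
    have hrestrict : (fun e : F => Function.extend Subtype.val ψ.1 0 e.1) = ψ.1 :=
      funext (extend_apply ψ.1)
    refine ⟨⟨Function.extend Subtype.val ψ.1 0, ?_, extend_eq_zero ψ.1⟩, Subtype.ext hrestrict⟩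
    rw [← D.isFlow_spanningSubgraph_iff (extend_eq_zero ψ.1), hrestrict]
    exact ψ.2

/-- A flow that vanishes on no edge. -/
def IsNowhereZeroFlow (φ : E → Γ) : Prop :=
  D.IsFlow φ ∧ ∀ e, φ e ≠ 0

theorem eval_flowPoly [Finite Γ] :
    G.flowPoly.eval (Nat.card Γ : ℝ) =
      Nat.card {φ : E → Γ // D.IsNowhereZeroFlow φ} := by
  classical
  have hcount := card_forall_not_eq_sum_powerset (α := {φ : E → Γ // D.IsFlow φ})
    fun e φ => φ.1 e = 0
  have hvanishing (F : Finset E) :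
      Nat.card {φ : {φ : E → Γ // D.IsFlow φ} // ∀ e ∈ Fᶜ, φ.1 e = 0} =
        Nat.card Γ ^ (F.card + G.ncomp F - Nat.card V) := by
    rw [← Set.ncard_coe_finset, ← D.card_isFlow_and_forall_notMem_eq_zero]
    simpa only [Finset.mem_compl, Finset.mem_coe] using Nat.card_congr
      (Equiv.subtypeSubtypeEquivSubtypeInter D.IsFlow fun φ => ∀ e ∈ Fᶜ, φ e = 0)
  calc G.flowPoly.eval (Nat.card Γ : ℝ)
      = ∑ F : Finset E, (-1) ^ Fᶜ.card *
          (Nat.card {φ : {φ : E → Γ // D.IsFlow φ} // ∀ e ∈ Fᶜ, φ.1 e = 0} : ℝ) := by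
        simp only [hvanishing, Finset.card_compl, ← Nat.card_eq_fintype_card, Nat.cast_pow]
        rw [flowPoly, Polynomial.eval_finsetSum]
        simp only [Polynomial.eval_mul, Polynomial.eval_pow, Polynomial.eval_neg,
          Polynomial.eval_one, Polynomial.eval_X]
        congr!
    _ = ∑ F : Finset E, (-1 : ℝ) ^ F.card *
          (Nat.card {φ : {φ : E → Γ // D.IsFlow φ} // ∀ e ∈ F, φ.1 e = 0} : ℝ) :=
        Equiv.sum_comp (compl_involutive.toPerm _) fun F : Finset E => (-1) ^ F.card *
          (Nat.card {φ : {φ : E → Γ // D.IsFlow φ} // ∀ e ∈ F, φ.1 e = 0} : ℝ)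
    _ = Nat.card {φ : {φ : E → Γ // D.IsFlow φ} // ∀ e, φ.1 e ≠ 0} := by
        exact_mod_cast hcount.symm
    _ = Nat.card {φ : E → Γ // D.IsNowhereZeroFlow φ} := by
        rw [Nat.card_congr (Equiv.subtypeSubtypeEquivSubtypeInter D.IsFlow fun φ => ∀ e, φ e ≠ 0)]
        rfl

end Tutte

end Orientation

/-- The edges with one end in `U` and the other outside `U`. -/
def edgeCut (G : Multigraph V E) (U : Set V) : Set E :=
  {e | (G.fst e ∈ U ∧ G.snd e ∈ Uᶜ) ∨ (G.fst e ∈ Uᶜ ∧ G.snd e ∈ U)}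

/-- The edges with both ends in `U`, that is, the edge set of the induced subgraph `G[U]`. -/
def inducedEdges (G : Multigraph V E) (U : Set V) : Set E :=
  {e | G.fst e ∈ U ∧ G.snd e ∈ U}

theorem mem_edgeCut_iff {U : Set V} {e : E} :
    e ∈ G.edgeCut U ↔ e ∉ G.inducedEdges Uᶜ ∧ e ∉ G.inducedEdges U := by
  simp only [edgeCut, inducedEdges, Set.mem_ofPred_eq, Set.mem_compl_iff]
  tauto

theorem disjoint_inducedEdges_compl (U : Set V) :
    Disjoint (G.inducedEdges Uᶜ) (G.inducedEdges U) :=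
  Set.disjoint_left.2 fun _ h h' => h.1 h'.1

theorem disjoint_inducedEdges_edgeCut (U : Set V) :
    Disjoint (G.inducedEdges U) (G.edgeCut U) :=
  Set.disjoint_right.2 fun _ h => (mem_edgeCut_iff.1 h).2

theorem disjoint_inducedEdges_compl_edgeCut (U : Set V) :
    Disjoint (G.inducedEdges Uᶜ) (G.edgeCut U) :=
  Set.disjoint_right.2 fun _ h => (mem_edgeCut_iff.1 h).1

/-- The edges of a cut of `G`, as edges of a contraction of `G` not affecting them. -/
def cutEdge {F : Set E} {U : Set V} (h : Disjoint F (G.edgeCut U)) (e : G.edgeCut U) :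
    {e // e ∉ F} :=
  ⟨e, h.notMem_of_mem_right e.2⟩

namespace Orientation

variable (D : G.Orientation) [AddCommGroup Γ]

section Contraction

variable [Finite V]

theorem isFlow_contract_iff {F : Set E} [Fintype {e // e ∉ F}] (ψ : {e // e ∉ F} → Γ) :
    (D.contract F).IsFlow ψ ↔ ∀ g : V → ℤ, (∀ e ∈ F, g (G.fst e) = g (G.snd e)) →
      ∑ e : {e // e ∉ F}, (g (D.tail e) - g (D.head e)) • ψ e = 0 := by
  rw [isFlow_iff_forall_sum_smul_eq_zero]
  constructor
  · intro h g hg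
    exact h (Quotient.lift g fun _ _ => eq_of_reach hg)
  · exact fun h g => h (fun v => g (Quotient.mk _ v))
      fun e he => congrArg g (Quotient.sound (reach_fst_snd he))

theorem isFlow_contract_restrict_iff [Fintype E] {F : Set E} [Fintype {e // e ∉ F}] (φ : E → Γ) :
    (D.contract F).IsFlow (fun e => φ e) ↔ ∀ g : V → ℤ, (∀ e ∈ F, g (G.fst e) = g (G.snd e)) →
      ∑ e, (g (D.tail e) - g (D.head e)) • φ e = 0 := by
  rw [isFlow_contract_iff]
  refine forall₂_congr fun g hg => ?_
  have hF (e : E) (he : ¬ e ∉ F) : (g (D.tail e) - g (D.head e)) • φ e = 0 := by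
    rw [(D.apply_tail_eq_apply_head_iff g e).2 (hg e (not_not.1 he)), sub_self, zero_smul]
  rw [← sum_subtype_of_forall_not_eq_zero hF]

variable (U : Set V)

theorem isFlow_iff_isFlow_contract [Fintype E] [Fintype {e // e ∉ G.inducedEdges Uᶜ}]
    [Fintype {e // e ∉ G.inducedEdges U}] (φ : E → Γ) :
    D.IsFlow φ ↔ (D.contract (G.inducedEdges Uᶜ)).IsFlow (fun e => φ e) ∧
      (D.contract (G.inducedEdges U)).IsFlow fun e => φ e := by
  classical
  rw [isFlow_contract_restrict_iff, isFlow_contract_restrict_iff,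
    isFlow_iff_forall_sum_smul_eq_zero]
  refine ⟨fun h => ⟨fun g _ => h g, fun g _ => h g⟩, fun ⟨h₁, h₂⟩ g => ?_⟩
  have hU := h₁ (U.indicator g) fun e he => by
    rw [Set.indicator_of_notMem he.1, Set.indicator_of_notMem he.2]
  have hUc := h₂ (Uᶜ.indicator g) fun e he => by
    rw [Set.indicator_of_notMem (not_not.2 he.1), Set.indicator_of_notMem (not_not.2 he.2)]
  calc ∑ e, (g (D.tail e) - g (D.head e)) • φ e
      = ∑ e, (U.indicator g (D.tail e) - U.indicator g (D.head e)) • φ e +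
          ∑ e, (Uᶜ.indicator g (D.tail e) - Uᶜ.indicator g (D.head e)) • φ e := by
        rw [← Finset.sum_add_distrib]
        simp only [← add_smul, sub_add_sub_comm, Set.indicator_self_add_compl_apply]
    _ = 0 := by rw [hU, hUc, add_zero]

theorem isNowhereZeroFlow_iff_contract [Fintype E] [Fintype {e // e ∉ G.inducedEdges Uᶜ}]
    [Fintype {e // e ∉ G.inducedEdges U}] (φ : E → Γ) :
    D.IsNowhereZeroFlow φ ↔
      (D.contract (G.inducedEdges Uᶜ)).IsNowhereZeroFlow (fun e => φ e) ∧
        (D.contract (G.inducedEdges U)).IsNowhereZeroFlow fun e => φ e := by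
  have hne : (∀ e, φ e ≠ 0) ↔ (∀ e : {e // e ∉ G.inducedEdges Uᶜ}, φ e ≠ 0) ∧
      ∀ e : {e // e ∉ G.inducedEdges U}, φ e ≠ 0 := by
    refine ⟨fun h => ⟨fun e => h e, fun e => h e⟩, fun ⟨h₁, h₂⟩ e => ?_⟩
    by_cases he : e ∈ G.inducedEdges U
    · exact h₁ ⟨e, (disjoint_inducedEdges_compl U).notMem_of_mem_right he⟩
    · exact h₂ ⟨e, he⟩
  rw [IsNowhereZeroFlow, D.isFlow_iff_isFlow_contract U, hne]
  exact and_and_and_comm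

variable {U} in
theorem sum_cutEdge_eq_zero [Module (ZMod 2) Γ] {F : Set E} [Fintype {e // e ∉ F}]
    [Fintype (G.edgeCut U)] (hF : Disjoint F (G.edgeCut U)) {ψ : {e // e ∉ F} → Γ}
    (hψ : (D.contract F).IsFlow ψ) : ∑ e, ψ (cutEdge hF e) = 0 := by
  classical
  let g : V → ℤ := U.indicator 1
  have g_eq (v : V) : g v = if v ∈ U then 1 else 0 := Set.indicator_apply U 1 v
  have g_tail_eq_iff (e : E) : g (D.tail e) = g (D.head e) ↔ e ∉ G.edgeCut U := by
    rw [apply_tail_eq_apply_head_iff, g_eq, g_eq, edgeCut]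
    by_cases h₁ : G.fst e ∈ U <;> by_cases h₂ : G.snd e ∈ U <;> simp [h₁, h₂]
  rw [← (D.isFlow_contract_iff ψ).1 hψ g fun e he =>
    (D.apply_tail_eq_apply_head_iff g e).1 ((g_tail_eq_iff e).2 (hF.notMem_of_mem_left he))]
  refine Fintype.sum_of_injective (cutEdge hF)
    (fun e e' h => Subtype.ext (congrArg (fun e => e.1) h)) _ _ (fun e he => ?_) fun e => ?_
  · rw [(g_tail_eq_iff e).2 fun hcut => he ⟨⟨e, hcut⟩, rfl⟩, sub_self, zero_smul]
  · have hne : g (D.tail e) ≠ g (D.head e) := fun h => (g_tail_eq_iff e).1 h e.2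
    have hsign : g (D.tail e) - g (D.head e) = 1 ∨ g (D.tail e) - g (D.head e) = -1 := by
      rw [g_eq, g_eq] at hne ⊢
      split_ifs at hne ⊢ <;> simp_all
    change ψ (cutEdge hF e) = (g (D.tail e) - g (D.head e)) • ψ (cutEdge hF e)
    obtain h | h := hsign
    · rw [h, one_smul]
    · rw [h, neg_one_smul, ZModModule.neg_eq_self]

end Contraction

section Extensions

variable [Fintype E] {ι : Type*}

/-- The number of nowhere-zero flows taking the values `x` on the edges `j`. -/
noncomputable def numExtensions (j : ι → E) (x : ι → Γ) : ℕ :=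
  Nat.card {φ : E → Γ // D.IsNowhereZeroFlow φ ∧ φ ∘ j = x}

theorem sum_numExtensions [Fintype Γ] [Fintype ι] [DecidableEq ι] (j : ι → E) :
    ∑ x : ι → Γ, D.numExtensions j x = Nat.card {φ : E → Γ // D.IsNowhereZeroFlow φ} := by
  classical
  have hfiber (x : ι → Γ) : D.numExtensions j x =
      Nat.card {φ : {φ : E → Γ // D.IsNowhereZeroFlow φ} // φ.1 ∘ j = x} :=
    Nat.card_congr (Equiv.subtypeSubtypeEquivSubtypeInter D.IsNowhereZeroFlow (· ∘ j = x)).symm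
  simp only [hfiber]
  rw [← Nat.card_sigma]
  exact Nat.card_congr (Equiv.sigmaFiberEquiv _)

theorem isNowhereZeroFlow_comp_addEquiv (σ : Γ ≃+ Γ) (φ : E → Γ) :
    D.IsNowhereZeroFlow (σ ∘ φ) ↔ D.IsNowhereZeroFlow φ := by
  simp only [IsNowhereZeroFlow, IsFlow, Function.comp_apply, ← map_sum, σ.injective.eq_iff, ne_eq,
    EmbeddingLike.map_eq_zero_iff]

theorem numExtensions_comp_addEquiv (σ : Γ ≃+ Γ) (j : ι → E) (x : ι → Γ) :
    D.numExtensions j (σ ∘ x) = D.numExtensions j x := by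
  refine (Nat.card_congr (((Equiv.refl E).arrowCongr σ.toEquiv).subtypeEquiv fun φ => ?_)).symm
  exact and_congr (D.isNowhereZeroFlow_comp_addEquiv σ φ).symm
    (σ.injective.comp_left.eq_iff (a := φ ∘ j)).symm

theorem numExtensions_eq_of_isZeroSumCircuit {K : Type*} [DivisionRing K] [Module K Γ]
    [Fintype ι] (j : ι → E) {x y : ι → Γ} (hx : IsZeroSumCircuit K x)
    (hy : IsZeroSumCircuit K y) : D.numExtensions j x = D.numExtensions j y := by
  obtain ⟨σ, hσ⟩ := exists_linearEquiv_apply_eq fun c => (hx c).trans (hy c).symm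
  rw [← funext hσ]
  exact (D.numExtensions_comp_addEquiv σ.toAddEquiv j x).symm

end Extensions

section EdgeCut

variable [Finite V] {U : Set V}

theorem numExtensions_cutEdge_eq_zero [Module (ZMod 2) Γ] {F : Set E} [Fintype {e // e ∉ F}]
    [Fintype (G.edgeCut U)] (hU : Fintype.card (G.edgeCut U) ≤ 3) (hF : Disjoint F (G.edgeCut U))
    {x : G.edgeCut U → Γ} (hx : ¬ IsZeroSumCircuit (ZMod 2) x) :
    (D.contract F).numExtensions (cutEdge hF) x = 0 := by
  refine Nat.card_eq_zero.2 (Or.inl ⟨fun ⟨ψ, hψ, hψx⟩ => hx ?_⟩)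
  subst hψx
  exact isZeroSumCircuit_of_card_le_three hU (fun e => hψ.2 _) (D.sum_cutEdge_eq_zero hF hψ.1)

variable (U) in
theorem numExtensions_edgeCut [Fintype E] [Fintype {e // e ∉ G.inducedEdges Uᶜ}]
    [Fintype {e // e ∉ G.inducedEdges U}] (x : G.edgeCut U → Γ) :
    D.numExtensions Subtype.val x =
      (D.contract (G.inducedEdges Uᶜ)).numExtensions
          (cutEdge (disjoint_inducedEdges_compl_edgeCut U)) x *
        (D.contract (G.inducedEdges U)).numExtensions
          (cutEdge (disjoint_inducedEdges_edgeCut U)) x := by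
  rw [numExtensions, numExtensions, numExtensions, ← Nat.card_prod]
  refine Nat.card_eq_of_bijective (fun φ =>
    (⟨fun e => φ.1 e, ((D.isNowhereZeroFlow_iff_contract U φ.1).1 φ.2.1).1, φ.2.2⟩,
      ⟨fun e => φ.1 e, ((D.isNowhereZeroFlow_iff_contract U φ.1).1 φ.2.1).2, φ.2.2⟩))
    ((Function.bijective_iff_existsUnique _).2 ?_)
  rintro ⟨⟨ψ₁, hψ₁, hx₁⟩, ⟨ψ₂, hψ₂, hx₂⟩⟩
  have hcut (e : E) (h₁ : e ∉ G.inducedEdges Uᶜ) (h₂ : e ∉ G.inducedEdges U) :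
      ψ₁ ⟨e, h₁⟩ = ψ₂ ⟨e, h₂⟩ :=
    congrFun (hx₁.trans hx₂.symm) ⟨e, mem_edgeCut_iff.2 ⟨h₁, h₂⟩⟩
  obtain ⟨φ, ⟨hφ₁, hφ₂⟩, hunique⟩ := existsUnique_eq_on_compl (disjoint_inducedEdges_compl U) hcut
  obtain rfl := funext hφ₁
  obtain rfl := funext hφ₂
  refine ⟨⟨φ, (D.isNowhereZeroFlow_iff_contract U φ).2 ⟨hψ₁, hψ₂⟩, hx₁⟩, rfl, fun φ' hφ' => ?_⟩
  simp only [Prod.mk.injEq, Subtype.mk.injEq] at hφ'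
  exact Subtype.ext (hunique φ'.1 ⟨congrFun hφ'.1, congrFun hφ'.2⟩)

open scoped Classical in
theorem card_isZeroSumCircuit_mul_card_isNowhereZeroFlow [Fintype E] [Finite Γ]
    [Module (ZMod 2) Γ] (hU : Fintype.card (G.edgeCut U) ≤ 3) :
    Nat.card {x : G.edgeCut U → Γ // IsZeroSumCircuit (ZMod 2) x} *
        Nat.card {φ : E → Γ // D.IsNowhereZeroFlow φ} =
      Nat.card {ψ : _ → Γ // (D.contract (G.inducedEdges Uᶜ)).IsNowhereZeroFlow ψ} *
        Nat.card {ψ : _ → Γ // (D.contract (G.inducedEdges U)).IsNowhereZeroFlow ψ} := by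
  have := Fintype.ofFinite Γ
  let F₁ := G.inducedEdges Uᶜ
  let F₂ := G.inducedEdges U
  have hF₁ : Disjoint F₁ (G.edgeCut U) := disjoint_inducedEdges_compl_edgeCut U
  have hF₂ : Disjoint F₂ (G.edgeCut U) := disjoint_inducedEdges_edgeCut U
  rw [← D.sum_numExtensions ((↑) : G.edgeCut U → E),
    ← (D.contract F₁).sum_numExtensions (cutEdge hF₁),
    ← (D.contract F₂).sum_numExtensions (cutEdge hF₂), Nat.card_eq_fintype_card,
    Fintype.card_subtype]
  simp only [D.numExtensions_edgeCut U]
  apply card_mul_sum_mul_eq_sum_mul_sum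
  · exact fun x hx => D.numExtensions_cutEdge_eq_zero hU hF₁ fun h => hx (by simpa using h)
  · exact fun x hx => D.numExtensions_cutEdge_eq_zero hU hF₂ fun h => hx (by simpa using h)
  · exact fun x hx y hy => (D.contract F₁).numExtensions_eq_of_isZeroSumCircuit _
      (Finset.mem_filter.1 hx).2 (Finset.mem_filter.1 hy).2
  · exact fun x hx y hy => (D.contract F₂).numExtensions_eq_of_isZeroSumCircuit _
      (Finset.mem_filter.1 hx).2 (Finset.mem_filter.1 hy).2

end EdgeCut

end Orientation

open Polynomial

theorem eval_prod_mul_flowPoly [Finite V] [Finite E] [AddCommGroup Γ] [Finite Γ]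
    [Module (ZMod 2) Γ] (hΓ : 2 ≤ Module.finrank (ZMod 2) Γ) {U : Set V}
    (hU : (G.edgeCut U).ncard ≤ 3) :
    ((∏ i ∈ Finset.Icc 1 ((G.edgeCut U).ncard - 1), (X - C (i : ℝ))) * G.flowPoly).eval
        (Nat.card Γ : ℝ) =
      ((G.contract (G.inducedEdges Uᶜ)).flowPoly *
        (G.contract (G.inducedEdges U)).flowPoly).eval (Nat.card Γ : ℝ) := by
  classical
  have := Fintype.ofFinite E
  rw [← Nat.card_coe_set_eq, Nat.card_eq_fintype_card (α := G.edgeCut U)] at hU ⊢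
  let D := G.fstToSnd
  simp only [eval_mul, eval_prod, eval_sub, eval_X, eval_C,
    ← card_isZeroSumCircuit_of_card_le_three hU hΓ, D.eval_flowPoly,
    (D.contract (G.inducedEdges Uᶜ)).eval_flowPoly, (D.contract (G.inducedEdges U)).eval_flowPoly]
  exact_mod_cast D.card_isZeroSumCircuit_mul_card_isNowhereZeroFlow hU

end Multigraph

open Multigraph Polynomial in
theorem flowPoly_edge_cut_decomposition_general {V E : Type} [Finite V] [Finite E]
    (G : Multigraph V E) (U : Set V) (hU : (G.edgeCut U).ncard ≤ 3) :
    (∏ i ∈ Finset.Icc 1 ((G.edgeCut U).ncard - 1), (X - C (i : ℝ))) * G.flowPoly =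
      (G.contract (G.inducedEdges Uᶜ)).flowPoly * (G.contract (G.inducedEdges U)).flowPoly := by
  have hinfinite : ((fun n : ℕ => (2 ^ n : ℝ)) '' Set.Ici 2).Infinite :=
    (Set.Ici_infinite 2).image (pow_right_injective₀ two_pos (by norm_num)).injOn
  refine eq_of_infinite_eval_eq _ _ (hinfinite.mono ?_)
  rintro _ ⟨n, hn, rfl⟩
  simpa using G.eval_prod_mul_flowPoly (Γ := Fin n → ZMod 2) (by simpa using hn) hU

open Multigraph Polynomial in
/-- Jackson. If `S = (V₁,V₂)` is an edge-cut of a 2-edge-connected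
finite multigraph `G` with `2 ≤ |S| ≤ 3` and `Gᵢ` is obtained from `G` by contracting
all edges induced by `V_{3−i}`, then
`(q−1)(q−2)⋯(q−|S|+1)·F(G,q) = F(G₁,q)·F(G₂,q)`. -/
theorem flowPoly_edge_cut_decomposition {V E : Type} [Fintype V] [Fintype E]
    (G : Multigraph V E) (hconn : G.Connected) (hbl : G.Bridgeless)
    (V₁ V₂ : Set V) (hne₁ : V₁.Nonempty) (hne₂ : V₂.Nonempty)
    (hdisj : V₁ ∩ V₂ = ∅) (hcover : V₁ ∪ V₂ = Set.univ)
    (S : Set E)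
    (hS : S = {e | (G.fst e ∈ V₁ ∧ G.snd e ∈ V₂) ∨ (G.fst e ∈ V₂ ∧ G.snd e ∈ V₁)})
    (hcard₂ : 2 ≤ S.ncard) (hcard₃ : S.ncard ≤ 3) :
    (∏ i ∈ Finset.Icc 1 (S.ncard - 1), (X - C (i : ℝ))) * G.flowPoly =
      (G.contract {e | G.fst e ∈ V₂ ∧ G.snd e ∈ V₂}).flowPoly *
        (G.contract {e | G.fst e ∈ V₁ ∧ G.snd e ∈ V₁}).flowPoly := by
  obtain rfl : V₂ = V₁ᶜ :=
    (IsCompl.of_eq hdisj hcover).compl_eq.symm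
  subst hS
  exact flowPoly_edge_cut_decomposition_general G V₁ hcard₃
end

section
/- For every pair of real numbers a, b with 32/27 ≤ a < b, there exists a finite graph G and a real number q with a < q < b such that P(G,q) = 0. -/
/-
For a graph with two terminals, let `a(q)` and `b(q)` count the extensions of a `q`-colouring of the
terminals to the whole graph, for equal and for distinct terminal colours. The chromatic polynomial
is `q (a + (q - 1) b)`, so it vanishes where the ratio `z = a / b` equals `1 - q`. Parallel
connection multiplies ratios; series connection turns `z, w` into `(z w + q - 1) / (z + w + q - 2)`.
At a transcendental `q` no denominator vanishes.

If `q > 32 / 27`, some ratio is below `-1`. For `q ≥ 2`, complete graphs less an edge provide one.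
For `q < 2`, start from some `z < 0`: connecting two copies of the doubled graph in series lowers
`z` by at least `q - 32 / 27` as long as the new denominator is negative, and once it is positive
the new ratio exceeds `1` and its powers amplify `z`.

Take `K` parallel copies of a graph with ratio `-φ < -1` near `q`, and `E` copies of a complete
graph on `m + 2` vertices less the edge joining its terminals, of ratio `(x - 1) / (x - 1 - m)`.
For `K` odd and `E` even, the joint ratio is `1 - x` exactly when
`φ(x) ^ K = (x - 1) (m / (x - 1) - 1) ^ E`. For large `m` the quotient of `log φ(x)` and
`log (m / (x - 1) - 1)` is not constant in `x`, so some `E / K` lies between two of its values with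
room to spare for the factor `x - 1`, and the intermediate value theorem yields a solution `x`.
-/

open Polynomial Filter Topology Set

/-- `c` is a proper colouring of `G`. Gluing graphs along vertices acts on such predicates by simple
formulas, which is why colourings are not taken to be the bundled homomorphisms of
`SimpleGraph.Coloring`. -/
def IsProper {V C : Type*} (G : SimpleGraph V) (c : V → C) : Prop :=
  ∀ u v, G.Adj u v → c u ≠ c v

section IsProper

variable {V W C : Type*}

lemma isProper_sup {G H : SimpleGraph V} {c : V → C} :
    IsProper (G ⊔ H) c ↔ IsProper G c ∧ IsProper H c := by
  simp only [IsProper, SimpleGraph.sup_adj, or_imp, forall_and]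

lemma isProper_map {G : SimpleGraph V} {e : V → W} (he : Function.Injective e) {c : W → C} :
    IsProper (G.map e) c ↔ IsProper G (c ∘ e) := by
  constructor
  · exact fun h u v huv => h _ _ ⟨he.ne huv.ne, u, v, huv, rfl, rfl⟩
  · rintro h _ _ ⟨-, u, v, huv, rfl, rfl⟩
    exact h u v huv

lemma isProper_top {c : V → C} : IsProper ⊤ c ↔ Function.Injective c :=
  Function.injective_iff_pairwise_ne.symm

lemma isProper_completeBipartiteGraph {f : V → C} {g : W → C} :
    IsProper (completeBipartiteGraph V W) (Sum.elim f g) ↔ ∀ v w, f v ≠ g w := by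
  simp only [IsProper, completeBipartiteGraph_adj, Sum.forall]
  simpa using fun h w v hvw => h v w hvw.symm

lemma isProper_of_injective (G : SimpleGraph V) {c : V → C} (hc : Function.Injective c) :
    IsProper G c :=
  fun _ _ huv => hc.ne huv.ne

end IsProper

/-- The number of proper colourings of the two-terminal graph `G` whose terminals `Sum.inr 0` and
`Sum.inr 1` have colours `i` and `j`; the non-terminal vertices are `I`. -/
noncomputable def extensionCount {I C : Type*} (G : SimpleGraph (I ⊕ Fin 2)) (i j : C) : ℕ :=
  Nat.card {f : I → C // IsProper G (Sum.elim f ![i, j])}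

section Gadgets

variable {I J C : Type*}

lemma sumElim_inl_terminals (c : I ⊕ Fin 2 → C) :
    Sum.elim (c ∘ Sum.inl) ![c (.inr 0), c (.inr 1)] = c := by
  ext (x | t)
  · rfl
  · fin_cases t <;> rfl

/-- The parallel connection of two two-terminal graphs, identifying equally numbered terminals. -/
def parallelGraph (G : SimpleGraph (I ⊕ Fin 2)) (H : SimpleGraph (J ⊕ Fin 2)) :
    SimpleGraph ((I ⊕ J) ⊕ Fin 2) :=
  G.map (Sum.map Sum.inl id) ⊔ H.map (Sum.map Sum.inr id)

lemma isProper_parallelGraph {G : SimpleGraph (I ⊕ Fin 2)} {H : SimpleGraph (J ⊕ Fin 2)}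
    {f : I ⊕ J → C} {i j : C} :
    IsProper (parallelGraph G H) (Sum.elim f ![i, j]) ↔
      IsProper G (Sum.elim (f ∘ Sum.inl) ![i, j]) ∧
        IsProper H (Sum.elim (f ∘ Sum.inr) ![i, j]) := by
  rw [parallelGraph, isProper_sup,
    isProper_map (Sum.inl_injective.sumMap Function.injective_id),
    isProper_map (Sum.inr_injective.sumMap Function.injective_id),
    Sum.elim_comp_map, Sum.elim_comp_map, Function.comp_id]

theorem extensionCount_parallelGraph (G : SimpleGraph (I ⊕ Fin 2)) (H : SimpleGraph (J ⊕ Fin 2))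
    (i j : C) :
    extensionCount (parallelGraph G H) i j = extensionCount G i j * extensionCount H i j := by
  rw [extensionCount, extensionCount, extensionCount, ← Nat.card_prod]
  exact Nat.card_congr <| ((Equiv.sumArrowEquivProdArrow I J C).subtypeEquiv
    fun _ => isProper_parallelGraph).trans Equiv.subtypeProdEquivProd

/-- The series connection of two two-terminal graphs: the second terminal of the first is identified
with the first terminal of the second, and becomes the new non-terminal vertex `none`. -/
def seriesGraph (G : SimpleGraph (I ⊕ Fin 2)) (H : SimpleGraph (J ⊕ Fin 2)) :
    SimpleGraph (Option (I ⊕ J) ⊕ Fin 2) :=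
  G.map (Sum.elim (fun x => .inl (some (.inl x))) ![.inr 0, .inl none]) ⊔
    H.map (Sum.elim (fun x => .inl (some (.inr x))) ![.inl none, .inr 1])

lemma isProper_seriesGraph {G : SimpleGraph (I ⊕ Fin 2)} {H : SimpleGraph (J ⊕ Fin 2)}
    {f : Option (I ⊕ J) → C} {i j : C} :
    IsProper (seriesGraph G H) (Sum.elim f ![i, j]) ↔
      IsProper G (Sum.elim (fun x => f (some (.inl x))) ![i, f none]) ∧
        IsProper H (Sum.elim (fun x => f (some (.inr x))) ![f none, j]) := by
  rw [seriesGraph, isProper_sup, isProper_map, isProper_map]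
  · rw [Sum.comp_elim, Sum.comp_elim]
    congr! 3 <;> funext t <;> fin_cases t <;> rfl
  all_goals rintro (x | x) (y | y) <;> (try fin_cases x) <;> (try fin_cases y) <;> simp

theorem extensionCount_seriesGraph [Finite I] [Finite J] [Fintype C]
    (G : SimpleGraph (I ⊕ Fin 2)) (H : SimpleGraph (J ⊕ Fin 2)) (i j : C) :
    extensionCount (seriesGraph G H) i j =
      ∑ m, extensionCount G i m * extensionCount H m j := by
  simp only [extensionCount, ← Nat.card_prod]
  rw [← Nat.card_sigma]
  exact Nat.card_congr
    { toFun f := ⟨f.1 none, ⟨_, (isProper_seriesGraph.1 f.2).1⟩,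
        ⟨_, (isProper_seriesGraph.1 f.2).2⟩⟩
      invFun p := ⟨fun x => x.elim p.1 (Sum.elim p.2.1.1 p.2.2.1),
        isProper_seriesGraph.2 ⟨p.2.1.2, p.2.2.2⟩⟩
      left_inv f := by
        ext (_ | x | x) <;> rfl
      right_inv _ := rfl }

/-- The complete graph on the vertices `I` and two terminals, without the edge joining the
terminals. -/
def cliqueGraph (I : Type*) : SimpleGraph (I ⊕ Fin 2) :=
  (⊤ : SimpleGraph I).map Sum.inl ⊔ completeBipartiteGraph I (Fin 2)

lemma isProper_cliqueGraph {f : I → C} {i j : C} :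
    IsProper (cliqueGraph I) (Sum.elim f ![i, j]) ↔
      Function.Injective f ∧ ∀ x, f x ≠ i ∧ f x ≠ j := by
  rw [cliqueGraph, isProper_sup, isProper_map Sum.inl_injective, isProper_completeBipartiteGraph,
    Sum.elim_comp_inl, isProper_top]
  simp only [Fin.forall_fin_two, Matrix.cons_val_zero, Matrix.cons_val_one]

theorem extensionCount_cliqueGraph [Fintype I] [Fintype C] [DecidableEq C] (i j : C) :
    extensionCount (cliqueGraph I) i j =
      (Fintype.card C - ({i, j} : Finset C).card).descFactorial (Fintype.card I) := by
  let avoiding : {f : I → C // IsProper (cliqueGraph I) (Sum.elim f ![i, j])} ≃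
      (I ↪ ↥({i, j}ᶜ : Finset C)) :=
    { toFun f := ⟨fun x => ⟨f.1 x, by simpa using (isProper_cliqueGraph.1 f.2).2 x⟩,
        fun x y hxy => (isProper_cliqueGraph.1 f.2).1 (congrArg Subtype.val hxy)⟩
      invFun g := ⟨fun x => g x, isProper_cliqueGraph.2
        ⟨Subtype.val_injective.comp g.injective, fun x => by simpa using (g x).2⟩⟩ }
  rw [extensionCount, Nat.card_congr avoiding, Nat.card_eq_fintype_card,
    Fintype.card_embedding_eq, Fintype.card_coe, Finset.card_compl]

theorem card_isProper_eq_sum_extensionCount [Finite I] [Fintype C] (G : SimpleGraph (I ⊕ Fin 2)) :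
    Nat.card {c : I ⊕ Fin 2 → C // IsProper G c} = ∑ i : C, ∑ j : C, extensionCount G i j := by
  simp only [extensionCount]
  rw [← Fintype.sum_prod_type', ← Nat.card_sigma]
  exact Nat.card_congr
    { toFun c := ⟨(c.1 (.inr 0), c.1 (.inr 1)), c.1 ∘ Sum.inl, by
        rw [sumElim_inl_terminals]; exact c.2⟩
      invFun p := ⟨Sum.elim p.2.1 ![p.1.1, p.1.2], p.2.2⟩
      left_inv c := Subtype.ext (sumElim_inl_terminals c.1)
      right_inv _ := rfl }

end Gadgets

/-- `a` and `b` are the transfer polynomials of some finite two-terminal graph: a `k`-colouring of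
the terminals extends to the graph in `a(k)` ways if the two colours agree, else in `b(k)` ways.
With `s, t` the terminals, `a = P(G / st) / q` and `b = P(G + st) / (q (q - 1))`. -/
def IsTransferPair (a b : ℤ[X]) : Prop :=
  ∃ (I : Type) (_ : Finite I) (G : SimpleGraph (I ⊕ Fin 2)), ∀ (k : ℕ) (i j : Fin k),
    (extensionCount G i j : ℤ) = if i = j then a.eval (k : ℤ) else b.eval (k : ℤ)

lemma ite_eq_add_ite_sub {R : Type*} [AddCommGroup R] (p : Prop) [Decidable p] (x y : R) :
    (if p then x else y) = y + if p then x - y else 0 := by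
  split_ifs <;> simp

lemma sum_ite_mul_ite {C R : Type*} [Fintype C] [DecidableEq C] [CommRing R] (i j : C)
    (a b c d : R) :
    ∑ m, (if i = m then a else b) * (if m = j then c else d) =
      if i = j then a * c + (Fintype.card C - 1) * (b * d)
      else a * d + b * c + (Fintype.card C - 2) * (b * d) := by
  simp only [ite_eq_add_ite_sub _ a b, ite_eq_add_ite_sub _ c d, add_mul, mul_add,
    Finset.sum_add_distrib, Finset.sum_const, Finset.card_univ, nsmul_eq_mul, mul_ite, mul_zero,
    ite_mul, zero_mul, Finset.sum_ite_eq, Finset.sum_ite_eq', Finset.mem_univ, if_true]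
  split_ifs <;> ring

namespace IsTransferPair

variable {a b c d : ℤ[X]}

theorem parallel (hab : IsTransferPair a b) (hcd : IsTransferPair c d) :
    IsTransferPair (a * c) (b * d) := by
  obtain ⟨I, _, G, hG⟩ := hab
  obtain ⟨J, _, H, hH⟩ := hcd
  refine ⟨I ⊕ J, inferInstance, parallelGraph G H, fun k i j => ?_⟩
  rw [extensionCount_parallelGraph, Nat.cast_mul, hG, hH, ite_mul_ite, eval_mul, eval_mul]

theorem series (hab : IsTransferPair a b) (hcd : IsTransferPair c d) :
    IsTransferPair (a * c + (X - 1) * (b * d)) (a * d + b * c + (X - 2) * (b * d)) := by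
  obtain ⟨I, _, G, hG⟩ := hab
  obtain ⟨J, _, H, hH⟩ := hcd
  refine ⟨Option (I ⊕ J), inferInstance, seriesGraph G H, fun k i j => ?_⟩
  rw [extensionCount_seriesGraph]
  push_cast
  simp only [hG, hH, sum_ite_mul_ite, Fintype.card_fin, eval_add, eval_mul, eval_sub, eval_X,
    eval_one, eval_ofNat]

theorem clique (n : ℕ) :
    IsTransferPair ((descPochhammer ℤ n).comp (X - 1)) ((descPochhammer ℤ n).comp (X - 2)) := by
  refine ⟨Fin n, inferInstance, cliqueGraph (Fin n), fun k i j => ?_⟩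
  rw [extensionCount_cliqueGraph, ← descPochhammer_eval_eq_descFactorial,
    Nat.cast_sub (Finset.card_le_univ _)]
  split_ifs with hij
  · simp [hij, eval_comp]
  · simp [Finset.card_pair hij, eval_comp]

theorem pow (hab : IsTransferPair a b) (n : ℕ) : IsTransferPair (a ^ n) (b ^ n) := by
  induction n with
  | zero => simpa only [descPochhammer_zero, one_comp, pow_zero] using clique 0
  | succ n ih => simpa only [pow_succ] using ih.parallel hab

theorem exists_clique_succ (n : ℕ) :
    ∃ r : ℤ[X], IsTransferPair ((X - 1) * r) ((X - 2 - (n : ℤ[X])) * r) := by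
  refine ⟨(descPochhammer ℤ n).comp (X - 2), ?_⟩
  convert clique (n + 1) using 1
  · rw [descPochhammer_succ_left, mul_comp, X_comp, comp_assoc, sub_comp, X_comp, one_comp]
    ring_nf
  · rw [descPochhammer_succ_right, mul_comp, sub_comp, X_comp, natCast_comp, mul_comm]

theorem exists_eval_pos (hab : IsTransferPair a b) :
    ∃ k : ℕ, 0 ≤ a.eval (k : ℤ) ∧ 0 < b.eval (k : ℤ) := by
  obtain ⟨I, _, G, hG⟩ := hab
  obtain ⟨k, ⟨e⟩⟩ := Finite.exists_equiv_fin (I ⊕ Fin 2)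
  set i := e (.inr 0)
  set j := e (.inr 1)
  have hij : i ≠ j := e.injective.ne (by simp)
  have count_pos : 0 < extensionCount G i j :=
    Nat.card_pos_iff.2 ⟨⟨e ∘ Sum.inl, by
      rw [sumElim_inl_terminals]; exact isProper_of_injective G e.injective⟩, inferInstance⟩
  refine ⟨k, ?_, ?_⟩
  · have h := hG k i i
    rw [if_pos rfl] at h
    exact h ▸ Nat.cast_nonneg _
  · have h := hG k i j
    rw [if_neg hij] at h
    exact h ▸ Nat.cast_pos.2 count_pos

theorem exists_card_coloring (hab : IsTransferPair a b) :
    ∃ (n : ℕ) (G : SimpleGraph (Fin n)), ∀ k : ℕ,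
      (X * (a + (X - 1) * b) : ℤ[X]).eval (k : ℤ) =
        Nat.card {f : Fin n → Fin k // ∀ u v, G.Adj u v → f u ≠ f v} := by
  obtain ⟨I, _, G, hG⟩ := hab
  obtain ⟨n, ⟨e⟩⟩ := Finite.exists_equiv_fin (I ⊕ Fin 2)
  refine ⟨n, G.map e, fun k => ?_⟩
  have relabel : {f : Fin n → Fin k // IsProper (G.map e) f} ≃
      {c : I ⊕ Fin 2 → Fin k // IsProper G c} :=
    (e.symm.arrowCongr (.refl _)).subtypeEquiv fun _ => isProper_map e.injective
  have row_sum (i : Fin k) : ∑ j : Fin k, (extensionCount G i j : ℤ) =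
      a.eval (k : ℤ) + (k - 1) * b.eval (k : ℤ) := by
    simp only [hG, ite_eq_add_ite_sub _ (a.eval _), Finset.sum_add_distrib, Finset.sum_const,
      Finset.card_univ, Fintype.card_fin, nsmul_eq_mul, Finset.sum_ite_eq, Finset.mem_univ, if_true]
    ring
  change _ = (Nat.card {f : Fin n → Fin k // IsProper (G.map e) f} : ℤ)
  rw [Nat.card_congr relabel, card_isProper_eq_sum_extensionCount]
  push_cast
  simp only [row_sum, Finset.sum_const, Finset.card_univ, Fintype.card_fin, nsmul_eq_mul, eval_mul,
    eval_add, eval_sub, eval_X, eval_one]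

end IsTransferPair


lemma aeval_ne_zero_of_eval_ne_zero {R A : Type*} [CommRing R] [Ring A] [Algebra R A] {x : A}
    (hx : Transcendental R x) {p : R[X]} {r : R} (hp : p.eval r ≠ 0) : aeval x p ≠ 0 :=
  fun h => hp (by rw [transcendental_iff.1 hx p h, eval_zero])

theorem IsTransferPair.aeval_right_ne_zero {a b : ℤ[X]} (hab : IsTransferPair a b) {q : ℝ}
    (hq : Transcendental ℤ q) : aeval q b ≠ 0 := by
  obtain ⟨k, -, hb⟩ := hab.exists_eval_pos
  exact aeval_ne_zero_of_eval_ne_zero hq hb.ne'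

/-- `z` is the ratio `a(q) / b(q)` of the transfer polynomials of some two-terminal graph at `q`. It
measures how much more likely a random `q`-colouring is to give the terminals one particular common
colour than one particular pair of distinct colours. -/
def IsTransferRatio (q z : ℝ) : Prop :=
  ∃ a b : ℤ[X], IsTransferPair a b ∧ aeval q b ≠ 0 ∧ aeval q a = z * aeval q b

-- The map `z ↦ (z ^ 4 + q - 1) / (2 * z ^ 2 + q - 2)` of `doubled_series_le` fixes `z ≠ 1` exactly
-- when `q = (z - 1) ^ 2 * (z + 1)`; the maximum over `z ≤ 0`, at `z = -1 / 3`, is where `32 / 27`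
-- comes from.
lemma sq_sub_one_mul_add_one_le {x : ℝ} (hx : x ≤ 0) : (x - 1) ^ 2 * (x + 1) ≤ 32 / 27 := by
  have : 0 ≤ (x + 1 / 3) ^ 2 * (5 / 3 - x) := mul_nonneg (sq_nonneg _) (by linarith)
  linarith

lemma doubled_series_le {q z : ℝ} (hq : 32 / 27 ≤ q) (hz : z ≤ 0) (hdenom : 2 * z ^ 2 + q - 2 < 0) :
    (z ^ 2 * z ^ 2 + q - 1) / (z ^ 2 + z ^ 2 + q - 2) ≤ z - (q - 32 / 27) := by
  have gap : q - 32 / 27 ≤ (1 - z) * (q - (z - 1) ^ 2 * (z + 1)) := by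
    nlinarith [sq_sub_one_mul_add_one_le hz]
  rw [div_le_iff_of_neg (by linarith)]
  nlinarith [mul_nonneg (sub_nonneg.2 hq) (sq_nonneg z)]

namespace IsTransferRatio

variable {q z w : ℝ}

theorem mul (hz : IsTransferRatio q z) (hw : IsTransferRatio q w) : IsTransferRatio q (z * w) := by
  obtain ⟨a, b, hab, hb, ha⟩ := hz
  obtain ⟨c, d, hcd, hd, hc⟩ := hw
  refine ⟨a * c, b * d, hab.parallel hcd, ?_, ?_⟩
  · rw [map_mul]
    exact mul_ne_zero hb hd
  · rw [map_mul, map_mul, ha, hc]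
    ring

theorem pow (hz : IsTransferRatio q z) (n : ℕ) : IsTransferRatio q (z ^ n) := by
  obtain ⟨a, b, hab, hb, ha⟩ := hz
  refine ⟨a ^ n, b ^ n, hab.pow n, ?_, ?_⟩
  · rw [map_pow]
    exact pow_ne_zero n hb
  · rw [map_pow, map_pow, ha, mul_pow]

theorem ne_neg_one (hq : Transcendental ℤ q) (hz : IsTransferRatio q z) : z ≠ -1 := by
  obtain ⟨a, b, hab, -, ha⟩ := hz
  obtain ⟨k, hak, hbk⟩ := hab.exists_eval_pos
  have sum_ne_zero : aeval q (a + b) ≠ 0 :=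
    aeval_ne_zero_of_eval_ne_zero hq (by rw [eval_add]; positivity)
  rintro rfl
  exact sum_ne_zero (by rw [map_add, ha]; ring)

theorem series (hq : Transcendental ℤ q) (hz : IsTransferRatio q z) (hw : IsTransferRatio q w) :
    z + w + q - 2 ≠ 0 ∧ IsTransferRatio q ((z * w + q - 1) / (z + w + q - 2)) := by
  obtain ⟨a, b, hab, -, ha⟩ := hz
  obtain ⟨c, d, hcd, -, hc⟩ := hw
  have hser := hab.series hcd
  have right_ne_zero := hser.aeval_right_ne_zero hq
  have right_eq : aeval q (a * d + b * c + (X - 2) * (b * d)) =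
      (z + w + q - 2) * (aeval q b * aeval q d) := by
    simp only [map_add, map_mul, map_sub, aeval_X, map_ofNat, ha, hc]
    ring
  have denom_ne_zero := left_ne_zero_of_mul (right_eq ▸ right_ne_zero)
  refine ⟨denom_ne_zero, _, _, hser, right_ne_zero, ?_⟩
  rw [right_eq, ← mul_assoc (_ / _), div_mul_cancel₀ _ denom_ne_zero]
  simp only [map_add, map_mul, map_sub, aeval_X, map_one, ha, hc]
  ring

theorem clique (hq : Transcendental ℤ q) (n : ℕ) :
    q - 2 - n ≠ 0 ∧ IsTransferRatio q ((q - 1) / (q - 2 - n)) := by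
  obtain ⟨r, hr⟩ := IsTransferPair.exists_clique_succ n
  have right_ne_zero := hr.aeval_right_ne_zero hq
  have right_eq : aeval q ((X - 2 - (n : ℤ[X])) * r) = (q - 2 - n) * aeval q r := by
    simp only [map_mul, map_sub, aeval_X, map_ofNat, map_natCast]
  have denom_ne_zero := left_ne_zero_of_mul (right_eq ▸ right_ne_zero)
  refine ⟨denom_ne_zero, _, _, hr, right_ne_zero, ?_⟩
  rw [right_eq, ← mul_assoc, div_mul_cancel₀ _ denom_ne_zero]
  simp only [map_mul, map_sub, aeval_X, map_one]

-- Doubling `z` and connecting two copies in series gives a ratio `y > 1`, since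
-- `(z ^ 4 + q - 1) - (2 * z ^ 2 + q - 2) = (z ^ 2 - 1) ^ 2`; the ratios `z * y ^ k` tend to `-∞`.
theorem exists_lt_neg_one_of_denom_pos (hq : Transcendental ℤ q) (hz : IsTransferRatio q z)
    (hz0 : z < 0) (hdenom : 0 < 2 * z ^ 2 + q - 2) : ∃ w < -1, IsTransferRatio q w := by
  rcases lt_or_ge z (-1) with hz1 | hz1
  · exact ⟨z, hz1, hz⟩
  have hz1 : -1 < z := hz1.lt_of_ne' (hz.ne_neg_one hq)
  set y := (z ^ 2 * z ^ 2 + q - 1) / (z ^ 2 + z ^ 2 + q - 2)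
  have hy : IsTransferRatio q y := ((hz.pow 2).series hq (hz.pow 2)).2
  have one_lt_y : 1 < y := by
    have : 0 < 1 - z ^ 2 := by nlinarith
    rw [one_lt_div (by linarith)]
    nlinarith
  obtain ⟨k, hk⟩ := pow_unbounded_of_one_lt (-1 / z) one_lt_y
  refine ⟨z * y ^ k, ?_, hz.mul (hy.pow k)⟩
  rwa [div_lt_iff_of_neg hz0, mul_comm] at hk

theorem exists_lt_neg_one_of_lt_two (hq : Transcendental ℤ q) (hq1 : 32 / 27 < q) (hq2 : q < 2) :
    ∃ w < -1, IsTransferRatio q w := by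
  by_contra! hnone
  have denom_neg {z : ℝ} (hz : IsTransferRatio q z) (hz0 : z < 0) : 2 * z ^ 2 + q - 2 < 0 := by
    have denom_ne_zero := ((hz.pow 2).series hq (hz.pow 2)).1
    by_contra! h
    obtain ⟨w, hw, hw'⟩ := hz.exists_lt_neg_one_of_denom_pos hq hz0
      (h.lt_of_ne' fun h0 => denom_ne_zero (by linarith))
    exact hnone w hw hw'
  have exists_le (n : ℕ) : ∃ z, IsTransferRatio q z ∧ z < 0 ∧ z ≤ -(n * (q - 32 / 27)) := by
    induction n with
    | zero =>
      have hz : (q - 1) / (q - 2 - (0 : ℕ)) < 0 :=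
        div_neg_of_pos_of_neg (by linarith) (by push_cast; linarith)
      exact ⟨_, (clique hq 0).2, hz, by simpa using hz.le⟩
    | succ n ih =>
      obtain ⟨z, hz, hz0, hzn⟩ := ih
      have hle := doubled_series_le hq1.le hz0.le (denom_neg hz hz0)
      refine ⟨_, ((hz.pow 2).series hq (hz.pow 2)).2, by linarith, hle.trans ?_⟩
      push_cast
      linarith
  obtain ⟨n, hn⟩ := exists_nat_gt (1 / (q - 32 / 27))
  rw [div_lt_iff₀ (by linarith)] at hn
  obtain ⟨z, hz, -, hzn⟩ := exists_le n
  exact hnone z (by linarith) hz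

theorem exists_lt_neg_one_of_two_le (hq : Transcendental ℤ q) (hq2 : 2 ≤ q) :
    ∃ w < -1, IsTransferRatio q w := by
  obtain ⟨denom_ne_zero, hclique⟩ := clique hq ⌈q - 2⌉₊
  have := Nat.le_ceil (q - 2)
  have := Nat.ceil_lt_add_one (sub_nonneg.2 hq2)
  have denom_neg : q - 2 - ⌈q - 2⌉₊ < 0 := denom_ne_zero.lt_of_le (by linarith)
  refine ⟨_, ?_, hclique⟩
  rw [div_lt_iff_of_neg denom_neg]
  linarith

theorem exists_lt_neg_one (hq : Transcendental ℤ q) (hq1 : 32 / 27 < q) :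
    ∃ w < -1, IsTransferRatio q w := by
  rcases lt_or_ge q 2 with hq2 | hq2
  · exact exists_lt_neg_one_of_lt_two hq hq1 hq2
  · exact exists_lt_neg_one_of_two_le hq hq2

end IsTransferRatio

lemma exists_odd_even_between {x y : ℝ} (hx : 0 < x) (hxy : x < y) (c d : ℝ) :
    ∃ K E : ℕ, Odd K ∧ Even E ∧ K * x - c < E ∧ E < K * y - d := by
  obtain ⟨N, hN⟩ := exists_nat_gt (max ((2 + d - c) / (y - x)) (c / x))
  obtain ⟨hNgap, hNc⟩ := max_lt_iff.1 hN
  rw [div_lt_iff₀ (sub_pos.2 hxy)] at hNgap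
  rw [div_lt_iff₀ hx] at hNc
  set t := ((2 * N + 1) * x - c) / 2
  have ht : 0 ≤ t := by
    have := mul_nonneg N.cast_nonneg hx.le (α := ℝ)
    simp only [t]; linarith
  have floor_le := Nat.floor_le ht
  have lt_floor := Nat.lt_floor_add_one t
  refine ⟨2 * N + 1, 2 * (⌊t⌋₊ + 1), odd_two_mul_add_one N, even_two_mul _, ?_, ?_⟩ <;>
    push_cast <;> simp only [t] at *
  · linarith
  · have := mul_nonneg N.cast_nonneg (sub_nonneg.2 hxy.le) (α := ℝ)
    linarith

theorem exists_odd_even_mul_eq {X : Type*} [TopologicalSpace X] {S : Set X} (hS : IsPreconnected S)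
    {L F g : X → ℝ} (hL : ContinuousOn L S) (hF : ContinuousOn F S) (hg : ContinuousOn g S)
    {s l : X} (hs : s ∈ S) (hl : l ∈ S) (hLs : 0 < L s) (hLl : 0 < L l) (hFs : 0 < F s)
    (hFl : 0 < F l) (hsl : L s / F s ≠ L l / F l) :
    ∃ K E : ℕ, Odd K ∧ Even E ∧ ∃ x ∈ S, K * L x = E * F x + g x := by
  wlog hlt : L s / F s < L l / F l generalizing s l
  · exact this hl hs hLl hLs hFl hFs hsl.symm (hsl.lt_or_gt.resolve_left hlt)
  obtain ⟨K, E, hK, hE, hs_lt, lt_hl⟩ := exists_odd_even_between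
    (div_pos hLs hFs) hlt (g s / F s) (g l / F l)
  rw [mul_div_assoc', ← sub_div, div_lt_iff₀ hFs] at hs_lt
  rw [mul_div_assoc', ← sub_div, lt_div_iff₀ hFl] at lt_hl
  refine ⟨K, E, hK, hE, hS.intermediate_value₂ hs hl (continuousOn_const.mul hL)
    ((continuousOn_const.mul hF).add hg) (by linarith) (by linarith)⟩

lemma tendsto_log_div_sub_one_atTop {l : ℝ} (hl : 0 < l) :
    Tendsto (fun m => Real.log (m / l - 1)) atTop atTop :=
  Real.tendsto_log_atTop.comp <|
    tendsto_atTop_add_const_right _ (-1) (tendsto_id.atTop_div_const hl)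

lemma tendsto_log_div_sub_one_sub {s l : ℝ} (hs : 0 < s) (hl : 0 < l) :
    Tendsto (fun m => Real.log (m / s - 1) - Real.log (m / l - 1)) atTop
      (𝓝 (Real.log (l / s))) := by
  have inv_sub_inv {c : ℝ} : Tendsto (fun m : ℝ => c⁻¹ - m⁻¹) atTop (𝓝 c⁻¹) := by
    simpa only [sub_zero] using (tendsto_inv_atTop_zero (𝕜 := ℝ)).const_sub c⁻¹
  have hquot : Tendsto (fun m : ℝ => (s⁻¹ - m⁻¹) / (l⁻¹ - m⁻¹)) atTop (𝓝 (l / s)) := by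
    simpa only [inv_div_inv, Pi.div_def] using inv_sub_inv.div inv_sub_inv (inv_ne_zero hl.ne')
  refine ((Real.continuousAt_log (div_pos hl hs).ne').tendsto.comp hquot).congr' ?_
  filter_upwards [eventually_gt_atTop s, eventually_gt_atTop l] with m hms hml
  have hm : m ≠ 0 := (hs.trans hms).ne'
  have sub_one_ne_zero {c : ℝ} (hc : 0 < c) (hcm : c < m) : m / c - 1 ≠ 0 :=
    (sub_pos.2 ((one_lt_div hc).2 hcm)).ne'
  rw [← Real.log_div (sub_one_ne_zero hs hms) (sub_one_ne_zero hl hml), Function.comp_apply,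
    ← mul_div_mul_left _ _ hm, mul_sub, mul_sub, mul_inv_cancel₀ hm, ← div_eq_mul_inv,
    ← div_eq_mul_inv]

lemma tendsto_log_div_sub_one_div {s l : ℝ} (hs : 0 < s) (hl : 0 < l) :
    Tendsto (fun m => Real.log (m / s - 1) / Real.log (m / l - 1)) atTop (𝓝 1) := by
  have hlog := tendsto_log_div_sub_one_atTop hl
  have hquot := ((tendsto_log_div_sub_one_sub hs hl).div_atTop hlog).const_add 1
  rw [add_zero] at hquot
  refine hquot.congr' ?_
  filter_upwards [hlog.eventually_gt_atTop 0] with m hm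
  rw [sub_div, div_self hm.ne', add_sub_cancel]

-- The quotient of the two logarithms tends to `1`, which settles all cases but `A = B`; there it is
-- greater than `1`.
theorem eventually_div_log_ne {s l A B : ℝ} (hs : 0 < s) (hsl : s < l) (hB : B ≠ 0) :
    ∀ᶠ m in atTop, A / Real.log (m / s - 1) ≠ B / Real.log (m / l - 1) := by
  have hl := hs.trans hsl
  have ratio_ne : ∀ᶠ m in atTop, Real.log (m / s - 1) / Real.log (m / l - 1) ≠ A / B := by
    rcases eq_or_ne A B with rfl | hAB
    · filter_upwards [eventually_gt_atTop (2 * l)] with m hm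
      have one_lt : 1 < m / l - 1 := by linarith [(lt_div_iff₀ hl).2 hm]
      have hlt : m / l - 1 < m / s - 1 :=
        sub_lt_sub_right (div_lt_div_of_pos_left (by linarith) hs hsl) 1
      rw [div_self hB]
      exact ((one_lt_div (Real.log_pos one_lt)).2 (Real.log_lt_log (by linarith) hlt)).ne'
    · refine (tendsto_log_div_sub_one_div hs hl).eventually_ne fun h => hAB ?_
      rw [eq_comm, div_eq_one_iff_eq hB] at h
      exact h
  filter_upwards [ratio_ne, (tendsto_log_div_sub_one_atTop hs).eventually_gt_atTop 0,
    (tendsto_log_div_sub_one_atTop hl).eventually_gt_atTop 0] with m hne hFs hFl heq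
  rw [div_eq_div_iff hFs.ne' hFl.ne'] at heq
  exact hne ((div_eq_div_iff hFl.ne' hB).2 (by linarith))

theorem exists_odd_even_pow_eq {s l : ℝ} (hs : 1 < s) (hsl : s < l) {φ : ℝ → ℝ}
    (hφ : ContinuousOn φ (Icc s l)) (one_lt_φ : ∀ x ∈ Icc s l, 1 < φ x) :
    ∃ K E n : ℕ, Odd K ∧ Even E ∧
      ∃ x ∈ Icc s l, φ x ^ K = (x - 1) * ((n + 1) / (x - 1) - 1) ^ E := by
  have hs_mem := left_mem_Icc.2 hsl.le
  have hl_mem := right_mem_Icc.2 hsl.le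
  have sub_one_pos {x : ℝ} (hx : x ∈ Icc s l) : 0 < x - 1 := by linarith [hx.1]
  have log_φ_pos {x : ℝ} (hx : x ∈ Icc s l) : 0 < Real.log (φ x) := Real.log_pos (one_lt_φ x hx)
  have hm := (eventually_div_log_ne (A := Real.log (φ s)) (sub_one_pos hs_mem)
    (sub_lt_sub_right hsl 1) (log_φ_pos hl_mem).ne').and (eventually_gt_atTop (2 * (l - 1)))
  obtain ⟨n, hne, hn⟩ :=
    ((tendsto_atTop_add_const_right _ 1 tendsto_natCast_atTop_atTop).eventually hm).exists
  have one_lt_base {x : ℝ} (hx : x ∈ Icc s l) : 1 < ((n : ℝ) + 1) / (x - 1) - 1 := by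
    have := (lt_div_iff₀ (sub_one_pos hx)).2 (by linarith [hx.2] : 2 * (x - 1) < (n : ℝ) + 1)
    linarith
  have sub_one_cont : ContinuousOn (fun x : ℝ => x - 1) (Icc s l) := by fun_prop
  have log_base_cont : ContinuousOn (fun x : ℝ => Real.log ((n + 1) / (x - 1) - 1)) (Icc s l) :=
    ((continuousOn_const.div sub_one_cont fun _ hx => (sub_one_pos hx).ne').sub
      continuousOn_const).log fun _ hx => (zero_lt_one.trans (one_lt_base hx)).ne'
  obtain ⟨K, E, hK, hE, x, hx, hxeq⟩ := exists_odd_even_mul_eq isPreconnected_Icc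
    (hφ.log fun x hx => (zero_lt_one.trans (one_lt_φ x hx)).ne') log_base_cont
    (sub_one_cont.log fun _ hx => (sub_one_pos hx).ne') hs_mem hl_mem
    (log_φ_pos hs_mem) (log_φ_pos hl_mem) (Real.log_pos (one_lt_base hs_mem))
    (Real.log_pos (one_lt_base hl_mem)) hne
  have φ_pos := zero_lt_one.trans (one_lt_φ x hx)
  have base_pos := zero_lt_one.trans (one_lt_base hx)
  refine ⟨K, E, n, hK, hE, x, hx, Real.log_injOn_pos (pow_pos φ_pos K)
    (mul_pos (sub_one_pos hx) (pow_pos base_pos E)) ?_⟩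
  rw [Real.log_mul (sub_one_pos hx).ne' (pow_pos base_pos E).ne', Real.log_pow, Real.log_pow, hxeq,
    add_comm]

theorem IsTransferPair.exists_aeval_eq_zero {a b : ℤ[X]} (hab : IsTransferPair a b) {s l : ℝ}
    (hs : 1 < s) (hsl : s < l)
    (one_lt : ∀ x ∈ Icc s l, aeval x b ≠ 0 ∧ 1 < -(aeval x a / aeval x b)) :
    ∃ c d : ℤ[X], IsTransferPair c d ∧ ∃ x ∈ Icc s l, aeval x (X * (c + (X - 1) * d)) = 0 := by
  obtain ⟨K, E, n, hK, hE, x, hx, hpow⟩ := exists_odd_even_pow_eq hs hsl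
    (a.continuous_aeval.continuousOn.div b.continuous_aeval.continuousOn
      fun x hx => (one_lt x hx).1).neg fun x hx => (one_lt x hx).2
  obtain ⟨r, hr⟩ := exists_clique_succ n
  refine ⟨_, _, (hab.pow K).parallel (hr.pow E), x, hx, ?_⟩
  have hb := (one_lt x hx).1
  have hx1 : x - 1 ≠ 0 := by linarith [hx.1]
  have base_eq : (n + 1) / (x - 1) - 1 = -((x - 2 - n) / (x - 1)) := by
    field_simp
    ring
  rw [Pi.neg_apply, Pi.div_apply, hK.neg_pow, div_pow, base_eq, hE.neg_pow, div_pow] at hpow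
  field_simp at hpow
  simp only [map_add, map_mul, map_pow, map_sub, aeval_X, map_one, map_ofNat, map_natCast, mul_pow]
  linear_combination -x * aeval x r ^ E * hpow

theorem IsTransferRatio.exists_aeval_eq_zero {q z t : ℝ} (hz : IsTransferRatio q z) (hz1 : z < -1)
    (hq : 1 < q) (hqt : q < t) :
    ∃ c d : ℤ[X], IsTransferPair c d ∧ ∃ x ∈ Ico q t, aeval x (X * (c + (X - 1) * d)) = 0 := by
  obtain ⟨a, b, hab, hb, ha⟩ := hz
  have ratio_lt : 1 < -(aeval q a / aeval q b) := by
    rw [ha, mul_div_cancel_right₀ _ hb]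
    linarith
  have ratio_cont : ContinuousAt (fun x : ℝ => -(aeval x a / aeval x b)) q :=
    (a.continuous_aeval.continuousAt.div b.continuous_aeval.continuousAt hb).neg
  have one_lt_near : ∀ᶠ x in 𝓝 q, x < t ∧ aeval x b ≠ 0 ∧ 1 < -(aeval x a / aeval x b) :=
    (eventually_lt_nhds hqt).and <| (b.continuous_aeval.continuousAt.eventually_ne hb).and <|
      ratio_cont.eventually_const_lt ratio_lt
  obtain ⟨l, hql, hl⟩ := mem_nhdsGE_iff_exists_Icc_subset.1 (mem_nhdsWithin_of_mem_nhds one_lt_near)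
  obtain ⟨c, d, hcd, x, hx, hroot⟩ := hab.exists_aeval_eq_zero hq hql fun x hx => (hl hx).2
  exact ⟨c, d, hcd, x, ⟨hx.1, (hl hx).1⟩, hroot⟩

/-- Thomassen. For every pair of real numbers `a, b` with
`32/27 ≤ a < b`, there exist a finite graph `G` (with chromatic polynomial `P`, the
unique polynomial counting proper colourings at every positive integer) and a real
number `q` with `a < q < b` such that `P(G,q) = 0`. -/
theorem exists_chromatic_root_in_interval (a b : ℝ) (ha : 32 / 27 ≤ a) (hab : a < b) :
    ∃ (n : ℕ) (G : SimpleGraph (Fin n)) (P : Polynomial ℝ),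
      (∀ k : ℕ, 0 < k →
        P.eval (k : ℝ) =
          Nat.card {f : Fin n → Fin k // ∀ u v, G.Adj u v → f u ≠ f v}) ∧
      ∃ q : ℝ, a < q ∧ q < b ∧ P.eval q = 0 := by
  obtain ⟨q, hq, haq, hqb⟩ := (Algebraic.countable ℤ ℝ).dense_compl ℝ |>.exists_between hab
  obtain ⟨z, hz, hratio⟩ := IsTransferRatio.exists_lt_neg_one hq (ha.trans_lt haq)
  obtain ⟨c, d, hcd, x, ⟨hqx, hxb⟩, hroot⟩ :=
    hratio.exists_aeval_eq_zero hz (by linarith : 1 < q) hqb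
  obtain ⟨n, G, hG⟩ := hcd.exists_card_coloring
  refine ⟨n, G, (X * (c + (X - 1) * d)).map (algebraMap ℤ ℝ), fun k _ => ?_,
    x, haq.trans_le hqx, hxb, by rw [eval_map_algebraMap, hroot]⟩
  rw [eval_natCast_map, algebraMap_int_eq, eq_intCast]
  exact_mod_cast hG k
end

section
/- If G is a finite loopless planar graph, then P(G,q) > 0 for every real number q ≥ 5. -/
/-- `H` is a minor of `G`: there is a family of nonempty, pairwise-disjoint,
connected branch sets in `G` indexed by the vertices of `H`, such that adjacent
vertices of `H` have adjacent branch sets. -/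
def SimpleGraph.HasMinor {V W : Type} (G : SimpleGraph V) (H : SimpleGraph W) : Prop :=
  ∃ B : W → Set V,
    (∀ w, (G.induce (B w)).Connected) ∧
    (Pairwise fun w w' => Disjoint (B w) (B w')) ∧
    ∀ ⦃w w'⦄, H.Adj w w' → ∃ u ∈ B w, ∃ v ∈ B w', G.Adj u v

/-!
Let `q ≥ 5` and suppose that `P(H, q) > 0` for all minors `H` of `G` with fewer vertices. By
deletion–contraction `P(·, q)` then strictly increases whenever an edge of `G` is deleted, and
deleting in turn the edges at a vertex `v` gives
`P(G, q) = q P(G - v, q) - ∑ P(Gᵢ, q)`, where the `deg v` graphs `Gᵢ` on the vertex set of `G - v`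
are contractions containing `G - v`. Each `P(Gᵢ, q)` is at most `P(G - v, q)`, so
`P(G, q) ≥ (q - deg v) P(G - v, q)`, strictly unless the neighbours of `v` form a clique.

A nonempty graph on `n` vertices without a `K₅` minor has at most `3n - 2` edges: a spanning
subgraph with `3n - 1` edges has a vertex of degree at most `5`, which is isolated or lies on an
edge in at most two triangles, so deleting the vertex or contracting the edge loses at most three
edges. Hence `v` can be chosen with `deg v ≤ 5`, and then `deg v ≤ 3` if the neighbours of `v` form
a clique. Either way `P(G, q) > 0`.
-/

open SimpleGraph Finset Polynomial

section Minor

variable {U V W : Type} {F : SimpleGraph U} {G : SimpleGraph V} {H : SimpleGraph W}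

theorem connected_induce_singleton {V : Type*} (G : SimpleGraph V) (v : V) :
    (G.induce {v}).Connected :=
  (connected_iff _).2 ⟨Preconnected.of_subsingleton, ⟨⟨v, rfl⟩⟩⟩

theorem hasMinor_of_isContained (h : H ⊑ G) : G.HasMinor H := by
  obtain ⟨f⟩ := h
  exact ⟨fun w => {f w}, fun w => connected_induce_singleton G (f w),
    fun _ _ hw => Set.disjoint_singleton.2 (f.injective.ne hw),
    fun w w' hw => ⟨f w, rfl, f w', rfl, f.toHom.map_adj hw⟩⟩

theorem cliqueFree_of_not_hasMinor_top {n : ℕ} (hG : ¬ G.HasMinor (⊤ : SimpleGraph (Fin n))) :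
    G.CliqueFree n := by
  contrapose! hG
  exact hasMinor_of_isContained ((not_cliqueFree_iff_top_isContained n).1 hG)

theorem card_le_of_hasMinor [Finite V] (h : G.HasMinor H) : Nat.card W ≤ Nat.card V := by
  obtain ⟨B, hconn, hdisj, -⟩ := h
  choose f hf using fun w => Set.nonempty_coe_sort.1 (hconn w).nonempty
  refine Nat.card_le_card_of_injective f fun w w' hww' => ?_
  by_contra hne
  exact Set.disjoint_left.1 (hdisj hne) (hf w) (hww' ▸ hf w')

theorem connected_induce_biUnion {B : V → Set U} (hB : ∀ v, (F.induce (B v)).Connected)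
    (hadj : ∀ ⦃v v'⦄, G.Adj v v' → ∃ x ∈ B v, ∃ y ∈ B v', F.Adj x y) {s : Set V}
    (hs : (G.induce s).Connected) : (F.induce (⋃ v ∈ s, B v)).Connected := by
  have mem {v : V} (hv : v ∈ s) {x : U} (hx : x ∈ B v) : x ∈ ⋃ v ∈ s, B v :=
    Set.mem_biUnion hv hx
  have reachable_of_mem {v : V} (hv : v ∈ s) {x y : U} (hx : x ∈ B v) (hy : y ∈ B v) :
      (F.induce (⋃ v ∈ s, B v)).Reachable ⟨x, mem hv hx⟩ ⟨y, mem hv hy⟩ :=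
    ((hB v).preconnected ⟨x, hx⟩ ⟨y, hy⟩).map (induceHomOfLE F (Set.subset_biUnion_of_mem hv)).toHom
  obtain ⟨v₀, hv₀⟩ := Set.nonempty_coe_sort.1 hs.nonempty
  obtain ⟨x₀, hx₀⟩ := Set.nonempty_coe_sort.1 (hB v₀).nonempty
  have reachable_of_reachable (v : s) (h : (G.induce s).Reachable ⟨v₀, hv₀⟩ v) :
      ∀ x (hx : x ∈ B v),
        (F.induce (⋃ v ∈ s, B v)).Reachable ⟨x₀, mem hv₀ hx₀⟩ ⟨x, mem v.2 hx⟩ := by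
    rw [reachable_iff_reflTransGen] at h
    induction h with
    | refl => exact fun x hx => reachable_of_mem hv₀ hx₀ hx
    | @tail v w _ hvw ih =>
      intro x hx
      obtain ⟨y, hy, z, hz, hyz⟩ := hadj hvw
      have hyz' : (F.induce (⋃ v ∈ s, B v)).Adj ⟨y, mem v.2 hy⟩ ⟨z, mem w.2 hz⟩ := hyz
      exact ((ih y hy).trans hyz'.reachable).trans (reachable_of_mem w.2 hz hx)
  refine connected_iff_exists_forall_reachable _ |>.2 ⟨⟨x₀, mem hv₀ hx₀⟩, fun ⟨x, hx⟩ => ?_⟩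
  obtain ⟨v, hv, hxv⟩ := Set.mem_iUnion₂.1 hx
  exact reachable_of_reachable ⟨v, hv⟩ (hs.preconnected _ _) x hxv

theorem hasMinor_trans (hFG : F.HasMinor G) (hGH : G.HasMinor H) : F.HasMinor H := by
  obtain ⟨B, hB, hBdisj, hBadj⟩ := hFG
  obtain ⟨C, hC, hCdisj, hCadj⟩ := hGH
  refine ⟨fun w => ⋃ v ∈ C w, B v, fun w => connected_induce_biUnion hB hBadj (hC w),
    fun w w' hw => ?_, fun w w' hw => ?_⟩
  · simp only [Set.disjoint_iUnion_left, Set.disjoint_iUnion_right]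
    exact fun v' hv' v hv => hBdisj fun h => Set.disjoint_left.1 (hCdisj hw) hv (h ▸ hv')
  · obtain ⟨v, hv, v', hv', hvv'⟩ := hCadj hw
    obtain ⟨x, hx, y, hy, hxy⟩ := hBadj hvv'
    exact ⟨x, Set.mem_biUnion hv hx, y, Set.mem_biUnion hv' hy, hxy⟩

end Minor

section Contraction

variable {V : Type*}

/-- The contraction of the edge `vu` of `G`, with parallel edges identified. The merged vertex is
represented by `u`, so the vertices of the contraction are those of `G` other than `v`. -/
def contractEdge (G : SimpleGraph V) (v u : V) : SimpleGraph ({v}ᶜ : Set V) :=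
  G.induce {v}ᶜ ⊔ fromRel fun x y => x.1 = u ∧ G.Adj v y

theorem contractEdge_adj {G : SimpleGraph V} {v u : V} {x y : ({v}ᶜ : Set V)} :
    (contractEdge G v u).Adj x y ↔
      G.Adj x y ∨ x ≠ y ∧ (x.1 = u ∧ G.Adj v y ∨ y.1 = u ∧ G.Adj v x) :=
  Iff.rfl

theorem induce_le_contractEdge (G : SimpleGraph V) (v u : V) :
    G.induce {v}ᶜ ≤ contractEdge G v u :=
  le_sup_left

theorem hasMinor_contractEdge {V : Type} {G : SimpleGraph V} {v u : V} (h : G.Adj v u) :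
    G.HasMinor (contractEdge G v u) := by
  refine ⟨fun w => {x | x = w.1 ∨ w.1 = u ∧ x = v}, fun w => ?_, fun w w' hw => ?_,
    fun w w' hw => ?_⟩
  · change (G.induce {x | x = w.1 ∨ w.1 = u ∧ x = v}).Connected
    by_cases hwu : w.1 = u
    · rw [show {x | x = w.1 ∨ w.1 = u ∧ x = v} = {u, v} by ext; simp [hwu]]
      exact induce_pair_connected_of_adj h.symm
    · rw [show {x | x = w.1 ∨ w.1 = u ∧ x = v} = {w.1} by ext; simp [hwu]]
      exact connected_induce_singleton G w
  · have hne : w.1 ≠ w'.1 := Subtype.coe_ne_coe.2 hw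
    have hwv : w.1 ≠ v := w.2
    have hwv' : w'.1 ≠ v := w'.2
    exact Set.disjoint_left.2 fun x hx hx' => by grind
  · rcases contractEdge_adj.1 hw with hadj | ⟨-, ⟨hwu, hadj⟩ | ⟨hwu, hadj⟩⟩
    · exact ⟨w, Or.inl rfl, w', Or.inl rfl, hadj⟩
    · exact ⟨v, Or.inr ⟨hwu, rfl⟩, w', Or.inl rfl, hadj⟩
    · exact ⟨w, Or.inl rfl, v, Or.inr ⟨hwu, rfl⟩, hadj.symm⟩

theorem hasMinor_top_succ_of_isNClique {V : Type} {G : SimpleGraph V} {n : ℕ} {t : Finset V}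
    {v u : V} (ht : G.IsNClique n t) (hv : v ∉ t) (hu : u ∉ t) (h : G.Adj v u)
    (hadj : ∀ x ∈ t, G.Adj v x ∨ G.Adj u x) : G.HasMinor (⊤ : SimpleGraph (Fin (n + 1))) := by
  classical
  let t' : Finset ({v}ᶜ : Set V) := t.subtype (· ∈ ({v}ᶜ : Set V))
  have ht' : (contractEdge G v u).IsNClique n t' := by
    refine ⟨fun x hx y hy hxy => ?_, ?_⟩
    · exact Or.inl (ht.isClique (mem_subtype.1 hx) (mem_subtype.1 hy) (Subtype.coe_ne_coe.2 hxy))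
    · rw [card_subtype, filter_true_of_mem, ht.card_eq]
      exact fun x hx => ne_of_mem_of_not_mem hx hv
  have hclique := ht'.insert (a := ⟨u, h.ne'⟩) fun x hx => by
    have hxt : x.1 ∈ t := mem_subtype.1 hx
    have hux : u ≠ x.1 := (ne_of_mem_of_not_mem hxt hu).symm
    rcases hadj x hxt with hvx | hux'
    · exact contractEdge_adj.2 (Or.inr ⟨fun h => hux (congrArg Subtype.val h), Or.inl ⟨rfl, hvx⟩⟩)
    · exact Or.inl hux'
  exact hasMinor_trans (hasMinor_contractEdge h) (hasMinor_of_isContained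
    ((not_cliqueFree_iff_top_isContained _).1 hclique.not_cliqueFree))

end Contraction

section EdgeBound

theorem card_edgeFinset_eq_add_degree {V : Type*} [Fintype V] [DecidableEq V]
    (G : SimpleGraph V) [DecidableRel G.Adj] (v : V) :
    #G.edgeFinset = #(G.induce {v}ᶜ).edgeFinset + G.degree v := by
  have hle : G.degree v ≤ #G.edgeFinset :=
    G.card_incidenceFinset_eq_degree v ▸ card_le_card (G.incidenceFinset_subset v)
  rw [card_edgeFinset_induce_compl_singleton, card_edgeFinset_deleteIncidenceSet,
    Nat.sub_add_cancel hle]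

theorem card_edgeFinset_le_contractEdge {V : Type*} [Fintype V] [DecidableEq V] (G : SimpleGraph V)
    [DecidableRel G.Adj] {v u : V} [DecidableRel (contractEdge G v u).Adj] (h : G.Adj v u) :
    #G.edgeFinset ≤
      #(contractEdge G v u).edgeFinset + #(G.neighborFinset v ∩ G.neighborFinset u) + 1 := by
  let u' : ({v}ᶜ : Set V) := ⟨u, h.ne'⟩
  let S := (G.neighborFinset v \ G.neighborFinset u).erase u
  -- The edges of the contraction missing from `G - v` join `u` to the vertices of `S'`.
  let S' : Finset ({v}ᶜ : Set V) := S.subtype (· ∈ ({v}ᶜ : Set V))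
  have mem_S' {y : ({v}ᶜ : Set V)} : y ∈ S' ↔ y.1 ≠ u ∧ G.Adj v y ∧ ¬ G.Adj u y := by
    simp only [S', S, mem_subtype, mem_erase, mem_sdiff, mem_neighborFinset]
  have card_S' : #S' = #S := by
    rw [card_subtype, filter_true_of_mem]
    rintro x hx rfl
    simp [S] at hx
  have card_S : #S + 1 + #(G.neighborFinset v ∩ G.neighborFinset u) = G.degree v := by
    rw [card_erase_add_one (by simpa using h), card_sdiff_add_card_inter,
      card_neighborFinset_eq_degree]
  have hdisj : Disjoint (G.induce {v}ᶜ).edgeFinset (S'.image (s(u', ·))) := by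
    rw [disjoint_right]
    intro e he
    obtain ⟨y, hy, rfl⟩ := mem_image.1 he
    exact fun hadj => (mem_S'.1 hy).2.2 (mem_edgeFinset.1 hadj)
  have hsub :
      (G.induce {v}ᶜ).edgeFinset ∪ S'.image (s(u', ·)) ⊆ (contractEdge G v u).edgeFinset := by
    refine union_subset (edgeFinset_mono (induce_le_contractEdge G v u)) fun e he => ?_
    obtain ⟨y, hy, rfl⟩ := mem_image.1 he
    obtain ⟨hyu, hvy, -⟩ := mem_S'.1 hy
    exact mem_edgeFinset.2 (Or.inr ⟨fun h => hyu (congrArg Subtype.val h).symm, Or.inl ⟨rfl, hvy⟩⟩)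
  have hcard := card_le_card hsub
  rw [card_union_of_disjoint hdisj, card_image_of_injective _ fun _ _ => Sym2.congr_right.1,
    card_S'] at hcard
  have hdegree := card_edgeFinset_eq_add_degree G v
  omega

theorem inter_neighborFinset_eq_erase_erase {V : Type*} [Fintype V] [DecidableEq V]
    {G : SimpleGraph V} [DecidableRel G.Adj] {s : Finset V} {a b : V} (ha : a ∈ s) (hb : b ∈ s)
    (hab : a ≠ b) (hnadj : ¬ G.Adj a b) (hcard : #s ≤ #(s ∩ G.neighborFinset a) + 2) :
    s ∩ G.neighborFinset a = (s.erase a).erase b := by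
  refine eq_of_subset_of_card_le (fun x hx => ?_) ?_
  · rw [mem_inter, mem_neighborFinset] at hx
    exact mem_erase.2 ⟨fun h => hnadj (h ▸ hx.2), mem_erase.2 ⟨hx.2.ne', hx.1⟩⟩
  · rw [card_erase_of_mem (mem_erase.2 ⟨hab.symm, hb⟩), card_erase_of_mem ha]
    omega

variable {V : Type} [Fintype V] [DecidableEq V] {G : SimpleGraph V} [DecidableRel G.Adj]

theorem hasMinor_top_five_of_not_adj {v a b : V} (ha : G.Adj v a) (hb : G.Adj v b) (hab : a ≠ b)
    (hnadj : ¬ G.Adj a b) (hdeg : G.degree v ≤ 5)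
    (hinter : ∀ u, G.Adj v u → 3 ≤ #(G.neighborFinset v ∩ G.neighborFinset u)) :
    G.HasMinor (⊤ : SimpleGraph (Fin 5)) := by
  set s := G.neighborFinset v with hs
  have mem_s {x : V} : x ∈ s ↔ G.Adj v x := mem_neighborFinset G v x
  have hcard (u : V) (hu : G.Adj v u) : #s ≤ #(s ∩ G.neighborFinset u) + 2 := by
    have := hinter u hu
    rw [hs, card_neighborFinset_eq_degree, ← hs]
    omega
  have hNa := inter_neighborFinset_eq_erase_erase (mem_s.2 ha) (mem_s.2 hb) hab hnadj (hcard a ha)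
  have hNb := inter_neighborFinset_eq_erase_erase (mem_s.2 hb) (mem_s.2 ha) hab.symm
    (fun h => hnadj h.symm) (hcard b hb)
  have hadj {x : V} (hx : G.Adj v x) (hxa : x ≠ a) (hxb : x ≠ b) : G.Adj a x ∧ G.Adj b x := by
    have hxa' : x ∈ s ∩ G.neighborFinset a := by simp [hNa, mem_s, hx, hxa, hxb]
    have hxb' : x ∈ s ∩ G.neighborFinset b := by simp [hNb, mem_s, hx, hxa, hxb]
    simpa using And.intro (mem_inter.1 hxa').2 (mem_inter.1 hxb').2
  obtain ⟨c, hc⟩ : (s ∩ G.neighborFinset a).Nonempty := card_pos.1 (by have := hinter a ha; omega)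
  obtain ⟨hcs, hca, hcb⟩ : G.Adj v c ∧ c ≠ a ∧ c ≠ b := by simp_all
  obtain ⟨d, hd, hdab⟩ := exists_mem_notMem_of_card_lt_card
    (s := {a, b}) (card_le_two.trans_lt (hinter c hcs))
  obtain ⟨e, he, hecd⟩ := exists_mem_notMem_of_card_lt_card
    (s := {c, d}) (card_le_two.trans_lt (hinter a ha))
  simp only [mem_inter, mem_s, mem_neighborFinset, mem_insert, mem_singleton, not_or]
    at hd hdab he hecd
  have heb : e ≠ b := fun h => hnadj (h ▸ he.2)
  have hadj_c := hadj hcs hca hcb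
  have hadj_d := hadj hd.1 hdab.1 hdab.2
  have hclique : G.IsNClique 4 (insert v {b, c, d}) :=
    (is3Clique_triple_iff.2 ⟨hadj_c.2, hadj_d.2, hd.2⟩).insert (by simp [hb, hcs, hd.1])
  -- Contracting `a` into `e` completes the clique `{v, b, c, d}` to a `K₅`.
  refine hasMinor_top_succ_of_isNClique hclique (v := a) (u := e) ?_ ?_ he.2 ?_
  · simp [ha.ne', hab, hca.symm, Ne.symm hdab.1]
  · simp [he.1.ne', heb, hecd]
  · simp [ha.symm, (hadj he.1 he.2.ne' heb).2.symm, hadj_c.1, hadj_d.1]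

theorem exists_adj_card_inter_neighborFinset_le_two
    (hG : ¬ G.HasMinor (⊤ : SimpleGraph (Fin 5))) {v : V} (hv : ¬ G.IsIsolated v)
    (hdeg : G.degree v ≤ 5) :
    ∃ u, G.Adj v u ∧ #(G.neighborFinset v ∩ G.neighborFinset u) ≤ 2 := by
  by_contra! hinter
  obtain ⟨u, hu⟩ := exists_adj_iff_not_isIsolated.2 hv
  have hclique : G.IsClique (G.neighborFinset v : Set V) := fun a ha b hb hab => by
    by_contra hnadj
    exact hG (hasMinor_top_five_of_not_adj (by simpa using ha) (by simpa using hb) hab hnadj hdeg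
      hinter)
  have hlt : #(G.neighborFinset v ∩ G.neighborFinset u) < #(G.neighborFinset v) :=
    card_lt_card (inter_subset_left.ssubset_of_mem_notMem (a := u) (by simpa using hu) (by simp))
  obtain ⟨t, ht, htcard⟩ := exists_subset_card_eq (Nat.lt_of_le_of_lt (hinter u hu) hlt)
  have hKt : G.IsNClique 4 t := ⟨hclique.subset (coe_subset.2 ht), htcard⟩
  exact (hKt.insert fun x hx => by simpa using ht hx).not_cliqueFree
    (cliqueFree_of_not_hasMinor_top hG)

theorem exists_hasMinor_card_edgeFinset_le_add_three
    (hG : ¬ G.HasMinor (⊤ : SimpleGraph (Fin 5))) {v : V} (hdeg : G.degree v ≤ 5) :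
    ∃ (H : SimpleGraph ({v}ᶜ : Set V)) (_ : DecidableRel H.Adj),
      G.HasMinor H ∧ #G.edgeFinset ≤ #H.edgeFinset + 3 := by
  classical
  by_cases hv : G.IsIsolated v
  · refine ⟨G.induce {v}ᶜ, inferInstance, hasMinor_of_isContained ⟨Copy.induce G _⟩, ?_⟩
    rw [card_edgeFinset_eq_add_degree G v, (G.degree_eq_zero v).2 hv]
    omega
  · obtain ⟨u, huv, hu⟩ := exists_adj_card_inter_neighborFinset_le_two hG hv hdeg
    refine ⟨contractEdge G v u, Classical.decRel _, hasMinor_contractEdge huv, ?_⟩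
    have := card_edgeFinset_le_contractEdge G huv
    omega

theorem exists_le_card_edgeFinset_eq {V : Type*} [Fintype V] (G : SimpleGraph V)
    [DecidableRel G.Adj] {m : ℕ} (hm : m ≤ #G.edgeFinset) :
    ∃ (H : SimpleGraph V) (_ : DecidableRel H.Adj), H ≤ G ∧ #H.edgeFinset = m := by
  classical
  obtain ⟨t, ht, rfl⟩ := exists_subset_card_eq hm
  have htG : (t : Set (Sym2 V)) ⊆ G.edgeSet := fun e he => mem_edgeFinset.1 (ht he)
  obtain ⟨H, hH⟩ : ∃ H : SimpleGraph V, H.edgeSet = t := by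
    refine ⟨fromEdgeSet t, ?_⟩
    rw [edgeSet_fromEdgeSet, sdiff_eq_left]
    exact Set.disjoint_left.2 fun e he => G.not_isDiag_of_mem_edgeSet (htG he)
  refine ⟨H, Classical.decRel _, edgeSet_subset_edgeSet.1 (hH ▸ htG), ?_⟩
  congr 1
  ext e
  rw [mem_edgeFinset, hH, mem_coe]

theorem exists_degree_lt_of_card_edgeFinset_lt {V : Type*} [Fintype V] (G : SimpleGraph V)
    [DecidableRel G.Adj] {k : ℕ} (h : 2 * #G.edgeFinset < k * Fintype.card V) :
    ∃ v, G.degree v < k := by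
  have hsum : ∑ v, G.degree v < ∑ _v : V, k := by
    rwa [sum_degrees_eq_twice_card_edges, sum_const, card_univ, smul_eq_mul, mul_comm _ k]
  obtain ⟨v, -, hv⟩ := exists_lt_of_sum_lt hsum
  exact ⟨v, hv⟩

theorem card_edgeFinset_add_two_le_of_not_hasMinor_top {V : Type} [Fintype V] [Nonempty V]
    {G : SimpleGraph V} [DecidableRel G.Adj] (hG : ¬ G.HasMinor (⊤ : SimpleGraph (Fin 5))) :
    #G.edgeFinset + 2 ≤ 3 * Fintype.card V := by
  classical
  induction hn : Fintype.card V using Nat.strong_induction_on generalizing V with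
  | _ n ih =>
  by_contra! hlt
  have hpos : 0 < n := hn ▸ Fintype.card_pos
  obtain ⟨H, _, hHG, hH⟩ := exists_le_card_edgeFinset_eq G (m := 3 * n - 1) (by omega)
  have hHK5 : ¬ H.HasMinor (⊤ : SimpleGraph (Fin 5)) := fun h =>
    hG (hasMinor_trans (hasMinor_of_isContained (IsContained.of_le hHG)) h)
  obtain ⟨v, hv⟩ := exists_degree_lt_of_card_edgeFinset_lt H (k := 6) (by omega)
  obtain ⟨K, _, hHK, hK⟩ :=
    exists_hasMinor_card_edgeFinset_le_add_three hHK5 (Nat.le_of_lt_succ hv)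
  have hcard : Fintype.card ({v}ᶜ : Set V) = n - 1 := by
    rw [Fintype.card_compl_set, Set.card_singleton, hn]
  have : Nontrivial V := by
    obtain ⟨e, he⟩ := card_pos.1 (show 0 < #H.edgeFinset by omega)
    induction e with
    | _ x y => exact ⟨x, y, (mem_edgeFinset.1 he : H.Adj x y).ne⟩
  have hKbound := ih (n - 1) (by omega) (fun h => hHK5 (hasMinor_trans hHK h)) hcard
  omega

theorem minDegree_le_five_of_not_hasMinor_top {V : Type} [Fintype V] {G : SimpleGraph V}
    [DecidableRel G.Adj] (hG : ¬ G.HasMinor (⊤ : SimpleGraph (Fin 5))) : G.minDegree ≤ 5 := by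
  cases isEmpty_or_nonempty V
  · simp
  · have hcard := card_edgeFinset_add_two_le_of_not_hasMinor_top hG
    obtain ⟨v, hv⟩ := exists_degree_lt_of_card_edgeFinset_lt G (k := 6) (by omega)
    exact (G.minDegree_le_degree v).trans (Nat.le_of_lt_succ hv)

end EdgeBound

section ChromaticPolynomial

variable {V α : Type*} {G : SimpleGraph V} {v u : V}

theorem deleteEdges_singleton_lt (h : G.Adj v u) : G.deleteEdges {s(v, u)} < G :=
  (deleteEdges_le _).lt_of_ne fun heq => (deleteEdges_adj.1 (heq.symm ▸ h)).2 rfl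

/-- Colourings of `G` are the colourings of `G - vu` which separate the ends of the edge `vu`. -/
def coloringEquivNe (h : G.Adj v u) :
    G.Coloring α ≃ {C : (G.deleteEdges {s(v, u)}).Coloring α // C v ≠ C u} where
  toFun C := ⟨C.comp (Hom.ofLE (deleteEdges_le _)), C.valid h⟩
  invFun C := Coloring.mk C.1 fun {x y} hxy => by
    by_cases he : s(x, y) = s(v, u)
    · rcases Sym2.eq_iff.1 he with ⟨rfl, rfl⟩ | ⟨rfl, rfl⟩
      exacts [C.2, C.2.symm]
    · exact C.1.valid (deleteEdges_adj.2 ⟨hxy, he⟩)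
  left_inv _ := rfl
  right_inv _ := rfl

open scoped Classical in
/-- The quotient map onto the contraction of the edge `vu`, with that edge removed from the source
so that it becomes a graph homomorphism. -/
noncomputable def contractEdgeHom (h : G.Adj v u) :
    G.deleteEdges {s(v, u)} →g contractEdge G v u where
  toFun x := if hx : x = v then ⟨u, h.ne'⟩ else ⟨x, hx⟩
  map_rel' {x y} hxy := by
    obtain ⟨hxy, he⟩ := deleteEdges_adj.1 hxy
    rw [Set.mem_singleton_iff, Sym2.eq_iff] at he
    rw [contractEdge_adj]
    grind [hxy.ne, hxy.symm]

theorem contractEdgeHom_of_ne (h : G.Adj v u) (x : ({v}ᶜ : Set V)) : contractEdgeHom h x = x :=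
  dif_neg x.2

theorem contractEdgeHom_self (h : G.Adj v u) : contractEdgeHom h v = ⟨u, h.ne'⟩ :=
  dif_pos rfl

/-- Colourings of the contraction of the edge `vu` are the colourings of `G - vu` which agree on
the ends of that edge. -/
noncomputable def contractEdgeColoringEquiv (h : G.Adj v u) :
    (contractEdge G v u).Coloring α ≃ {C : (G.deleteEdges {s(v, u)}).Coloring α // C v = C u} where
  toFun C := ⟨C.comp (contractEdgeHom h),
    congrArg C ((contractEdgeHom_self h).trans (contractEdgeHom_of_ne h ⟨u, h.ne'⟩).symm)⟩
  invFun C := Coloring.mk (fun x => C.1 x) fun {x y} hxy => by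
    have valid {a b : V} (hab : G.Adj a b) (hb : b ≠ v) (ha : a = v → b ≠ u) :
        C.1 a ≠ C.1 b := C.1.valid (deleteEdges_adj.2 ⟨hab, by grind⟩)
    rcases contractEdge_adj.1 hxy with hxy | ⟨hne, ⟨rfl, hvy⟩ | ⟨rfl, hvx⟩⟩
    · exact valid hxy y.2 fun hx => (x.2 hx).elim
    · exact C.2 ▸ valid hvy y.2 fun _ hy => hne (Subtype.ext hy.symm)
    · exact (C.2 ▸ valid hvx x.2 fun _ hx => hne (Subtype.ext hx)).symm
  left_inv C := by
    ext x
    exact congrArg C (contractEdgeHom_of_ne h x)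
  right_inv C := by
    ext x
    by_cases hx : x = v
    · subst hx
      exact (congrArg (fun y : ({x}ᶜ : Set V) => C.1 y) (contractEdgeHom_self h)).trans C.2.symm
    · exact congrArg (fun y : ({v}ᶜ : Set V) => C.1 y) (contractEdgeHom_of_ne h ⟨x, hx⟩)

theorem card_coloring_deleteEdges [Finite V] [Finite α] (h : G.Adj v u) :
    Nat.card ((G.deleteEdges {s(v, u)}).Coloring α) =
      Nat.card (G.Coloring α) + Nat.card ((contractEdge G v u).Coloring α) := by
  rw [Nat.card_congr (coloringEquivNe h), Nat.card_congr (contractEdgeColoringEquiv h), add_comm,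
    ← Nat.card_sum]
  classical
  exact Nat.card_congr (Equiv.sumCompl _).symm

open scoped Classical in
/-- An isolated vertex is coloured independently of the rest of the graph. -/
noncomputable def coloringEquivOfIsIsolated (hv : G.IsIsolated v) :
    G.Coloring α ≃ α × (G.induce {v}ᶜ).Coloring α where
  toFun C := (C v, C.comp (Embedding.induce _).toHom)
  invFun C := Coloring.mk (fun x => if hx : x = v then C.1 else C.2 ⟨x, hx⟩) fun {x y} hxy => by
    have hx : x ≠ v := fun h => hv y (h ▸ hxy)
    have hy : y ≠ v := fun h => hv x (h ▸ hxy.symm)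
    rw [dif_neg hx, dif_neg hy]
    exact C.2.valid (v := ⟨x, hx⟩) (w := ⟨y, hy⟩) hxy
  left_inv C := by
    ext x
    by_cases hx : x = v
    · subst hx
      exact dif_pos rfl
    · exact dif_neg hx
  right_inv C := by
    refine Prod.ext (dif_pos rfl) ?_
    ext x
    exact dif_neg x.2

theorem card_compl_singleton_lt [Finite V] (v : V) : Nat.card ({v}ᶜ : Set V) < Nat.card V :=
  Finite.card_subtype_lt (x := v) (by simp)

theorem exists_chromaticPolynomial [Finite V] (G : SimpleGraph V) :
    ∃ P : ℤ[X], ∀ k : ℕ, P.eval (k : ℤ) = Nat.card (G.Coloring (Fin k)) := by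
  induction hn : Nat.card V using Nat.strong_induction_on generalizing V with
  | _ n ih =>
  induction G using WellFoundedLT.induction with
  | _ G ihG =>
  rcases isEmpty_or_nonempty V with hV | ⟨⟨v⟩⟩
  · exact ⟨1, fun k => by simp⟩
  have hlt : Nat.card ({v}ᶜ : Set V) < n := hn ▸ card_compl_singleton_lt v
  by_cases hv : G.IsIsolated v
  · obtain ⟨P, hP⟩ := ih _ hlt (G.induce {v}ᶜ) rfl
    exact ⟨X * P, fun k => by simp [hP, Nat.card_congr (coloringEquivOfIsIsolated hv)]⟩
  · obtain ⟨u, h⟩ := exists_adj_iff_not_isIsolated.2 hv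
    obtain ⟨P, hP⟩ := ihG _ (deleteEdges_singleton_lt h)
    obtain ⟨Q, hQ⟩ := ih _ hlt (contractEdge G v u) rfl
    exact ⟨P - Q, fun k => by simp [hP, hQ, card_coloring_deleteEdges h]⟩

/-- The polynomial whose value at each natural number `k` is the number of proper colourings of `G`
with `k` colours. It is kept over `ℤ` so that it can be evaluated in any ring. -/
noncomputable def chromaticPolynomial [Finite V] (G : SimpleGraph V) : ℤ[X] :=
  (exists_chromaticPolynomial G).choose

theorem eval_natCast_chromaticPolynomial [Finite V] (G : SimpleGraph V) (k : ℕ) :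
    (chromaticPolynomial G).eval (k : ℤ) = Nat.card (G.Coloring (Fin k)) :=
  (exists_chromaticPolynomial G).choose_spec k

theorem eq_of_eval_natCast_eq {R : Type*} [CommRing R] [IsDomain R] [CharZero R] {p q : R[X]}
    (h : ∀ k : ℕ, 0 < k → p.eval (k : R) = q.eval (k : R)) : p = q := by
  refine eq_of_infinite_eval_eq p q
    (((Set.Ioi_infinite 0).image (Nat.cast_injective (R := R)).injOn).mono ?_)
  rintro _ ⟨k, hk, rfl⟩
  exact h k hk

theorem eq_map_chromaticPolynomial [Finite V] {R : Type*} [CommRing R] [IsDomain R] [CharZero R]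
    {P : R[X]} (hP : ∀ k : ℕ, 0 < k →
      P.eval (k : R) = Nat.card {f : V → Fin k // ∀ u v, G.Adj u v → f u ≠ f v}) :
    P = (chromaticPolynomial G).map (algebraMap ℤ R) := by
  refine eq_of_eval_natCast_eq fun k hk => ?_
  have e : {f : V → Fin k // ∀ u v, G.Adj u v → f u ≠ f v} ≃ G.Coloring (Fin k) :=
    { toFun f := Coloring.mk f.1 (f.2 _ _)
      invFun C := ⟨C, fun _ _ => C.valid⟩ }
  rw [hP k hk, Nat.card_congr e, eval_natCast_map, eval_natCast_chromaticPolynomial, map_natCast]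

theorem chromaticPolynomial_of_isEmpty [IsEmpty V] (G : SimpleGraph V) :
    chromaticPolynomial G = 1 :=
  eq_of_eval_natCast_eq fun k _ => by simp [eval_natCast_chromaticPolynomial]

theorem chromaticPolynomial_deleteEdges [Finite V] (h : G.Adj v u) :
    chromaticPolynomial (G.deleteEdges {s(v, u)}) =
      chromaticPolynomial G + chromaticPolynomial (contractEdge G v u) :=
  eq_of_eval_natCast_eq fun k _ => by
    simp [eval_natCast_chromaticPolynomial, card_coloring_deleteEdges h]

theorem chromaticPolynomial_of_isIsolated [Finite V] (hv : G.IsIsolated v) :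
    chromaticPolynomial G = X * chromaticPolynomial (G.induce {v}ᶜ) :=
  eq_of_eval_natCast_eq fun k _ => by
    simp [eval_natCast_chromaticPolynomial, Nat.card_congr (coloringEquivOfIsIsolated hv)]

end ChromaticPolynomial

section Positivity

variable {V : Type} {G H : SimpleGraph V} {v u : V} {R : Type*} [CommRing R] [LinearOrder R]
  {q : R}

/-- The induction hypothesis of the positivity argument: the chromatic polynomial is positive at `q`
for every minor of `G` with fewer vertices than `G`. -/
def ProperMinorsPos (q : R) (G : SimpleGraph V) : Prop :=
  ∀ ⦃W : Type⦄ [Finite W] (H : SimpleGraph W), G.HasMinor H → Nat.card W < Nat.card V →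
    0 < aeval q (chromaticPolynomial H)

namespace ProperMinorsPos

theorem of_hasMinor [Finite V] {W : Type} {H : SimpleGraph W} (hG : ProperMinorsPos q G)
    (h : G.HasMinor H) : ProperMinorsPos q H :=
  fun _ _ K hHK hlt => hG K (hasMinor_trans h hHK) (hlt.trans_le (card_le_of_hasMinor h))

theorem of_le [Finite V] (hG : ProperMinorsPos q G) (h : H ≤ G) : ProperMinorsPos q H :=
  hG.of_hasMinor (hasMinor_of_isContained (IsContained.of_le h))

variable [IsStrictOrderedRing R]

theorem aeval_lt_deleteEdges [Finite V] (hG : ProperMinorsPos q G) (h : G.Adj v u) :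
    aeval q (chromaticPolynomial G) <
      aeval q (chromaticPolynomial (G.deleteEdges {s(v, u)})) := by
  rw [chromaticPolynomial_deleteEdges h, map_add]
  exact lt_add_of_pos_right _ (hG _ (hasMinor_contractEdge h) (card_compl_singleton_lt v))

theorem aeval_lt_of_lt [Finite V] (hG : ProperMinorsPos q G) (h : H < G) :
    aeval q (chromaticPolynomial G) < aeval q (chromaticPolynomial H) := by
  induction G using WellFoundedLT.induction with
  | _ G ih =>
  obtain ⟨v, u, hvu, hHvu⟩ : ∃ v u, G.Adj v u ∧ ¬ H.Adj v u := by
    simpa [le_iff_adj] using h.not_ge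
  have hle : H ≤ G.deleteEdges {s(v, u)} := fun x y hxy =>
    deleteEdges_adj.2 ⟨h.le hxy, fun he => hHvu ((H.adj_congr_of_sym2 he).1 hxy)⟩
  have hlt := hG.aeval_lt_deleteEdges hvu
  rcases hle.eq_or_lt with rfl | hHlt
  · exact hlt
  · exact hlt.trans
      (ih _ (deleteEdges_singleton_lt hvu) (hG.of_le (deleteEdges_le _)) hHlt)

theorem aeval_le_of_le [Finite V] (hG : ProperMinorsPos q G) (h : H ≤ G) :
    aeval q (chromaticPolynomial G) ≤ aeval q (chromaticPolynomial H) := by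
  rcases h.eq_or_lt with rfl | hlt
  · exact le_rfl
  · exact (hG.aeval_lt_of_lt hlt).le

end ProperMinorsPos

theorem degree_deleteEdges_add_one {V : Type*} {G : SimpleGraph V} {v u : V}
    [Fintype (G.neighborSet v)] [Fintype ((G.deleteEdges {s(v, u)}).neighborSet v)]
    (h : G.Adj v u) : (G.deleteEdges {s(v, u)}).degree v + 1 = G.degree v := by
  classical
  have hN : (G.deleteEdges {s(v, u)}).neighborFinset v = (G.neighborFinset v).erase u := by
    ext x
    simp only [mem_neighborFinset, deleteEdges_adj, Set.mem_singleton_iff, Sym2.congr_right,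
      mem_erase]
    exact and_comm
  rw [← card_neighborFinset_eq_degree, hN,
    card_erase_add_one ((mem_neighborFinset G v u).2 h), card_neighborFinset_eq_degree]

theorem induce_compl_singleton_deleteEdges {V : Type*} (G : SimpleGraph V) (v u : V) :
    (G.deleteEdges {s(v, u)}).induce {v}ᶜ = G.induce {v}ᶜ := by
  ext x y
  have hx : x.1 ≠ v := x.2
  have hy : y.1 ≠ v := y.2
  simp [hx, hy]

namespace ProperMinorsPos

variable [IsStrictOrderedRing R] [Fintype V]

theorem sub_degree_mul_aeval_le [DecidableRel G.Adj] (hG : ProperMinorsPos q G) (v : V) :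
    (q - G.degree v) * aeval q (chromaticPolynomial (G.induce {v}ᶜ)) ≤
      aeval q (chromaticPolynomial G) := by
  classical
  induction hd : G.degree v generalizing G with
  | zero =>
    rw [chromaticPolynomial_of_isIsolated ((G.degree_eq_zero v).1 hd)]
    simp
  | succ d ih =>
    obtain ⟨u, h⟩ := (G.degree_pos_iff_exists_adj v).1 (hd ▸ d.succ_pos)
    have hdel := ih (hG.of_le (deleteEdges_le {s(v, u)})) (by
      rw [← degree_deleteEdges_add_one h] at hd
      exact Nat.succ_injective hd)
    have hcontract := (hG.of_hasMinor (hasMinor_contractEdge h)).aeval_le_of_le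
      (induce_le_contractEdge G v u)
    rw [induce_compl_singleton_deleteEdges, chromaticPolynomial_deleteEdges h, map_add] at hdel
    push_cast
    linear_combination hdel + hcontract

theorem sub_degree_mul_aeval_lt [DecidableRel G.Adj] (hG : ProperMinorsPos q G)
    (hv : ¬ G.IsClique (G.neighborSet v)) :
    (q - G.degree v) * aeval q (chromaticPolynomial (G.induce {v}ᶜ)) <
      aeval q (chromaticPolynomial G) := by
  classical
  obtain ⟨a, ha, b, hb, hab, hnadj⟩ : ∃ a, G.Adj v a ∧ ∃ b, G.Adj v b ∧ a ≠ b ∧ ¬ G.Adj a b := by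
    simpa [IsClique, Set.Pairwise] using hv
  have hdel := (hG.of_le (deleteEdges_le {s(v, a)})).sub_degree_mul_aeval_le v
  have hlt : G.induce {v}ᶜ < contractEdge G v a := by
    refine (induce_le_contractEdge G v a).lt_of_not_ge fun hle => hnadj ?_
    exact @hle ⟨a, ha.ne'⟩ ⟨b, hb.ne'⟩
      (contractEdge_adj.2 (Or.inr ⟨fun h => hab (congrArg Subtype.val h), Or.inl ⟨rfl, hb⟩⟩))
  have hcontract := (hG.of_hasMinor (hasMinor_contractEdge ha)).aeval_lt_of_lt hlt
  rw [induce_compl_singleton_deleteEdges, chromaticPolynomial_deleteEdges ha, map_add] at hdel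
  rw [← degree_deleteEdges_add_one ha]
  push_cast
  linear_combination hdel + hcontract

end ProperMinorsPos

theorem degree_add_one_lt_of_isClique_neighborSet {V : Type*} {G : SimpleGraph V} {v : V}
    [Fintype (G.neighborSet v)] {n : ℕ} (hG : G.CliqueFree n) (hv : G.IsClique (G.neighborSet v)) :
    G.degree v + 1 < n := by
  classical
  have hclique : G.IsNClique (G.degree v) (G.neighborFinset v) :=
    ⟨by rwa [coe_neighborFinset], card_neighborFinset_eq_degree G v⟩
  exact not_le.1 fun hle => hG.mono hle _ (hclique.insert fun x => (mem_neighborFinset G v x).1)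

theorem aeval_chromaticPolynomial_pos_of_minDegree_le [IsStrictOrderedRing R] [Finite V] {d : ℕ}
    (hq : (d : R) ≤ q) (hG : ¬ G.HasMinor (⊤ : SimpleGraph (Fin d)))
    (hdeg : ∀ ⦃W : Type⦄ [Fintype W] (H : SimpleGraph W) [DecidableRel H.Adj],
      G.HasMinor H → H.minDegree ≤ d) :
    0 < aeval q (chromaticPolynomial G) := by
  classical
  induction hn : Nat.card V using Nat.strong_induction_on generalizing V with
  | _ n ih =>
  have hpos : ProperMinorsPos q G := fun W _ H hGH hlt =>
    ih _ (hn ▸ hlt) (fun h => hG (hasMinor_trans hGH h))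
      (fun _ _ K _ h => hdeg K (hasMinor_trans hGH h)) rfl
  rcases isEmpty_or_nonempty V with hV | hV
  · simp [chromaticPolynomial_of_isEmpty]
  have := Fintype.ofFinite V
  obtain ⟨v, hv⟩ := G.exists_minimal_degree_vertex
  have hvd : G.degree v ≤ d := hv ▸ hdeg G (hasMinor_of_isContained (IsContained.refl G))
  have hD : 0 < aeval q (chromaticPolynomial (G.induce {v}ᶜ)) :=
    hpos _ (hasMinor_of_isContained ⟨Copy.induce G _⟩) (card_compl_singleton_lt v)
  by_cases hclique : G.IsClique (G.neighborSet v)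
  · have hvd' :=
      degree_add_one_lt_of_isClique_neighborSet (cliqueFree_of_not_hasMinor_top hG) hclique
    have hlt : (G.degree v : R) < q := (Nat.cast_lt.2 (Nat.lt_of_succ_lt hvd')).trans_le hq
    exact (mul_pos (sub_pos.2 hlt) hD).trans_le (hpos.sub_degree_mul_aeval_le v)
  · have hle : (G.degree v : R) ≤ q := (Nat.cast_le.2 hvd).trans hq
    exact (mul_nonneg (sub_nonneg.2 hle) hD.le).trans_lt (hpos.sub_degree_mul_aeval_lt hclique)

end Positivity

theorem chromatic_polynomial_pos_of_planar_general {V : Type} {R : Type*} [Finite V] [CommRing R]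
    [LinearOrder R] [IsStrictOrderedRing R] (G : SimpleGraph V)
    (hK5 : ¬ G.HasMinor (⊤ : SimpleGraph (Fin 5))) (P : R[X])
    (hP : ∀ k : ℕ, 0 < k →
      P.eval (k : R) = Nat.card {f : V → Fin k // ∀ u v, G.Adj u v → f u ≠ f v}) :
    ∀ q : R, 5 ≤ q → 0 < P.eval q := by
  intro q hq
  rw [eq_map_chromaticPolynomial hP, eval_map_algebraMap]
  exact aeval_chromaticPolynomial_pos_of_minDegree_le (d := 5) (by exact_mod_cast hq) hK5
    fun _ _ _ _ hGH => minDegree_le_five_of_not_hasMinor_top fun h => hK5 (hasMinor_trans hGH h)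

/-- Birkhoff–Lewis. If `G` is a finite loopless planar graph (planar
by Wagner's theorem: no `K₅` minor and no `K_{3,3}` minor), with chromatic polynomial
`P` (the unique polynomial counting proper colourings at every positive integer), then
`P(G,q) > 0` for every real `q ≥ 5`. -/
theorem chromatic_polynomial_pos_of_planar {V : Type} [Fintype V] (G : SimpleGraph V)
    (hK5 : ¬ G.HasMinor (⊤ : SimpleGraph (Fin 5)))
    (hK33 : ¬ G.HasMinor (completeBipartiteGraph (Fin 3) (Fin 3)))
    (P : Polynomial ℝ)
    (hP : ∀ k : ℕ, 0 < k →
      P.eval (k : ℝ) = Nat.card {f : V → Fin k // ∀ u v, G.Adj u v → f u ≠ f v}) :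
    ∀ q : ℝ, 5 ≤ q → 0 < P.eval q :=
  chromatic_polynomial_pos_of_planar_general G hK5 P hP
end

section
/- If G is a bridgeless finite multigraph with at most one vertex of degree larger than 3, then F(G,q) ≠ 0 for all real q with 1 < q < 2. -/
/-! Let `w` be a vertex such that all other degrees are at most `3`. If `G` is bridgeless and
connected then, for `1 < q < 2`, the sign of `F(G, q)` is `(-1)^(|V| + |E| + l + c)`, where `l` is
the number of loops at `w` and `c` the number of components of `G - w` plus one. This is proved by
induction on `|E|`.

Since `F(G, q)` is divided by `q - 1` when a loop is removed, and is unchanged when a vertex of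
degree two is suppressed, take an edge `wx` with `x` of degree three and other neighbours `y`, `z`.
Let `H` be `G - x`. Contracting and deleting `wx` gives
`F(G) = F(H + wy + wz) - F(H + yz)`, up to suppression of `x` in the second term.
* If `w` separates `y` from `z` in `H`, then `F(H + wy + wz) = (q - 1) F(H + yz)`, so
  `F(G) = (q - 2) F(H + yz)`; here `q < 2` is used.
* Otherwise the predicted signs of `F(H + wy + wz)` and `F(H + yz)` are opposite, so the two terms
  add up; the second one vanishes if `H + yz` has a bridge.

In general, merging a vertex of another component into `w` does not change `F`. -/

theorem sum_map_powerset_cons {α R : Type*} [AddCommMonoid R] (g : Multiset α → R) (a : α)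
    (s : Multiset α) :
    ((a ::ₘ s).powerset.map g).sum = (s.powerset.map fun t => g t + g (a ::ₘ t)).sum := by
  rw [Multiset.powerset_cons, Multiset.map_add, Multiset.sum_add, Multiset.map_map,
    Multiset.sum_map_add]
  rfl

theorem powerset_map {α β : Type*} (f : α → β) (s : Multiset α) :
    (s.map f).powerset = s.powerset.map (Multiset.map f) := by
  induction s using Multiset.induction_on with
  | empty => simp
  | cons a s ih => simp [Multiset.powerset_cons, ih]

theorem sum_powerset_val {α R : Type*} [AddCommMonoid R] (s : Finset α) (g : Multiset α → R) :
    ∑ t ∈ s.powerset, g t.val = (s.val.powerset.map g).sum := by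
  rw [← Multiset.pmap_eq_map _ g _ fun t ht =>
    Multiset.nodup_of_le (Multiset.mem_powerset.1 ht) s.nodup]
  exact congrArg Multiset.sum (Multiset.map_pmap ..)

/-- A multigraph on the vertex type `V`, recorded by the multiset of its edges. Deleting an edge is
erasing it and contracting an edge is relabelling one of its ends, so the vertex type never
changes. -/
abbrev EdgeMultiset (V : Type*) := Multiset (Sym2 V)

namespace EdgeMultiset

variable {V W : Type*} {M T : EdgeMultiset V} {a b u v w x y z : V}

section Components

/-- The type of connected components of a multigraph. -/
def Component (T : EdgeMultiset V) : Type _ :=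
  Quot fun a b => s(a, b) ∈ T

/-- The connected component of a vertex; `component T a = component T b` is the way to say
that `T` contains a path from `a` to `b`. -/
def component (T : EdgeMultiset V) (v : V) : Component T :=
  Quot.mk _ v

instance [Finite V] : Finite (Component T) :=
  Quot.finite _

theorem component_eq_of_mem (h : s(a, b) ∈ T) : component T a = component T b :=
  Quot.sound h

theorem apply_eq_of_component_eq {α : Sort*} {f : V → α} (hf : ∀ a b, s(a, b) ∈ T → f a = f b)
    (h : component T a = component T b) : f a = f b :=
  congrArg (Quot.lift f hf) h

theorem component_eq_mono {T' : EdgeMultiset V} (hT : T ≤ T')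
    (h : component T a = component T b) : component T' a = component T' b :=
  apply_eq_of_component_eq (fun _ _ he => component_eq_of_mem (Multiset.mem_of_le hT he)) h

theorem component_map_eq (f : V → W) (h : component T a = component T b) :
    component (T.map (Sym2.map f)) (f a) = component (T.map (Sym2.map f)) (f b) :=
  apply_eq_of_component_eq (f := fun u => component (T.map (Sym2.map f)) (f u))
    (fun _ _ he => component_eq_of_mem (Multiset.mem_map_of_mem (Sym2.map f) he)) h

theorem apply_eq_of_mem_cons {α : Sort*} {f : V → α} (hab : f a = f b)
    (hf : ∀ c d, s(c, d) ∈ T → f c = f d) :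
    ∀ c d, s(c, d) ∈ s(a, b) ::ₘ T → f c = f d := by
  intro c d hcd
  rcases Multiset.mem_cons.1 hcd with h | h
  · rcases Sym2.eq_iff.1 h with ⟨rfl, rfl⟩ | ⟨rfl, rfl⟩
    exacts [hab, hab.symm]
  · exact hf c d h

theorem component_cons_eq_iff (hab : component T a = component T b) :
    component (s(a, b) ::ₘ T) u = component (s(a, b) ::ₘ T) v ↔ component T u = component T v :=
  ⟨apply_eq_of_component_eq (apply_eq_of_mem_cons hab fun _ _ => component_eq_of_mem),
    component_eq_mono (Multiset.le_cons_self T _)⟩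

/-- No edge at `x`. -/
def IsIsolated (M : EdgeMultiset V) (x : V) : Prop :=
  ∀ e ∈ M, x ∉ e

theorem IsIsolated.mono (hx : IsIsolated M x) (hT : T ≤ M) : IsIsolated T x :=
  fun e he => hx e (Multiset.mem_of_le hT he)

theorem IsIsolated.component_ne (hx : IsIsolated T x) (hy : y ≠ x) :
    component T x ≠ component T y := by
  intro h
  have hconst : ∀ a b, s(a, b) ∈ T → (a = x) = (b = x) := fun a b hab => by
    have := hx _ hab
    simp only [Sym2.mem_iff, not_or] at this
    simp only [Ne.symm this.1, Ne.symm this.2]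
  exact hy ((apply_eq_of_component_eq hconst h).mp rfl)

theorem exists_cons_of_not_isIsolated (h : ¬ IsIsolated M x) :
    ∃ y M', M = s(x, y) ::ₘ M' := by
  simp only [IsIsolated, not_forall, not_not] at h
  obtain ⟨e, he, y, rfl⟩ := h
  exact ⟨y, Multiset.exists_cons_of_mem he⟩

/-- The number of connected components, isolated vertices included. -/
noncomputable def numComponents (T : EdgeMultiset V) : ℕ :=
  Nat.card (Component T)

theorem numComponents_zero : numComponents (0 : EdgeMultiset V) = Nat.card V :=
  Nat.card_congr
    { toFun := Quot.lift id fun a b h => absurd h (Multiset.notMem_zero s(a, b))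
      invFun := component 0
      left_inv := by rintro ⟨v⟩; rfl
      right_inv := fun _ => rfl }

theorem numComponents_cons_of_eq (h : component T a = component T b) :
    numComponents (s(a, b) ::ₘ T) = numComponents T :=
  Nat.card_congr
    { toFun := Quot.lift (component T) (apply_eq_of_mem_cons h fun _ _ => component_eq_of_mem)
      invFun := Quot.lift (component (s(a, b) ::ₘ T)) fun _ _ he =>
        component_eq_of_mem (Multiset.mem_cons_of_mem he)
      left_inv := by rintro ⟨v⟩; rfl
      right_inv := by rintro ⟨v⟩; rfl }

theorem numComponents_cons_of_ne [Finite V] (h : component T a ≠ component T b) :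
    numComponents (s(a, b) ::ₘ T) + 1 = numComponents T := by
  classical
  let shift (c : Component T) : {c // c ≠ component T a} :=
    if hc : c = component T a then ⟨component T b, h.symm⟩ else ⟨c, hc⟩
  have shift_of_ne (c : {c // c ≠ component T a}) : shift c.1 = c := dif_neg c.2
  have shift_end : shift (component T a) = shift (component T b) :=
    (dif_pos rfl).trans (shift_of_ne ⟨_, h.symm⟩).symm
  let e : Component (s(a, b) ::ₘ T) ≃ {c // c ≠ component T a} :=
    { toFun := Quot.lift (fun v => shift (component T v))
        (apply_eq_of_mem_cons shift_end fun _ _ he => by rw [component_eq_of_mem he])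
      invFun := fun c => Quot.lift (component (s(a, b) ::ₘ T))
        (fun _ _ he => component_eq_of_mem (Multiset.mem_cons_of_mem he)) c.1
      left_inv := by
        rintro ⟨v⟩
        change Quot.lift _ _ (shift (component T v)).1 = component (s(a, b) ::ₘ T) v
        by_cases hv : component T v = component T a
        · rw [hv, shift_end, shift_of_ne ⟨_, h.symm⟩]
          exact (component_eq_of_mem (Multiset.mem_cons_self _ _)).symm.trans
            (component_eq_mono (Multiset.le_cons_self T _) hv).symm
        · rw [shift_of_ne ⟨_, hv⟩]
          rfl
      right_inv := by
        rintro ⟨⟨v⟩, hv⟩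
        exact shift_of_ne ⟨_, hv⟩ }
  rw [numComponents, numComponents, Nat.card_congr e, ← Finite.card_option,
    Nat.card_congr (Equiv.optionSubtypeNe _)]

theorem card_le_card_add_numComponents [Finite V] (T : EdgeMultiset V) :
    Nat.card V ≤ T.card + numComponents T := by
  induction T using Multiset.induction_on with
  | empty => simp [numComponents_zero]
  | cons e T ih =>
    induction e with | _ a b
    rw [Multiset.card_cons]
    by_cases h : component T a = component T b
    · rw [numComponents_cons_of_eq h]
      lia
    · have := numComponents_cons_of_ne h
      lia

end Components

section Identify

open scoped Classical in
/-- The map that sends `x` to `w` and fixes every other vertex. -/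
noncomputable def redirect (x w : V) : V → V :=
  Function.update id x w

@[simp]
theorem redirect_self (x w : V) : redirect x w x = w := by
  simp [redirect]

@[simp]
theorem redirect_right (x w : V) : redirect x w w = w := by
  by_cases h : w = x <;> simp [redirect, h]

theorem redirect_of_ne (h : u ≠ x) (w : V) : redirect x w u = u := by
  simp [redirect, h]

theorem redirect_ne (h : x ≠ w) (u : V) : redirect x w u ≠ x := by
  rcases eq_or_ne u x with rfl | hu
  · simpa using h.symm
  · rwa [redirect_of_ne hu]

/-- The vertex `x` is merged into `w` and stays behind as an isolated vertex. In particular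
`identify x w M` is the contraction of the edge `wx` of `s(w, x) ::ₘ M`. -/
noncomputable def identify (x w : V) (M : EdgeMultiset V) : EdgeMultiset V :=
  M.map (Sym2.map (redirect x w))

theorem component_identify_eq (x w : V) (h : component T a = component T b) :
    component (identify x w T) (redirect x w a) = component (identify x w T) (redirect x w b) :=
  component_map_eq (redirect x w) h

theorem identify_cons_contract (x w : V) (M : EdgeMultiset V) :
    identify x w (s(w, x) ::ₘ M) = s(w, w) ::ₘ identify x w M := by
  simp [identify]

theorem identify_cons_left (hy : y ≠ x) :
    identify x w (s(x, y) ::ₘ M) = s(w, y) ::ₘ identify x w M := by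
  simp [identify, redirect_of_ne hy]

theorem IsIsolated.identify_eq (hx : IsIsolated M x) (w : V) : identify x w M = M := by
  refine (Multiset.map_congr rfl fun e he => ?_).trans (Multiset.map_id M)
  exact (Sym2.map_congr fun v hv =>
    redirect_of_ne (ne_of_mem_of_not_mem hv (hx e he)) w).trans (congrFun Sym2.map_id' e)

theorem isIsolated_identify (h : x ≠ w) (M : EdgeMultiset V) : IsIsolated (identify x w M) x := by
  intro e he hx
  obtain ⟨e, -, rfl⟩ := Multiset.mem_map.1 he
  obtain ⟨u, -, hu⟩ := Sym2.mem_map.1 hx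
  exact redirect_ne h u hu

theorem IsIsolated.identify (hu : IsIsolated M u) (huw : u ≠ w) (x : V) :
    IsIsolated (identify x w M) u := by
  intro e he hue
  obtain ⟨e', he', rfl⟩ := Multiset.mem_map.1 he
  obtain ⟨a, ha, rfl⟩ := Sym2.mem_map.1 hue
  have hax : a ≠ x := by
    rintro rfl
    exact huw (redirect_self a w)
  rw [redirect_of_ne hax] at hu
  exact hu e' he' ha

theorem numComponents_identify [Finite V] (h : v ≠ w) (T : EdgeMultiset V) :
    numComponents (identify v w T) = numComponents (s(w, v) ::ₘ T) + 1 := by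
  have hπ (u : V) : component (s(w, v) ::ₘ T) (redirect v w u) = component (s(w, v) ::ₘ T) u := by
    rcases eq_or_ne u v with rfl | hu
    · simpa using component_eq_of_mem (Multiset.mem_cons_self _ _)
    · rw [redirect_of_ne hu]
  classical
  let e : Component (identify v w T) ≃ Option (Component (s(w, v) ::ₘ T)) :=
    { toFun := Quot.lift (fun u => if u = v then none else some (component _ u)) (by
        intro a b hab
        obtain ⟨e, he, hab⟩ := Multiset.mem_map.1 hab
        induction e with | _ p r
        have hpr := component_eq_of_mem (Multiset.mem_cons_of_mem (b := s(w, v)) he)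
        rcases Sym2.eq_iff.1 hab with ⟨rfl, rfl⟩ | ⟨rfl, rfl⟩ <;>
          rw [if_neg (redirect_ne h p), if_neg (redirect_ne h r), hπ, hπ, hpr])
      invFun := fun c => c.elim (component _ v) <| Quot.lift (fun u => component _ (redirect v w u))
        (apply_eq_of_mem_cons (by rw [redirect_self, redirect_right]) fun _ _ he =>
          component_identify_eq v w (component_eq_of_mem he))
      left_inv := by
        rintro ⟨u⟩
        by_cases hu : u = v
        · subst hu
          exact congrArg (Option.elim · _ _) (if_pos rfl)
        · simp only [if_neg hu]
          exact congrArg (component _) (redirect_of_ne hu w)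
      right_inv := by
        rintro (_ | c)
        · exact if_pos rfl
        · obtain ⟨u⟩ := c
          exact (if_neg (redirect_ne h u)).trans (congrArg some (hπ u)) }
  rw [numComponents, Nat.card_congr e, Finite.card_option, numComponents]

theorem IsIsolated.numComponents_subdivide [Finite V] (hx : IsIsolated M x) (hy : y ≠ x)
    (hz : z ≠ x) :
    numComponents (s(x, y) ::ₘ s(x, z) ::ₘ M) + 1 = numComponents (s(y, z) ::ₘ M) := by
  rw [Sym2.eq_swap, ← numComponents_identify hy.symm, identify_cons_left hz, hx.identify_eq]

end Identify

section FlowSum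

variable {R : Type*} [CommRing R] {q : R} {P Q : EdgeMultiset V → Prop}

/-- The signed contribution `(-1)^|T| q^(|T| + c(T))` of an edge set `T` to the flow polynomial. -/
noncomputable def flowTerm (q : R) (T : EdgeMultiset V) : R :=
  (-q) ^ T.card * q ^ numComponents T

theorem flowTerm_cons_of_eq (h : component T a = component T b) :
    flowTerm q (s(a, b) ::ₘ T) = -q * flowTerm q T := by
  rw [flowTerm, flowTerm, numComponents_cons_of_eq h, Multiset.card_cons]
  ring

theorem flowTerm_cons_of_ne [Finite V] (h : component T a ≠ component T b) :
    flowTerm q (s(a, b) ::ₘ T) = -flowTerm q T := by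
  rw [flowTerm, flowTerm, ← numComponents_cons_of_ne h, Multiset.card_cons]
  ring

theorem flowTerm_identify [Finite V] (h : v ≠ w) (T : EdgeMultiset V) :
    flowTerm q (identify v w T) = -flowTerm q (s(w, v) ::ₘ T) := by
  rw [flowTerm, flowTerm, numComponents_identify h, identify, Multiset.card_map,
    Multiset.card_cons]
  ring

open scoped Classical in
/-- The part of the flow polynomial contributed by the edge sets satisfying `P`, multiplied by
`q^|V|` as in `flowSum`. -/
noncomputable def flowSumOn (q : R) (P : EdgeMultiset V → Prop) (M : EdgeMultiset V) : R :=
  (-1) ^ M.card * (M.powerset.map fun T => if P T then flowTerm q T else 0).sum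

/-- The flow polynomial multiplied by `q^|V|`, that is
`∑_{T ⊆ M} (-1)^(|M| - |T|) q^(|T| + c(T))`; unlike the flow polynomial it makes no use of
truncated subtraction. -/
noncomputable def flowSum (q : R) (M : EdgeMultiset V) : R :=
  flowSumOn q (fun _ => True) M

theorem flowSum_eq (q : R) (M : EdgeMultiset V) :
    flowSum q M = (-1) ^ M.card * (M.powerset.map (flowTerm q)).sum := by
  simp only [flowSum, flowSumOn, if_true]

theorem flowSum_zero (q : R) : flowSum q (0 : EdgeMultiset V) = q ^ Nat.card V := by
  simp [flowSum_eq, flowTerm, numComponents_zero]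

theorem flowSumOn_congr (h : ∀ T ≤ M, P T ↔ Q T) : flowSumOn q P M = flowSumOn q Q M := by
  classical
  refine congrArg (_ * Multiset.sum ·) (Multiset.map_congr rfl fun T hT => ?_)
  exact if_congr (h T (Multiset.mem_powerset.1 hT)) rfl rfl

theorem flowSumOn_eq_zero (h : ∀ T ≤ M, ¬ P T) : flowSumOn q P M = 0 := by
  rw [flowSumOn_congr (Q := fun _ => False) fun T hT => iff_false_intro (h T hT)]
  simp [flowSumOn]

/-- The contributions of `T` and `s(u, v) ::ₘ T` cancel unless `T` already joins `u` to `v`. -/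
theorem flowSumOn_cons [Finite V] (hP : ∀ T ≤ M, P (s(u, v) ::ₘ T) ↔ P T)
    (hQ : ∀ T ≤ M, Q T ↔ P T ∧ component T u = component T v) :
    flowSumOn q P (s(u, v) ::ₘ M) = (q - 1) * flowSumOn q Q M := by
  classical
  have hterm : ∀ T ∈ M.powerset,
      ((if P T then flowTerm q T else 0) +
        if P (s(u, v) ::ₘ T) then flowTerm q (s(u, v) ::ₘ T) else 0) =
      (1 - q) * if Q T then flowTerm q T else 0 := by
    intro T hT
    rw [Multiset.mem_powerset] at hT
    rw [if_congr (hP T hT) rfl rfl, if_congr (hQ T hT) rfl rfl]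
    by_cases hPT : P T
    · by_cases huv : component T u = component T v
      · simp only [hPT, huv, and_self, if_true, flowTerm_cons_of_eq huv]
        ring
      · simp [hPT, huv, flowTerm_cons_of_ne huv]
    · simp [hPT]
  rw [flowSumOn, flowSumOn, sum_map_powerset_cons, Multiset.map_congr rfl hterm,
    Multiset.sum_map_mul_left, Multiset.card_cons]
  ring

theorem flowSum_cons [Finite V] (q : R) (u v : V) (M : EdgeMultiset V) :
    flowSum q (s(u, v) ::ₘ M) =
      (q - 1) * flowSumOn q (fun T => component T u = component T v) M :=
  flowSumOn_cons (fun _ _ => Iff.rfl) fun _ _ => (and_iff_right trivial).symm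

theorem flowSum_cons_loop [Finite V] (q : R) (w : V) (M : EdgeMultiset V) :
    flowSum q (s(w, w) ::ₘ M) = (q - 1) * flowSum q M :=
  flowSumOn_cons (fun _ _ => Iff.rfl) fun _ _ => (and_iff_left rfl).symm

theorem flowSum_cons_bridge [Finite V] (h : component M u ≠ component M v) :
    flowSum q (s(u, v) ::ₘ M) = 0 := by
  rw [flowSum_cons, flowSumOn_eq_zero fun T hT hT' => h (component_eq_mono hT hT'), mul_zero]

theorem flowSum_contract_delete [Finite V] (h : v ≠ w) (q : R) (M : EdgeMultiset V) :
    flowSum q (s(w, v) ::ₘ M) = flowSum q (identify v w M) - flowSum q M := by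
  have hcontract : ((identify v w M).powerset.map (flowTerm q)).sum =
      -(M.powerset.map fun T => flowTerm q (s(w, v) ::ₘ T)).sum := by
    rw [identify, powerset_map, Multiset.map_map, ← Multiset.sum_map_neg]
    exact congrArg _ (Multiset.map_congr rfl fun T _ => flowTerm_identify h T)
  rw [flowSum_eq, flowSum_eq, flowSum_eq, sum_map_powerset_cons, Multiset.sum_map_add, hcontract,
    identify, Multiset.card_map, Multiset.card_cons]
  ring

theorem flowSum_identify_of_component_ne [Finite V] (h : component M w ≠ component M v)
    (q : R) :
    flowSum q (identify v w M) = flowSum q M := by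
  have hvw : v ≠ w := by
    rintro rfl
    exact h rfl
  linear_combination flowSum_cons_bridge (q := q) h - flowSum_contract_delete hvw q M

theorem flowSum_subdivide [Finite V] (hx : IsIsolated M x) (hy : y ≠ x) (hz : z ≠ x) (q : R) :
    flowSum q (s(x, y) ::ₘ s(x, z) ::ₘ M) = flowSum q (s(y, z) ::ₘ M) := by
  rw [Sym2.eq_swap (a := x) (b := y), flowSum_contract_delete hy.symm, identify_cons_left hz,
    hx.identify_eq, flowSum_cons_bridge (hx.component_ne hz), sub_zero]

theorem flowSum_cubic [Finite V] (hx : IsIsolated M x) (hxw : x ≠ w) (hy : y ≠ x) (hz : z ≠ x)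
    (q : R) :
    flowSum q (s(w, x) ::ₘ s(x, y) ::ₘ s(x, z) ::ₘ M) =
      flowSum q (s(w, y) ::ₘ s(w, z) ::ₘ M) - flowSum q (s(y, z) ::ₘ M) := by
  rw [flowSum_contract_delete hxw, identify_cons_left hy, identify_cons_left hz, hx.identify_eq,
    flowSum_subdivide hx hy hz]

end FlowSum

section AwayFrom

open scoped Classical in
/-- The edges that avoid `w`; this is `G - w`, with `w` kept as an isolated vertex. -/
noncomputable def awayFrom (w : V) (M : EdgeMultiset V) : EdgeMultiset V :=
  M.filter (w ∉ ·)

theorem awayFrom_cons_left (w y : V) (M : EdgeMultiset V) :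
    awayFrom w (s(w, y) ::ₘ M) = awayFrom w M := by
  simp [awayFrom]

theorem awayFrom_cons_of_ne (hx : x ≠ w) (hy : y ≠ w) (M : EdgeMultiset V) :
    awayFrom w (s(x, y) ::ₘ M) = s(x, y) ::ₘ awayFrom w M := by
  simp [awayFrom, hx.symm, hy.symm]

theorem awayFrom_le (w : V) (M : EdgeMultiset V) : awayFrom w M ≤ M := by
  classical exact Multiset.filter_le _ _

theorem awayFrom_mono (w : V) (hT : T ≤ M) : awayFrom w T ≤ awayFrom w M := by
  classical exact Multiset.filter_le_filter _ hT

theorem mem_awayFrom {e : Sym2 V} : e ∈ awayFrom w M ↔ e ∈ M ∧ w ∉ e := by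
  classical exact Multiset.mem_filter

theorem isIsolated_awayFrom (w : V) (M : EdgeMultiset V) : IsIsolated (awayFrom w M) w :=
  fun _ he => (mem_awayFrom.1 he).2

theorem component_awayFrom_eq (h : component T y = component T z)
    (hw : component T y ≠ component T w) :
    component (awayFrom w T) y = component (awayFrom w T) z := by
  have hpath : ∀ a b, s(a, b) ∈ T → (component (awayFrom w T) a = component (awayFrom w T) y) =
      (component (awayFrom w T) b = component (awayFrom w T) y) := by
    intro a b hab
    by_cases hwab : w ∈ s(a, b)
    · have hne (u : V) (hu : component T u = component T w) :
          component (awayFrom w T) u ≠ component (awayFrom w T) y :=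
        fun huy => hw ((component_eq_mono (awayFrom_le w T) huy).symm.trans hu)
      have hedge := component_eq_of_mem hab
      rcases Sym2.mem_iff.1 hwab with rfl | rfl
      · simp only [hne _ rfl, hne _ hedge.symm]
      · simp only [hne _ rfl, hne _ hedge]
    · rw [component_eq_of_mem (mem_awayFrom.2 ⟨hab, hwab⟩)]
  exact ((apply_eq_of_component_eq hpath h).mp rfl).symm

theorem component_eq_of_separates
    (hsep : component (awayFrom w M) y = component (awayFrom w M) z → y = w) (hT : T ≤ M)
    (h : component T y = component T z) : component T w = component T y := by
  by_contra hw
  have hyw := hsep (component_eq_mono (awayFrom_mono w hT) (component_awayFrom_eq h (Ne.symm hw)))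
  exact hw (congrArg _ hyw.symm)

theorem component_cons_eq_iff_of_separates
    (hsep : component (awayFrom w M) y = component (awayFrom w M) z → y = w) (hT : T ≤ M) :
    component (s(w, z) ::ₘ T) w = component (s(w, z) ::ₘ T) y ↔ component T w = component T y := by
  refine ⟨fun h => ?_, component_eq_mono (Multiset.le_cons_self T _)⟩
  by_contra hwy
  have hzy : component T z ≠ component T y :=
    fun h => hwy (component_eq_of_separates hsep hT h.symm)
  have hconst := apply_eq_of_mem_cons (f := fun u => component T u = component T y)
    (propext (iff_of_false hwy hzy)) fun _ _ he => by rw [component_eq_of_mem he]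
  exact hwy ((apply_eq_of_component_eq hconst h).mpr rfl)

theorem flowSum_two_sum [Finite V] {R : Type*} [CommRing R] (q : R)
    (hsep : component (awayFrom w M) y = component (awayFrom w M) z → y = w) :
    flowSum q (s(w, y) ::ₘ s(w, z) ::ₘ M) = (q - 1) * flowSum q (s(y, z) ::ₘ M) := by
  rw [flowSum_cons, flowSum_cons,
    flowSumOn_cons (fun T hT => component_cons_eq_iff_of_separates hsep hT) fun T hT => ?_]
  exact ⟨fun h => ⟨component_eq_of_separates hsep hT h,
    (component_eq_of_separates hsep hT h).trans h⟩, fun h => h.1.symm.trans h.2⟩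

end AwayFrom

section FlowSign

open scoped Classical in
/-- The sign of the flow polynomial on `(1, 2)`: a factor `-1` for each vertex, for each edge, for
each loop at `w` and for each component of `G - w` (counting the isolated `w` left behind). -/
noncomputable def flowSign (w : V) (M : EdgeMultiset V) : ℝ :=
  (-1) ^ (Nat.card V + M.card + M.count s(w, w) + numComponents (awayFrom w M))

theorem flowSign_zero (w : V) : flowSign w 0 = 1 := by
  simp [flowSign, awayFrom, numComponents_zero, ← two_mul]

theorem flowSign_cons_loop (w : V) (M : EdgeMultiset V) :
    flowSign w (s(w, w) ::ₘ M) = flowSign w M := by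
  classical
  rw [flowSign, flowSign, awayFrom_cons_left, Multiset.card_cons, Multiset.count_cons_self]
  ring

theorem flowSign_cons_left (hy : y ≠ w) (M : EdgeMultiset V) :
    flowSign w (s(w, y) ::ₘ M) = -flowSign w M := by
  classical
  rw [flowSign, flowSign, awayFrom_cons_left, Multiset.card_cons,
    Multiset.count_cons_of_ne (by simpa using hy.symm)]
  ring

theorem flowSign_cons_of_component_eq (hx : x ≠ w) (hy : y ≠ w)
    (h : component (awayFrom w M) x = component (awayFrom w M) y) :
    flowSign w (s(x, y) ::ₘ M) = -flowSign w M := by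
  classical
  rw [flowSign, flowSign, awayFrom_cons_of_ne hx hy, numComponents_cons_of_eq h,
    Multiset.card_cons, Multiset.count_cons_of_ne (by simp [hx.symm])]
  ring

theorem flowSign_cons_of_component_ne [Finite V] (hx : x ≠ w) (hy : y ≠ w)
    (h : component (awayFrom w M) x ≠ component (awayFrom w M) y) :
    flowSign w (s(x, y) ::ₘ M) = flowSign w M := by
  classical
  rw [flowSign, flowSign, awayFrom_cons_of_ne hx hy, ← numComponents_cons_of_ne h,
    Multiset.card_cons, Multiset.count_cons_of_ne (by simp [hx.symm])]
  ring

theorem flowSign_subdivide [Finite V] (hx : IsIsolated M x) (hxw : x ≠ w) (hy : y ≠ x)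
    (hz : z ≠ x) :
    flowSign w (s(x, y) ::ₘ s(x, z) ::ₘ M) = flowSign w (s(y, z) ::ₘ M) := by
  classical
  have hx' : IsIsolated (awayFrom w M) x := hx.mono (awayFrom_le w M)
  rcases eq_or_ne y w with rfl | hyw
  · rw [Sym2.eq_swap, flowSign_cons_left hxw]
    rcases eq_or_ne z y with rfl | hzy
    · rw [Sym2.eq_swap, flowSign_cons_left hxw, flowSign_cons_loop, neg_neg]
    · rw [flowSign_cons_left hzy,
        flowSign_cons_of_component_ne hxw hzy (hx'.component_ne hz)]
  rcases eq_or_ne z w with rfl | hzw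
  · rw [Multiset.cons_swap, Sym2.eq_swap, flowSign_cons_left hxw, Sym2.eq_swap (a := y),
      flowSign_cons_left hyw, flowSign_cons_of_component_ne hxw hyw (hx'.component_ne hy)]
  · rw [flowSign, flowSign, awayFrom_cons_of_ne hxw hyw, awayFrom_cons_of_ne hxw hzw,
      awayFrom_cons_of_ne hyw hzw, ← hx'.numComponents_subdivide hy hz,
      Multiset.count_cons_of_ne (by simp [hxw.symm]),
      Multiset.count_cons_of_ne (by simp [hxw.symm]),
      Multiset.count_cons_of_ne (by simp [hyw.symm])]
    simp only [Multiset.card_cons]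
    ring

theorem flowSign_cubic [Finite V] (hx : IsIsolated M x) (hxw : x ≠ w) (hy : y ≠ x) (hz : z ≠ x) :
    flowSign w (s(w, x) ::ₘ s(x, y) ::ₘ s(x, z) ::ₘ M) = -flowSign w (s(y, z) ::ₘ M) := by
  rw [flowSign_cons_left hxw, flowSign_subdivide hx hxw hy hz]

theorem flowSign_two_sum [Finite V]
    (hsep : component (awayFrom w M) y = component (awayFrom w M) z → y = w) :
    flowSign w (s(w, y) ::ₘ s(w, z) ::ₘ M) = flowSign w (s(y, z) ::ₘ M) := by
  rcases eq_or_ne y w with rfl | hyw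
  · exact flowSign_cons_loop ..
  rcases eq_or_ne z w with rfl | hzw
  · rw [flowSign_cons_left hyw, flowSign_cons_loop, Sym2.eq_swap, flowSign_cons_left hyw]
  · rw [flowSign_cons_left hyw, flowSign_cons_left hzw, neg_neg,
      flowSign_cons_of_component_ne hyw hzw (mt hsep hyw)]

theorem flowSign_not_two_sum (h : component (awayFrom w M) y = component (awayFrom w M) z)
    (hyw : y ≠ w) :
    flowSign w (s(w, y) ::ₘ s(w, z) ::ₘ M) = -flowSign w (s(y, z) ::ₘ M) := by
  have hzw : z ≠ w := by
    rintro rfl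
    exact (isIsolated_awayFrom z M).component_ne hyw h.symm
  rw [flowSign_cons_left hyw, flowSign_cons_left hzw, flowSign_cons_of_component_eq hyw hzw h]

end FlowSign

section SignedFlowSum

/-- The flow polynomial normalised to be positive on `(1, 2)`; see `signedFlowSum_pos`. -/
noncomputable def signedFlowSum (q : ℝ) (w : V) (M : EdgeMultiset V) : ℝ :=
  flowSign w M * flowSum q M

variable [Finite V] {q : ℝ}

theorem signedFlowSum_cons_loop (q : ℝ) (w : V) (M : EdgeMultiset V) :
    signedFlowSum q w (s(w, w) ::ₘ M) = (q - 1) * signedFlowSum q w M := by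
  rw [signedFlowSum, signedFlowSum, flowSign_cons_loop, flowSum_cons_loop]
  ring

theorem signedFlowSum_subdivide (hx : IsIsolated M x) (hxw : x ≠ w) (hy : y ≠ x) (hz : z ≠ x)
    (q : ℝ) :
    signedFlowSum q w (s(x, y) ::ₘ s(x, z) ::ₘ M) = signedFlowSum q w (s(y, z) ::ₘ M) := by
  rw [signedFlowSum, signedFlowSum, flowSign_subdivide hx hxw hy hz, flowSum_subdivide hx hy hz]

theorem signedFlowSum_cubic_pos (hq₁ : 1 < q) (hq₂ : q < 2) (hx : IsIsolated M x) (hxw : x ≠ w)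
    (hy : y ≠ x) (hz : z ≠ x)
    (hcontract : 0 < signedFlowSum q w (s(w, y) ::ₘ s(w, z) ::ₘ M))
    (hsuppress : 0 ≤ signedFlowSum q w (s(y, z) ::ₘ M)) :
    0 < signedFlowSum q w (s(w, x) ::ₘ s(x, y) ::ₘ s(x, z) ::ₘ M) := by
  have hexpand : signedFlowSum q w (s(w, x) ::ₘ s(x, y) ::ₘ s(x, z) ::ₘ M) =
      signedFlowSum q w (s(y, z) ::ₘ M) -
        flowSign w (s(y, z) ::ₘ M) * flowSum q (s(w, y) ::ₘ s(w, z) ::ₘ M) := by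
    rw [signedFlowSum, signedFlowSum, flowSign_cubic hx hxw hy hz, flowSum_cubic hx hxw hy hz]
    ring
  by_cases hsep : component (awayFrom w M) y = component (awayFrom w M) z → y = w
  · have htwo_sum : signedFlowSum q w (s(w, y) ::ₘ s(w, z) ::ₘ M) =
        (q - 1) * signedFlowSum q w (s(y, z) ::ₘ M) := by
      rw [signedFlowSum, signedFlowSum, flowSign_two_sum hsep, flowSum_two_sum q hsep]
      ring
    have hpos : 0 < signedFlowSum q w (s(y, z) ::ₘ M) :=
      pos_of_mul_pos_right (htwo_sum ▸ hcontract) (by linarith)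
    calc 0 < (2 - q) * signedFlowSum q w (s(y, z) ::ₘ M) := mul_pos (by linarith) hpos
      _ = _ := by
        rw [hexpand, flowSum_two_sum q hsep, signedFlowSum]
        ring
  · obtain ⟨hyz, hyw⟩ := Classical.not_imp.1 hsep
    rw [signedFlowSum, flowSign_not_two_sum hyz hyw] at hcontract
    linarith

end SignedFlowSum

section Degree

open scoped Classical in
/-- The degree of a vertex, a loop counting twice. -/
noncomputable def degree (M : EdgeMultiset V) (v : V) : ℕ :=
  (M.bind Sym2.toMultiset).count v

open scoped Classical in
theorem degree_cons (a b v : V) (M : EdgeMultiset V) :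
    degree (s(a, b) ::ₘ M) v = degree M v + (if v = a then 1 else 0) + if v = b then 1 else 0 := by
  change Multiset.count v (Multiset.bind (s(a, b) ::ₘ M) Sym2.toMultiset) = _
  rw [Multiset.cons_bind, Multiset.count_add]
  change Multiset.count v (a ::ₘ b ::ₘ 0) + degree M v = _
  rw [Multiset.count_cons, Multiset.count_cons, Multiset.count_zero]
  ring

theorem degree_eq_zero_iff : degree M v = 0 ↔ IsIsolated M v := by
  simp [degree, IsIsolated]

theorem degree_identify_le (hv : v ≠ w) (x : V) (M : EdgeMultiset V) :
    degree (identify x w M) v ≤ degree M v := by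
  classical
  have hle (u : V) : (if v = redirect x w u then 1 else 0) ≤ if v = u then 1 else 0 := by
    rcases eq_or_ne u x with rfl | hu
    · simp [hv]
    · rw [redirect_of_ne hu]
  induction M using Multiset.induction_on with
  | empty => simp [identify]
  | cons e M ih =>
    induction e with | _ a b
    rw [identify, Multiset.map_cons, Sym2.map_mk, degree_cons, degree_cons]
    exact add_le_add (add_le_add ih (hle a)) (hle b)

end Degree

section Bridgeless

/-- Every edge `ab` lies on a cycle: its ends stay connected when it is removed. -/
def IsBridgeless (M : EdgeMultiset V) : Prop :=
  ∀ a b M', M = s(a, b) ::ₘ M' → component M' a = component M' b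

theorem IsBridgeless.map (hM : IsBridgeless M) (f : V → W) :
    IsBridgeless (M.map (Sym2.map f)) := by
  classical
  intro a b M' h
  obtain ⟨e, he, hab, rfl⟩ := (Multiset.map_eq_cons _ _ _ _).2 h
  induction e with | _ c d
  have hcd := component_map_eq f (hM c d _ (Multiset.cons_erase he).symm)
  rcases Sym2.eq_iff.1 hab with ⟨rfl, rfl⟩ | ⟨rfl, rfl⟩
  exacts [hcd, hcd.symm]

theorem IsBridgeless.of_cons_loop (h : IsBridgeless (s(w, w) ::ₘ M)) : IsBridgeless M := by
  rintro a b M' rfl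
  exact (component_cons_eq_iff rfl).1 (h a b (s(w, w) ::ₘ M') (Multiset.cons_swap ..))

theorem IsBridgeless.exists_neighbors (h : IsBridgeless (s(w, x) ::ₘ M)) (hxw : x ≠ w)
    (hdeg : degree (s(w, x) ::ₘ M) x ≤ 3) :
    ∃ N, IsIsolated N x ∧ ((∃ y ≠ x, M = s(x, y) ::ₘ N) ∨
      ∃ y ≠ x, ∃ z ≠ x, M = s(x, y) ::ₘ s(x, z) ::ₘ N) := by
  classical
  have hwx : component M w = component M x := h w x M rfl
  obtain ⟨y, M₁, rfl⟩ := exists_cons_of_not_isIsolated fun hx : IsIsolated M x =>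
    hx.component_ne hxw.symm hwx.symm
  simp only [degree_cons, if_neg hxw, if_true] at hdeg
  have hyx : y ≠ x := by
    rintro rfl
    have hy : IsIsolated M₁ y := degree_eq_zero_iff.1 (by rw [if_pos rfl] at hdeg; lia)
    exact hy.component_ne hxw.symm ((component_cons_eq_iff rfl).1 hwx.symm)
  by_cases hx : IsIsolated M₁ x
  · exact ⟨M₁, hx, Or.inl ⟨y, hyx, rfl⟩⟩
  obtain ⟨z, N, rfl⟩ := exists_cons_of_not_isIsolated hx
  simp only [degree_cons, if_true] at hdeg
  have hzx : z ≠ x := by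
    rintro rfl
    rw [if_pos rfl] at hdeg
    lia
  exact ⟨N, degree_eq_zero_iff.1 (by lia), Or.inr ⟨y, hyx, z, hzx, rfl⟩⟩

/-- The class of multigraphs the theorem is about: bridgeless, with no vertex of degree larger than
three except possibly `w`. -/
structure IsAlmostSubcubic (w : V) (M : EdgeMultiset V) : Prop where
  isBridgeless : IsBridgeless M
  degree_le : ∀ v ≠ w, degree M v ≤ 3

theorem IsAlmostSubcubic.identify (h : IsAlmostSubcubic w M) (x : V) :
    IsAlmostSubcubic w (identify x w M) where
  isBridgeless := h.isBridgeless.map _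
  degree_le v hv := (degree_identify_le hv x M).trans (h.degree_le v hv)

theorem IsAlmostSubcubic.of_cons_loop (h : IsAlmostSubcubic w (s(w, w) ::ₘ M)) :
    IsAlmostSubcubic w M where
  isBridgeless := h.isBridgeless.of_cons_loop
  degree_le v hv := by
    classical
    simpa [degree_cons, hv] using h.degree_le v hv

/-- All edges lie in the component of `w`. -/
def IsConnectedTo (w : V) (M : EdgeMultiset V) : Prop :=
  ∀ e ∈ M, ∀ v ∈ e, component M v = component M w

theorem IsConnectedTo.of_cons_loop (h : IsConnectedTo w (s(w, w) ::ₘ M)) : IsConnectedTo w M :=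
  fun e he v hv => (component_cons_eq_iff rfl).1 (h e (Multiset.mem_cons_of_mem he) v hv)

theorem IsConnectedTo.eq_zero (h : IsConnectedTo w M) (hw : IsIsolated M w) : M = 0 := by
  refine Multiset.eq_zero_of_forall_notMem fun e he => ?_
  induction e with | _ a b
  refine hw.component_ne (fun haw => ?_) (h _ he a (Sym2.mem_mk_left a b)).symm
  exact hw _ he (haw ▸ Sym2.mem_mk_left a b)

theorem IsConnectedTo.suppress (h : IsConnectedTo w (s(w, x) ::ₘ s(x, y) ::ₘ s(x, z) ::ₘ M))
    (hG : IsBridgeless (s(w, x) ::ₘ s(x, y) ::ₘ s(x, z) ::ₘ M)) (hx : IsIsolated M x)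
    (hxw : x ≠ w) (hy : y ≠ x) (hz : z ≠ x) :
    IsConnectedTo w (s(y, z) ::ₘ M) := by
  have hmap : identify x y (s(x, y) ::ₘ s(x, z) ::ₘ M) = s(y, y) ::ₘ s(y, z) ::ₘ M := by
    rw [identify_cons_left hy, identify_cons_left hz, hx.identify_eq]
  have hwy : component (s(y, z) ::ₘ M) w = component (s(y, z) ::ₘ M) y := by
    have := component_identify_eq x y (hG w x _ rfl)
    rw [hmap, redirect_self, redirect_of_ne hxw.symm] at this
    exact (component_cons_eq_iff rfl).1 this
  have hcontract {u : V} (hu : u ≠ x) {e : Sym2 V}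
      (he : e ∈ s(w, x) ::ₘ s(x, y) ::ₘ s(x, z) ::ₘ M) (hue : u ∈ e) :
      component (s(y, z) ::ₘ M) u = component (s(y, z) ::ₘ M) w := by
    have := component_identify_eq x y (h e he u hue)
    rw [Sym2.eq_swap, identify_cons_left hxw.symm, hmap, redirect_of_ne hu,
      redirect_of_ne hxw.symm] at this
    have hyw : component (s(y, y) ::ₘ s(y, z) ::ₘ M) y = component (s(y, y) ::ₘ s(y, z) ::ₘ M) w :=
      (component_cons_eq_iff rfl).2 hwy.symm
    exact (component_cons_eq_iff rfl).1 ((component_cons_eq_iff hyw).1 this)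
  intro e he u hue
  rcases Multiset.mem_cons.1 he with rfl | he
  · rcases Sym2.mem_iff.1 hue with rfl | rfl
    · exact hwy.symm
    · exact hcontract hz (by simp) (Sym2.mem_mk_right x u)
  · exact hcontract (ne_of_mem_of_not_mem hue (hx e he)) (by simp [he]) hue

theorem IsConnectedTo.identify (h : IsConnectedTo w M) (x : V) :
    IsConnectedTo w (identify x w M) := by
  intro e he v hv
  obtain ⟨e', he', rfl⟩ := Multiset.mem_map.1 he
  obtain ⟨u, hu, rfl⟩ := Sym2.mem_map.1 hv
  exact (component_identify_eq x w (h e' he' u hu)).trans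
    (congrArg (component _) (redirect_right x w))

theorem IsAlmostSubcubic.suppress
    (h : IsAlmostSubcubic w (s(w, x) ::ₘ s(x, y) ::ₘ s(x, z) ::ₘ M))
    (hyz : IsBridgeless (s(y, z) ::ₘ M)) : IsAlmostSubcubic w (s(y, z) ::ₘ M) where
  isBridgeless := hyz
  degree_le v hv := by
    classical
    have := h.degree_le v hv
    simp only [degree_cons] at this ⊢
    lia

end Bridgeless

section Positivity

variable {q : ℝ}

theorem signedFlowSum_zero_pos (hq : 0 < q) (w : V) : 0 < signedFlowSum q w 0 := by
  rw [signedFlowSum, flowSign_zero, flowSum_zero, one_mul]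
  exact pow_pos hq _

variable [Finite V]

theorem flowSum_eq_zero_of_not_isBridgeless (h : ¬ IsBridgeless M) : flowSum q M = 0 := by
  simp only [IsBridgeless, not_forall] at h
  obtain ⟨a, b, M, rfl, hab⟩ := h
  exact flowSum_cons_bridge hab

theorem signedFlowSum_pos_of_adj (hq₁ : 1 < q) (hq₂ : q < 2) (hxw : x ≠ w)
    (h : IsAlmostSubcubic w (s(w, x) ::ₘ M)) (hconn : IsConnectedTo w (s(w, x) ::ₘ M))
    (ih : ∀ M' : EdgeMultiset V, M'.card ≤ M.card → IsAlmostSubcubic w M' → IsConnectedTo w M' →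
      0 < signedFlowSum q w M') :
    0 < signedFlowSum q w (s(w, x) ::ₘ M) := by
  have hcontract : 0 < signedFlowSum q w (identify x w M) := by
    have h' := h.identify x
    have hconn' := hconn.identify x
    rw [identify_cons_contract] at h' hconn'
    exact ih _ (Multiset.card_map _ _).le h'.of_cons_loop hconn'.of_cons_loop
  obtain ⟨N, hx, ⟨y, hy, rfl⟩ | ⟨y, hy, z, hz, rfl⟩⟩ :=
    h.isBridgeless.exists_neighbors hxw (h.degree_le x hxw)
  · rw [identify_cons_left hy, hx.identify_eq] at hcontract
    rwa [Sym2.eq_swap, signedFlowSum_subdivide hx hxw hxw.symm hy]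
  · rw [identify_cons_left hy, identify_cons_left hz, hx.identify_eq] at hcontract
    refine signedFlowSum_cubic_pos hq₁ hq₂ hx hxw hy hz hcontract ?_
    by_cases hyz : IsBridgeless (s(y, z) ::ₘ N)
    · exact (ih _ (by simp) (h.suppress hyz) (hconn.suppress h.isBridgeless hx hxw hy hz)).le
    · rw [signedFlowSum, flowSum_eq_zero_of_not_isBridgeless hyz, mul_zero]

theorem signedFlowSum_pos (hq₁ : 1 < q) (hq₂ : q < 2) (h : IsAlmostSubcubic w M)
    (hconn : IsConnectedTo w M) : 0 < signedFlowSum q w M := by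
  induction hn : M.card using Nat.strong_induction_on generalizing M with
  | _ n ih =>
    subst hn
    by_cases hw : IsIsolated M w
    · rw [hconn.eq_zero hw]
      exact signedFlowSum_zero_pos (by linarith) w
    obtain ⟨x, M, rfl⟩ := exists_cons_of_not_isIsolated hw
    have hlt : M.card < (s(w, x) ::ₘ M).card := Multiset.card_lt_card (Multiset.lt_cons_self _ _)
    rcases eq_or_ne x w with rfl | hxw
    · rw [signedFlowSum_cons_loop]
      exact mul_pos (by linarith) (ih _ hlt h.of_cons_loop hconn.of_cons_loop rfl)
    · exact signedFlowSum_pos_of_adj hq₁ hq₂ hxw h hconn fun M' hM' h' hconn' =>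
        ih _ (hM'.trans_lt hlt) h' hconn' rfl

theorem ncard_not_isIsolated_identify_lt (hv : v ≠ w) (hvM : ¬ IsIsolated M v) :
    {u | u ≠ w ∧ ¬ IsIsolated (identify v w M) u}.ncard < {u | u ≠ w ∧ ¬ IsIsolated M u}.ncard := by
  refine Set.ncard_lt_ncard ((Set.ssubset_iff_of_subset ?_).2 ⟨v, ⟨hv, hvM⟩, ?_⟩)
  · exact fun u ⟨hu, huM⟩ => ⟨hu, fun h => huM (h.identify hu v)⟩
  · exact fun h => h.2 (isIsolated_identify hv M)

theorem flowSum_ne_zero (hq₁ : 1 < q) (hq₂ : q < 2) (h : IsAlmostSubcubic w M) :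
    flowSum q M ≠ 0 := by
  induction hn : {u | u ≠ w ∧ ¬ IsIsolated M u}.ncard using Nat.strong_induction_on
    generalizing M with
  | _ n ih =>
    subst hn
    by_cases hconn : IsConnectedTo w M
    · exact right_ne_zero_of_mul (signedFlowSum_pos hq₁ hq₂ h hconn).ne'
    simp only [IsConnectedTo, not_forall] at hconn
    obtain ⟨e, he, v, hve, hv⟩ := hconn
    rw [← flowSum_identify_of_component_ne (Ne.symm hv)]
    exact ih _ (ncard_not_isIsolated_identify_lt (fun hvw => hv (congrArg _ hvw))
      fun hvM => hvM e he hve) (h.identify v) rfl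

end Positivity

end EdgeMultiset

namespace Multigraph

/-- The spanning subgraph `(V, F)` as a multiset of edges. -/
def edgeMultiset (G : Multigraph V E) (F : Finset E) : EdgeMultiset V :=
  F.val.map fun e => s(G.fst e, G.snd e)

theorem mem_edgeMultiset {G : Multigraph V E} {F : Finset E} {a b : V} :
    s(a, b) ∈ G.edgeMultiset F ↔ G.edgeRelOn F a b := by
  simp [edgeMultiset, edgeRelOn]

theorem ncomp_eq_numComponents (G : Multigraph V E) (F : Finset E) :
    G.ncomp F = (G.edgeMultiset F).numComponents :=
  Nat.card_congr
    { toFun := Quotient.lift (EdgeMultiset.component _) fun _ _ h => by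
        induction h with
        | rel a b h => exact EdgeMultiset.component_eq_of_mem (mem_edgeMultiset.2 h)
        | refl => rfl
        | symm _ _ _ ih => exact ih.symm
        | trans _ _ _ _ _ ih ih' => exact ih.trans ih'
      invFun := Quot.lift (Quotient.mk _) fun a b h =>
        Quotient.sound (Relation.EqvGen.rel a b (mem_edgeMultiset.1 h))
      left_inv := by rintro ⟨v⟩; rfl
      right_inv := by rintro ⟨v⟩; rfl }

theorem edgeMultiset_degree [Fintype E] (G : Multigraph V E) (v : V) :
    (G.edgeMultiset Finset.univ).degree v = G.degree v := by
  classical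
  have hcount (a b : V) : (s(a, b).toMultiset).count v =
      (if a = v then 1 else 0) + if b = v then 1 else 0 := by
    change Multiset.count v (a ::ₘ b ::ₘ 0) = _
    rw [Multiset.count_cons, Multiset.count_cons, Multiset.count_zero, zero_add, add_comm]
    simp only [eq_comm]
  rw [EdgeMultiset.degree, edgeMultiset, Multiset.bind_map, Multiset.count_bind]
  simp only [hcount]
  change ∑ e : E, _ = _
  simp [Finset.sum_add_distrib, degree, Fintype.card_subtype]

theorem Bridgeless.isBridgeless [Finite V] [Fintype E] {G : Multigraph V E} (h : G.Bridgeless) :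
    (G.edgeMultiset Finset.univ).IsBridgeless := by
  classical
  intro a b M hM
  obtain ⟨e, -, -, herase⟩ := (Multiset.map_eq_cons _ _ _ _).2 hM
  have hM' : G.edgeMultiset (Finset.univ.erase e) = M := by
    rw [← herase, edgeMultiset, Finset.erase_val]
  by_contra hab
  refine h e ?_
  have hdelete : ({e' | e' ≠ e} : Set E) = ↑(Finset.univ.erase e) := by ext; simp
  rw [IsBridge, numComponents, ← Finset.coe_univ, hdelete, ncomp_eq_numComponents,
    ncomp_eq_numComponents, hM', hM, ← EdgeMultiset.numComponents_cons_of_ne hab]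
  exact Nat.lt_succ_self _

theorem flowTerm_edgeMultiset [Finite V] [Finite E] (G : Multigraph V E) (F : Finset E) (q : ℝ) :
    (-1) ^ Nat.card E * (G.edgeMultiset F).flowTerm q =
      q ^ Nat.card V * ((-1) ^ (Nat.card E - F.card) * q ^ (F.card + G.ncomp F - Nat.card V)) := by
  have hcard : (G.edgeMultiset F).card = F.card := Multiset.card_map _ _
  have hV := (G.edgeMultiset F).card_le_card_add_numComponents
  rw [hcard, ← ncomp_eq_numComponents] at hV
  have hsign : (-1 : ℝ) ^ Nat.card E = (-1) ^ F.card * (-1) ^ (Nat.card E - F.card) := by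
    have := Fintype.ofFinite E
    rw [← pow_add, Nat.add_sub_of_le (Nat.card_eq_fintype_card (α := E) ▸ F.card_le_univ)]
  have hpow : q ^ F.card * q ^ G.ncomp F =
      q ^ Nat.card V * q ^ (F.card + G.ncomp F - Nat.card V) := by
    rw [← pow_add, ← pow_add, Nat.add_sub_of_le hV]
  have hsq : (-1 : ℝ) ^ F.card * (-1) ^ F.card = 1 := by rw [← mul_pow]; simp
  rw [EdgeMultiset.flowTerm, hcard, ← ncomp_eq_numComponents, hsign, neg_pow q]
  linear_combination (-1) ^ (Nat.card E - F.card) * q ^ F.card * q ^ G.ncomp F * hsq +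
    (-1) ^ (Nat.card E - F.card) * hpow

theorem flowSum_edgeMultiset [Finite V] [Fintype E] (G : Multigraph V E) (q : ℝ) :
    (G.edgeMultiset Finset.univ).flowSum q = q ^ Nat.card V * G.flowPoly.eval q := by
  have hcard : (G.edgeMultiset Finset.univ).card = Nat.card E := by
    rw [edgeMultiset, Multiset.card_map, Finset.card_val, Finset.card_univ,
      Nat.card_eq_fintype_card]
  rw [EdgeMultiset.flowSum_eq, hcard, edgeMultiset, powerset_map, Multiset.map_map,
    ← sum_powerset_val, Finset.powerset_univ, Finset.mul_sum, flowPoly, Polynomial.eval_finsetSum,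
    Finset.mul_sum, Subsingleton.elim (Fintype.ofFinite E)]
  refine Finset.sum_congr rfl fun F _ => ?_
  simp only [Polynomial.eval_mul, Polynomial.eval_pow, Polynomial.eval_neg, Polynomial.eval_one,
    Polynomial.eval_X]
  exact G.flowTerm_edgeMultiset F q

theorem exists_forall_ne_degree_le [Finite V] [Nonempty V] {G : Multigraph V E} {k : ℕ}
    (h : {v | k < G.degree v}.ncard ≤ 1) : ∃ w, ∀ v ≠ w, G.degree v ≤ k := by
  by_cases hw : ∃ w, k < G.degree w
  · obtain ⟨w, hw⟩ := hw
    refine ⟨w, fun v hv => ?_⟩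
    by_contra! hvk
    exact hv ((Set.ncard_le_one (Set.toFinite _)).1 h v hvk w hw)
  · push Not at hw
    exact ⟨Classical.arbitrary V, fun v _ => hw v⟩

end Multigraph

open Multigraph in
/-- Jackson. If `G` is a bridgeless finite multigraph with at most
one vertex of degree larger than `3`, then `G` has no flow root in `(1,2)`. -/
theorem flowPoly_ne_zero_of_at_most_one_big_degree {V E : Type} [Fintype V] [Fintype E]
    (G : Multigraph V E) (hbl : G.Bridgeless)
    (hW : {v | 3 < G.degree v}.ncard ≤ 1) :
    ∀ q : ℝ, 1 < q → q < 2 → G.flowPoly.eval q ≠ 0 := by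
  intro q hq₁ hq₂
  suffices (G.edgeMultiset Finset.univ).flowSum q ≠ 0 from
    right_ne_zero_of_mul (G.flowSum_edgeMultiset q ▸ this)
  rcases isEmpty_or_nonempty V with hV | hV
  · rw [Subsingleton.elim (G.edgeMultiset Finset.univ) 0, EdgeMultiset.flowSum_zero]
    exact pow_ne_zero _ (by linarith)
  · obtain ⟨w, hw⟩ := exists_forall_ne_degree_le hW
    exact EdgeMultiset.flowSum_ne_zero hq₁ hq₂
      { isBridgeless := hbl.isBridgeless
        degree_le := fun v hv => (G.edgeMultiset_degree v).trans_le (hw v hv) }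
end
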